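/- arXiv:math/0609644 — 2 statements merged into one kernel-verified Lean document; each statement's English description precedes it below -/
import Mathlib

section
/- For every k ≥ 1, every permutation τ ∈ S_k, and every n ≥ 2k + 5, the strict inequalities |S_n(213|τ)| < |S_n(123|τ)| < |S_n(312|τ)| hold, where S_n(σ) denotes the set of permutations of length n avoiding the pattern σ. -/
/-!
The three patterns `(σ|τ)` are compared by reducing to transversals of Young diagrams.

Fix `τ`. For a permutation `π`, call a cell good (`InY`) if the dots strictly to its right and
below contain `τ`, and call a dot inner if its cell is good. The good cells depend only on the
dots that are not inner, so moving the inner dots within the good cells defines an equivalence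
relation (`Rel`). The class of `π₀` consists of the transversals of a Young diagram
(`classBoard`), and such a permutation avoids `(σ|τ)` if and only if the transversal avoids `σ`
inside the diagram (`Coords.card_class`). Hence it suffices to show, for every Young diagram,

  `#213-avoiders ≤ #123-avoiders ≤ #312-avoiders`,

and to exhibit one class where both inequalities are strict (`SnCard_lt`).

For the weak inequalities, transversals are built row by row from the bottom (`fillCount`). For
123 the unused columns fall into blocks that must be used from right to left; using a column
shortens its block and merges all later blocks. The resulting count (`blockCount`) is
symmetric in the block sizes, thanks to an exchange identity (`closeSum_good`), and therefore
obeys a simple recursion in two parameters (`rankCount`, `blockCount_nil`). The number of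
132-avoiders is at most, and the number of 321-avoiders at least, the value of that recursion
(`fillCount_132_le`, `le_fillCount_321`). Reflection in the antidiagonal exchanges 132 with 213
and fixes 123, which gives the first inequality (`cnt_213_le_123`). For the second one,
transversals are grouped by their minima, as in the argument of Bóna: a class has at most one
321-avoider and, if nonempty, at least one 312-avoider (`cnt_321_le_312`).

Both inequalities are strict for the `5 × 5` square with one corner cell removed
(`cornerBoard_strict`), and for `n ≥ 2k + 5` this diagram is the board of an explicit permutation
of length `n` (`classBoard_witness`).
-/


open Equiv

/-- `π` is a transversal of the Young diagram with row lengths `b` (zero-indexed: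
the row at height `h` has `b h` cells, i.e. column `i` (1-indexed `i+1`) lies in that row
iff `(i:ℕ)+1 ≤ b h`). -/
def IsTransversal {n : ℕ} (b : Fin n → ℕ) (π : Equiv.Perm (Fin n)) : Prop :=
  ∀ i : Fin n, (i : ℕ) + 1 ≤ b (π i)

/-- The transversal `π` contains the pattern `τ` inside the Young diagram `b`:
there are columns `f 0 < f 1 < …` whose dots are in the relative order prescribed by `τ`
and all rows and columns through these dots intersect inside the diagram. -/
def ContainsIn {n k : ℕ} (b : Fin n → ℕ) (π : Equiv.Perm (Fin n))
    (τ : Equiv.Perm (Fin k)) : Prop :=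
  ∃ f : Fin k → Fin n, StrictMono f ∧
    (∀ s t : Fin k, τ s < τ t ↔ π (f s) < π (f t)) ∧
    (∀ s t : Fin k, (f s : ℕ) + 1 ≤ b (π (f t)))

/-- `|S_Y(τ)|`: the number of transversals of the Young diagram `b` avoiding `τ` in `Y`. -/
noncomputable def SYcard {n k : ℕ} (b : Fin n → ℕ) (τ : Equiv.Perm (Fin k)) : ℕ :=
  Nat.card {π : Equiv.Perm (Fin n) // IsTransversal b π ∧ ¬ ContainsIn b π τ}

/-- Classical pattern containment for permutations. -/
def ContainsPat {n k : ℕ} (π : Equiv.Perm (Fin n)) (τ : Equiv.Perm (Fin k)) : Prop :=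
  ∃ f : Fin k → Fin n, StrictMono f ∧ ∀ s t : Fin k, τ s < τ t ↔ π (f s) < π (f t)

/-- `|S_n(τ)|`: the number of permutations of length `n` avoiding `τ`. -/
noncomputable def SnCard (n : ℕ) {k : ℕ} (τ : Equiv.Perm (Fin k)) : ℕ :=
  Nat.card {π : Equiv.Perm (Fin n) // ¬ ContainsPat π τ}

def p123 : Equiv.Perm (Fin 3) := Equiv.refl _
def p213 : Equiv.Perm (Fin 3) :=
  ⟨![1, 0, 2], ![1, 0, 2], by intro x; fin_cases x <;> rfl, by intro x; fin_cases x <;> rfl⟩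
def p312 : Equiv.Perm (Fin 3) :=
  ⟨![2, 0, 1], ![1, 2, 0], by intro x; fin_cases x <;> rfl, by intro x; fin_cases x <;> rfl⟩
def p321 : Equiv.Perm (Fin 3) :=
  ⟨![2, 1, 0], ![2, 1, 0], by intro x; fin_cases x <;> rfl, by intro x; fin_cases x <;> rfl⟩

/-- `(σ|τ)`: the block sum with the block of `σ` before and entirely above the block of `τ`. -/
def blockSum {m k : ℕ} (σ : Equiv.Perm (Fin m)) (τ : Equiv.Perm (Fin k)) :
    Equiv.Perm (Fin (m + k)) :=
  finSumFinEquiv.symm.trans ((((Equiv.sumCongr σ τ).trans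
    (Equiv.sumComm (Fin m) (Fin k))).trans finSumFinEquiv).trans
    (finCongr (Nat.add_comm k m)))

/-- `|S_{↘Y}(τ)|`: avoiders whose two leftmost entries are decreasing. -/
noncomputable def SYcardLeftDesc {m k : ℕ} (b : Fin m → ℕ) (τ : Equiv.Perm (Fin k)) : ℕ :=
  Nat.card {π : Equiv.Perm (Fin m) // IsTransversal b π ∧ ¬ ContainsIn b π τ ∧
    ∀ i j : Fin m, (i : ℕ) = 0 → (j : ℕ) = 1 → π j < π i}

/-- `|S_{↗Y}(τ)|`: avoiders whose two leftmost entries are increasing. -/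
noncomputable def SYcardLeftAsc {m k : ℕ} (b : Fin m → ℕ) (τ : Equiv.Perm (Fin k)) : ℕ :=
  Nat.card {π : Equiv.Perm (Fin m) // IsTransversal b π ∧ ¬ ContainsIn b π τ ∧
    ∀ i j : Fin m, (i : ℕ) = 0 → (j : ℕ) = 1 → π i < π j}

/-- `|S^{↘}_Y(τ)|`: avoiders in which the value `m` occurs to the left of the value `m-1`. -/
noncomputable def SYcardTopDesc {m k : ℕ} (b : Fin m → ℕ) (τ : Equiv.Perm (Fin k)) : ℕ :=
  Nat.card {π : Equiv.Perm (Fin m) // IsTransversal b π ∧ ¬ ContainsIn b π τ ∧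
    ∀ u v : Fin m, (u : ℕ) + 1 = m → (v : ℕ) + 2 = m → π⁻¹ u < π⁻¹ v}

/-- `|S^{↗}_Y(τ)|`: avoiders in which the value `m-1` occurs to the left of the value `m`. -/
noncomputable def SYcardTopAsc {m k : ℕ} (b : Fin m → ℕ) (τ : Equiv.Perm (Fin k)) : ℕ :=
  Nat.card {π : Equiv.Perm (Fin m) // IsTransversal b π ∧ ¬ ContainsIn b π τ ∧
    ∀ u v : Fin m, (u : ℕ) + 1 = m → (v : ℕ) + 2 = m → π⁻¹ v < π⁻¹ u}


namespace BoardCount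

/-! ### The two counting recursions -/

/-- The state of a partially filled board is recorded by the list `c` of the sizes of its
blocks, from left to right. Filling a row decreases one nonempty block by one and merges all
blocks to its right into a single one; `closeSum f c` sums `f` over all resulting lists. -/
def closeSum : (List ℕ → ℕ) → List ℕ → ℕ
  | _, [] => 0
  | f, c :: cs => (if c = 0 then 0 else f [c - 1, cs.sum]) + closeSum (fun l => f (c :: l)) cs

/-- Counts the ways to process the word `w` from the block sizes `c`: `true` appends a new
block of size one, `false` decreases a block as in `closeSum`. All blocks must end up empty. -/
def blockCount : List Bool → List ℕ → ℕ
  | [], c => if c.sum = 0 then 1 else 0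
  | true :: w, c => blockCount w (c ++ [1])
  | false :: w, c => closeSum (blockCount w) c

/-- The same count expressed through two parameters only, the total size `t` of the blocks and
the number `r` of ways to continue (the nonempty blocks): `true` increases both, and the `i`-th
of the `r` continuations leads to total size `t - 1` and `min (i + 1) (t - 1)` continuations. -/
def rankCount : List Bool → ℕ → ℕ → ℕ
  | [], t, _ => if t = 0 then 1 else 0
  | true :: w, t, r => rankCount w (t + 1) (r + 1)
  | false :: w, t, r => ∑ i ∈ Finset.range r, rankCount w (t - 1) (min (i + 1) (t - 1))

/-- The invariants that make `blockCount w` computable: it is symmetric in the block sizes,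
ignores empty blocks, and satisfies an exchange identity that lets the closing recursion
preserve symmetry. -/
structure Good (f : List ℕ → ℕ) : Prop where
  perm : ∀ l l', l.Perm l' → f l = f l'
  zero : ∀ l, f (0 :: l) = f l
  ident : ∀ x y s l, f (x :: (y + 1 + s) :: l) + f ((x + 1) :: y :: s :: l) =
    f (y :: (x + 1 + s) :: l) + f ((y + 1) :: x :: s :: l)

lemma Good.cons {f : List ℕ → ℕ} (h : Good f) (c : ℕ) : Good (fun l => f (c :: l)) where
  perm l l' hl := h.perm _ _ (hl.cons c)
  zero l := by rw [h.perm _ _ (List.Perm.swap 0 c l), h.zero]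
  ident x y s l := by
    have e2 : ∀ a b : ℕ, f (c :: a :: b :: l) = f (a :: b :: c :: l) := fun a b =>
      h.perm _ _ ((List.Perm.swap a c _).trans ((List.Perm.swap b c _).cons a))
    have e3 : ∀ a b d : ℕ, f (c :: a :: b :: d :: l) = f (a :: b :: d :: c :: l) := fun a b d =>
      h.perm _ _ ((List.Perm.swap a c _).trans (((List.Perm.swap b c _).trans
        ((List.Perm.swap d c _).cons b)).cons a))
    simp only [e2, e3]
    exact h.ident x y s (c :: l)

lemma closeSum_congr {f g : List ℕ → ℕ} (h : ∀ l, f l = g l) (l : List ℕ) :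
    closeSum f l = closeSum g l := by
  rw [funext h]

lemma closeSum_add (f g : List ℕ → ℕ) (l : List ℕ) :
    closeSum f l + closeSum g l = closeSum (fun l => f l + g l) l := by
  induction l generalizing f g with
  | nil => rfl
  | cons c cs ih =>
    simp only [closeSum]
    rw [← ih]
    split_ifs <;> ring

/-- Symmetry of `closeSum f`. Transposing two adjacent blocks amounts exactly to the exchange
identity of `f`. -/
lemma closeSum_perm {l l' : List ℕ} (hl : l.Perm l') :
    ∀ {f : List ℕ → ℕ}, Good f → closeSum f l = closeSum f l' := by
  induction hl with
  | nil => intros; rfl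
  | cons c hl ih =>
    intro f hf
    simp only [closeSum, hl.sum_eq, ih (hf.cons c)]
  | swap c d l =>
    intro f hf
    have e : closeSum (fun m => f (d :: c :: m)) l = closeSum (fun m => f (c :: d :: m)) l :=
      closeSum_congr (fun m => hf.perm _ _ (List.Perm.swap c d m)) l
    simp only [closeSum, e, List.sum_cons]
    have z2 : ∀ a b : ℕ, f [a, 0, b] = f [a, b] := fun a b => by
      rw [hf.perm _ _ (List.Perm.swap 0 a _), hf.zero]
    rcases c with _ | c <;> rcases d with _ | d
    · simp
    · simp [hf.zero]
    · simp [hf.zero]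
    · have := hf.ident d c l.sum []
      simp only [Nat.add_eq_zero_iff, one_ne_zero, and_false, if_false, Nat.add_sub_cancel]
      omega
  | trans _ _ ih1 ih2 => intro f hf; rw [ih1 hf, ih2 hf]

/-- One closing step preserves the three invariants. In the exchange identity the terms
are matched according to which block is closed: one in `l`, the block `s`, or one of the
first two. -/
lemma closeSum_good {f : List ℕ → ℕ} (hf : Good f) : Good (closeSum f) where
  perm l l' hl := closeSum_perm hl hf
  zero l := by
    simp only [closeSum, if_true, zero_add]
    exact closeSum_congr hf.zero l
  ident x y s l := by
    have e1 := closeSum_add (fun m => f (x :: (y + 1 + s) :: m))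
      (fun m => f ((x + 1) :: y :: s :: m)) l
    have e2 := closeSum_add (fun m => f (y :: (x + 1 + s) :: m))
      (fun m => f ((y + 1) :: x :: s :: m)) l
    rw [closeSum_congr (fun m => hf.ident x y s m) l] at e1
    have s3 : ∀ a b d : ℕ, f [a, b, d] = f [b, a, d] := fun a b d =>
      hf.perm _ _ (List.Perm.swap b a _)
    -- closing in the block `s`
    have hs : (if s = 0 then f [x, y, l.sum] else
        f [x, y + s, l.sum] + f [x + 1, y, s - 1, l.sum]) =
        (if s = 0 then f [y, x, l.sum] else
        f [y, x + s, l.sum] + f [y + 1, x, s - 1, l.sum]) := by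
      rcases s with _ | s
      · simpa using s3 x y _
      · have := hf.ident x y s [l.sum]
        simp only [Nat.add_eq_zero_iff, one_ne_zero, and_false, if_false, Nat.add_sub_cancel]
        rw [show y + (s + 1) = y + 1 + s by ring, show x + (s + 1) = x + 1 + s by ring]
        exact this
    -- closing in one of the first two blocks
    have hx : (if x = 0 then 0 else f [x - 1, y + 1 + s + l.sum]) + f [x, y + (s + l.sum)] +
          (if y = 0 then 0 else f [x + 1, y - 1, s + l.sum]) =
        (if y = 0 then 0 else f [y - 1, x + 1 + s + l.sum]) + f [y, x + (s + l.sum)] +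
          (if x = 0 then 0 else f [y + 1, x - 1, s + l.sum]) := by
      generalize l.sum = T
      rcases x with _ | x <;> rcases y with _ | y
      · simp
      · have := hf.ident 0 y (s + T) []
        have z := s3 (y + 1) 0 (s + T)
        simp only [hf.zero] at this z
        simp only [Nat.add_eq_zero_iff, one_ne_zero, and_false, if_false, if_true,
          Nat.add_sub_cancel, hf.zero, zero_add] at *
        rw [show y + 1 + (s + T) = y + 1 + (s + T) by ring, show 1 + s + T = 1 + (s + T) by ring]
        omega
      · have := hf.ident x 0 (s + T) []
        have z := s3 (x + 1) 0 (s + T)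
        simp only [hf.zero] at this z
        simp only [Nat.add_eq_zero_iff, one_ne_zero, and_false, if_false, if_true,
          Nat.add_sub_cancel, hf.zero, zero_add] at *
        rw [show 1 + s + T = 1 + (s + T) by ring]
        omega
      · have h1 := hf.ident x (y + 1) (s + T) []
        have h2 := hf.ident y (x + 1) (s + T) []
        have z := s3 (y + 1) (x + 1) (s + T)
        simp only [Nat.add_eq_zero_iff, one_ne_zero, and_false, if_false, Nat.add_sub_cancel] at *
        rw [show y + 1 + 1 + s + T = y + 1 + 1 + (s + T) by ring,
          show x + 1 + 1 + s + T = x + 1 + 1 + (s + T) by ring]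
        omega
    have z2 : ∀ a b : ℕ, f [a, 0, b] = f [a, b] := fun a b => by
      rw [s3, hf.zero]
    have hy0 : y + 1 + s ≠ 0 := by omega
    have hx0 : x + 1 + s ≠ 0 := by omega
    simp only [closeSum, List.sum_cons, hy0, hx0, if_false, Nat.add_eq_zero_iff, one_ne_zero,
      and_false, Nat.add_sub_cancel, show y + 1 + s - 1 = y + s by omega,
      show x + 1 + s - 1 = x + s by omega]
    simp only [← add_assoc] at *
    split_ifs at * <;> subst_vars <;> (try simp only [add_zero] at *) <;> omega

lemma blockCount_good (w : List Bool) : Good (blockCount w) := by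
  induction w with
  | nil =>
    refine ⟨fun l l' h => ?_, fun l => ?_, fun x y s l => ?_⟩
    · simp [blockCount, h.sum_eq]
    · simp [blockCount]
    · simp [blockCount]
  | cons b w ih =>
    cases b
    · exact closeSum_good ih
    · refine ⟨fun l l' h => ?_, fun l => ?_, fun x y s l => ?_⟩
      · exact ih.perm _ _ (h.append_right _)
      · exact ih.zero _
      · exact ih.ident x y s (l ++ [1])

lemma closeSum_replicate {f : List ℕ → ℕ} (hf : Good f) (m j : ℕ) :
    closeSum f (List.replicate m 1 ++ [j]) =
      ∑ i ∈ Finset.range m, f (List.replicate i 1 ++ [m - 1 - i + j]) +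
        (if j = 0 then 0 else f (List.replicate m 1 ++ [j - 1])) := by
  induction m generalizing f with
  | zero =>
    simp only [closeSum, List.replicate_zero, List.nil_append, Finset.range_zero,
      Finset.sum_empty, List.sum_nil, zero_add, add_zero]
    rw [hf.perm [j - 1, 0] [0, j - 1] (List.Perm.swap _ _ _), hf.zero]
  | succ m ih =>
    rw [List.replicate_succ, List.cons_append, closeSum, ih (hf.cons 1), Finset.sum_range_succ']
    simp [List.replicate_succ, hf.zero]
    have : ∀ i, m - 1 - i = m - (i + 1) := by omega
    simp only [this]
    omega

/-- By symmetry the blocks may always be arranged as singletons followed by one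
block of arbitrary size, and on such lists `blockCount` follows the recursion of `rankCount`. -/
lemma blockCount_replicate (w : List Bool) (m j : ℕ) :
    blockCount w (List.replicate m 1 ++ [j]) = rankCount w (m + j) (m + min j 1) := by
  induction w generalizing m j with
  | nil => simp [blockCount, rankCount]
  | cons b w ih =>
    cases b
    · simp only [blockCount, rankCount]
      rw [closeSum_replicate (blockCount_good w)]
      simp only [ih]
      rcases j with _ | j
      · simp only [if_true, add_zero, Nat.zero_min]
        refine Finset.sum_congr rfl fun i hi => ?_
        have := Finset.mem_range.1 hi
        congr 1 <;> omega
      · simp only [Nat.add_eq_zero_iff, one_ne_zero, and_false, if_false, Nat.add_sub_cancel]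
        rw [show m + min (j + 1) 1 = m + 1 by omega, Finset.sum_range_succ]
        congr 1
        · refine Finset.sum_congr rfl fun i hi => ?_
          have := Finset.mem_range.1 hi
          congr 1 <;> omega
        · congr 1; omega
    · have : blockCount (true :: w) (List.replicate m 1 ++ [j]) =
          blockCount w (List.replicate (m + 1) 1 ++ [j]) := by
        refine (blockCount_good w).perm _ _ ?_
        rw [List.replicate_succ]
        exact (List.perm_append_comm : (_ ++ [1]).Perm ([1] ++ _))
      rw [this, ih, rankCount]
      congr 1 <;> omega

lemma blockCount_nil (w : List Bool) : blockCount w [] = rankCount w 0 0 := by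
  rw [← (blockCount_good w).zero]
  simpa using blockCount_replicate w 0 0

lemma rankCount_mono (w : List Bool) {t r r' : ℕ} (h : r ≤ r') :
    rankCount w t r ≤ rankCount w t r' := by
  induction w generalizing t r r' with
  | nil => simp [rankCount]
  | cons b w ih =>
    cases b
    · exact Finset.sum_le_sum_of_subset (Finset.range_mono h)
    · exact ih (by omega)


/-! ### Filling a board row by row -/

open Classical in
/-- The columns that may be used in a row consisting of the columns `< b`, when the columns in
`A` are still unused and `K x z` forbids using `x` before `z`. -/
noncomputable def closable (A : Finset ℕ) (b : ℕ) (K : ℕ → ℕ → Prop) : Finset ℕ :=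
  A.filter (fun x => x < b ∧ ∀ z ∈ A, z ≠ x → ¬ K x z)

/-- The number of ways to fill rows, from the lowest one, with the columns in `A`, using each
column once. The row with bound `b` consists of the columns `< b`. Choosing `x` in that row
forbids every later pair `y, z` (in this order) with `P x y z` and both columns in the row. -/
noncomputable def fillCount (P : ℕ → ℕ → ℕ → Prop) :
    List ℕ → Finset ℕ → (ℕ → ℕ → Prop) → ℕ
  | [], A, _ => if A = ∅ then 1 else 0
  | b :: bs, A, K => ∑ x ∈ closable A b K,
      fillCount P bs (A.erase x) (fun y z => K y z ∨ (y < b ∧ z < b ∧ P x y z))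

lemma mem_closable {A : Finset ℕ} {b : ℕ} {K : ℕ → ℕ → Prop} {x : ℕ} :
    x ∈ closable A b K ↔ x ∈ A ∧ x < b ∧ ∀ z ∈ A, z ≠ x → ¬ K x z := by
  simp [closable]

/-- The boundary word of the board: `true` for every new column that becomes available, `false`
for every row. Columns below `b₀` are already available, and there are `t` columns. -/
def word (t : ℕ) : ℕ → List ℕ → List Bool
  | b₀, [] => List.replicate (t - b₀) true
  | b₀, b :: bs => List.replicate (b - b₀) true ++ false :: word t b bs

/-- The columns `x, y, z`, listed by increasing row, form the pattern 123. -/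
def P123 (x y z : ℕ) : Prop := x < y ∧ y < z

/-- The columns `x, y, z`, listed by increasing row, form the pattern 321. -/
def P321 (x y z : ℕ) : Prop := z < y ∧ y < x

/-- The columns `x, y, z`, listed by increasing row, form the pattern 213. -/
def P213 (x y z : ℕ) : Prop := y < x ∧ x < z

/-- The columns `x, y, z`, listed by increasing row, are ordered as 132. -/
def P132 (x y z : ℕ) : Prop := x < z ∧ z < y

/-- The dots in columns `x, y, z`, listed by increasing row, form the pattern 312 when read by
columns: the highest dot comes first, then the lowest, then the middle one. The columns
themselves are ordered as 231. -/
def P312 (x y z : ℕ) : Prop := z < x ∧ x < y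

lemma blockCount_open (d : ℕ) (w : List Bool) (c : List ℕ) :
    blockCount (List.replicate d true ++ w) c = blockCount w (c ++ List.replicate d 1) := by
  induction d generalizing c with
  | zero => simp
  | succ d ih =>
    rw [List.replicate_succ, List.cons_append, blockCount, ih]
    simp [List.replicate_succ]

lemma rankCount_open (d : ℕ) (w : List Bool) (t r : ℕ) :
    rankCount (List.replicate d true ++ w) t r = rankCount w (t + d) (r + d) := by
  induction d generalizing t r with
  | zero => simp
  | succ d ih =>
    rw [List.replicate_succ, List.cons_append, rankCount, ih]
    congr 1 <;> omega

/-! ### Fillings avoiding 123 -/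

/-- The state of a 123-avoiding filling: the unused columns below `b` are divided from left to
right into the blocks `L`, and a pair `y < z` is forbidden exactly when `y` and `z` lie in the
same block. -/
structure Inv123 (t b : ℕ) (A : Finset ℕ) (K : ℕ → ℕ → Prop) (L : List (List ℕ)) : Prop where
  mem : ∀ x, x ∈ A ↔ x ∈ L.flatten ∨ (b ≤ x ∧ x < t)
  sorted : L.flatten.Pairwise (· < ·)
  lt : ∀ x ∈ L.flatten, x < b
  rel : ∀ y ∈ A, ∀ z ∈ A, (K y z ↔ y < z ∧ ∃ B ∈ L, y ∈ B ∧ z ∈ B)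

lemma Inv123.open_one {t b : ℕ} {A : Finset ℕ} {K : ℕ → ℕ → Prop} {L : List (List ℕ)}
    (h : Inv123 t b A K L) (hb : b < t) : Inv123 t (b + 1) A K (L ++ [[b]]) where
  mem x := by
    rw [h.mem]
    simp only [List.flatten_append, List.mem_append, List.flatten_singleton, List.mem_singleton]
    constructor
    · rintro (h | h)
      · exact Or.inl (Or.inl h)
      · by_cases hx : x = b
        · exact Or.inl (Or.inr hx)
        · right; omega
    · rintro ((h | h) | h)
      · exact Or.inl h
      · right; omega
      · right; omega
  sorted := by
    simp only [List.flatten_append, List.flatten_singleton]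
    rw [List.pairwise_append]
    refine ⟨h.sorted, by simp, fun x hx y hy => ?_⟩
    rw [List.mem_singleton] at hy
    subst hy
    exact h.lt x hx
  lt x hx := by
    simp only [List.flatten_append, List.mem_append, List.flatten_singleton,
      List.mem_singleton] at hx
    rcases hx with hx | hx
    · have := h.lt x hx; omega
    · omega
  rel y hy z hz := by
    rw [h.rel y hy z hz]
    refine and_congr_right fun hyz => ?_
    constructor
    · rintro ⟨B, hB, h⟩
      exact ⟨B, List.mem_append_left _ hB, h⟩
    · rintro ⟨B, hB, h1, h2⟩
      rcases List.mem_append.1 hB with hB | hB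
      · exact ⟨B, hB, h1, h2⟩
      · rw [List.mem_singleton] at hB
        subst hB
        rw [List.mem_singleton] at h1 h2
        omega

lemma Inv123.open_many {t b d : ℕ} {A : Finset ℕ} {K : ℕ → ℕ → Prop} {L : List (List ℕ)}
    (h : Inv123 t b A K L) (hb : b + d ≤ t) :
    ∃ L', Inv123 t (b + d) A K L' ∧ L'.map List.length = L.map List.length ++ List.replicate d 1 := by
  induction d with
  | zero => exact ⟨L, h, by simp⟩
  | succ d ih =>
    obtain ⟨L', h', e⟩ := ih (by omega)
    exact ⟨_, h'.open_one (by omega), by simp [e, List.replicate_succ']⟩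

/-- Using the last column `x` of a block makes all pairs to its right forbidden, so all later
blocks merge. -/
lemma Inv123.close {t b : ℕ} {A : Finset ℕ} {K : ℕ → ℕ → Prop} {pre post : List (List ℕ)}
    {B : List ℕ} {x : ℕ} (h : Inv123 t b A K (pre ++ (B ++ [x]) :: post)) :
    Inv123 t b (A.erase x) (fun y z => K y z ∨ (y < b ∧ z < b ∧ P123 x y z))
      (pre ++ [B, post.flatten]) := by
  have hm := h.mem
  have hs := h.sorted
  have hl := h.lt
  have hr := h.rel
  simp only [List.flatten_append, List.flatten_cons, List.mem_append, List.mem_singleton,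
    List.pairwise_append] at hm hs hl
  obtain ⟨hs1, ⟨⟨hs2, -, hs3⟩, hs4, hs5⟩, hs6⟩ := hs
  have hxb := hl x (by simp)
  have hpre : ∀ y ∈ pre.flatten, y < x := fun y hy => hs6 y hy x (by simp)
  have hB : ∀ y ∈ B, y < x := fun y hy => hs3 y hy x (by simp)
  have hpost : ∀ y ∈ post.flatten, x < y := fun y hy => hs5 x (by simp) y hy
  constructor
  · intro y
    rw [Finset.mem_erase, hm]
    simp only [List.flatten_append, List.flatten_cons, List.mem_append, List.flatten_nil,
      List.append_nil]
    constructor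
    · rintro ⟨h1, h2⟩; tauto
    · rintro ((h | h | h) | h)
      · exact ⟨(hpre y h).ne, by tauto⟩
      · exact ⟨(hB y h).ne, by tauto⟩
      · exact ⟨(hpost y h).ne', by tauto⟩
      · exact ⟨by omega, by tauto⟩
  · simp only [List.flatten_append, List.flatten_cons, List.flatten_nil, List.append_nil,
      List.pairwise_append, List.mem_append]
    refine ⟨hs1, ⟨hs2, hs4, fun a ha c hc => (hB a ha).trans (hpost c hc)⟩, ?_⟩
    rintro a ha c (hc | hc)
    · exact hs6 a ha c (by tauto)
    · exact hs6 a ha c (by tauto)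
  · intro y hy
    simp only [List.flatten_append, List.flatten_cons, List.mem_append, List.flatten_nil,
      List.append_nil] at hy
    exact hl y (by tauto)
  · intro y hy z hz
    rw [Finset.mem_erase] at hy hz
    rw [hr y hy.2 z hz.2]
    simp only [P123, List.mem_append, List.mem_cons, List.not_mem_nil, or_false]
    constructor
    · rintro (⟨hyz, C, hC | rfl | hC, h1, h2⟩ | ⟨h1, h2, h3, h4⟩)
      · exact ⟨hyz, C, Or.inl hC, h1, h2⟩
      · simp only [List.mem_append, List.mem_singleton] at h1 h2
        exact ⟨hyz, B, Or.inr (Or.inl rfl), by tauto, by tauto⟩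
      · exact ⟨hyz, _, Or.inr (Or.inr rfl), List.mem_flatten_of_mem hC h1,
          List.mem_flatten_of_mem hC h2⟩
      · refine ⟨h4, _, Or.inr (Or.inr rfl), ?_, ?_⟩
        · rcases (hm y).1 hy.2 with (h | (h | h) | h) | h
          · have := hpre y h; omega
          · have := hB y h; omega
          · omega
          · exact h
          · omega
        · rcases (hm z).1 hz.2 with (h | (h | h) | h) | h
          · have := hpre z h; omega
          · have := hB z h; omega
          · omega
          · exact h
          · omega
    · rintro ⟨hyz, C, hC | rfl | rfl, h1, h2⟩
      · exact Or.inl ⟨hyz, C, Or.inl hC, h1, h2⟩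
      · exact Or.inl ⟨hyz, C ++ [x], Or.inr (Or.inl rfl), by simp [h1], by simp [h2]⟩
      · exact Or.inr ⟨hl y (by tauto), hl z (by tauto), hpost y h1, hyz⟩

/-- A sum over the last elements of the blocks is a `closeSum` over the block sizes. -/
lemma sum_lasts (L : List (List ℕ)) (g : ℕ → ℕ) (f : List ℕ → ℕ)
    (h : ∀ pre B x post, L = pre ++ (B ++ [x]) :: post →
      g x = f (pre.map List.length ++ [B.length, post.flatten.length])) :
    ((L.filterMap List.getLast?).map g).sum = closeSum f (L.map List.length) := by
  induction L generalizing f with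
  | nil => rfl
  | cons C L ih =>
    have ih' := ih (fun l => f (C.length :: l)) (fun pre B x post e => by
      have := h (C :: pre) B x post (by rw [e]; rfl)
      simpa using this)
    rw [List.map_cons, closeSum, ← ih']
    rcases List.eq_nil_or_concat C with rfl | ⟨B, x, rfl⟩
    · simp [List.filterMap_cons]
    · have := h [] B x L (by simp)
      simp [this, List.length_flatten]

lemma lasts_sublist (L : List (List ℕ)) : (L.filterMap List.getLast?).Sublist L.flatten := by
  induction L with
  | nil => simp
  | cons C L ih =>
    rcases List.eq_nil_or_concat C with rfl | ⟨B, x, rfl⟩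
    · simpa [List.filterMap_cons] using ih
    · simp only [List.concat_eq_append, List.filterMap_cons, List.getLast?_concat,
        List.flatten_cons, List.append_assoc]
      exact List.Sublist.trans (List.Sublist.cons_cons x ih) (List.sublist_append_right _ _)

lemma mem_lasts (L : List (List ℕ)) (x : ℕ) : x ∈ L.filterMap List.getLast? ↔
    ∃ pre B post, L = pre ++ (B ++ [x]) :: post := by
  rw [List.mem_filterMap]
  constructor
  · rintro ⟨C, hC, h⟩
    obtain ⟨pre, post, rfl⟩ := List.append_of_mem hC
    obtain ⟨B, rfl⟩ := List.getLast?_eq_some_iff.1 h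
    exact ⟨pre, B, post, rfl⟩
  · rintro ⟨pre, B, post, rfl⟩
    exact ⟨B ++ [x], by simp, by simp⟩

/-- Within a block the columns have to be used from right to left. -/
lemma Inv123.closable_eq {t b : ℕ} {A : Finset ℕ} {K : ℕ → ℕ → Prop} {L : List (List ℕ)}
    (h : Inv123 t b A K L) : closable A b K = (L.filterMap List.getLast?).toFinset := by
  ext x
  rw [mem_closable, List.mem_toFinset, mem_lasts]
  constructor
  · rintro ⟨hxA, hxb, hz⟩
    have hx : x ∈ L.flatten := by
      rcases (h.mem x).1 hxA with h | h
      · exact h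
      · omega
    obtain ⟨C, hC, hxC⟩ := List.mem_flatten.1 hx
    obtain ⟨B, D, rfl⟩ := List.append_of_mem hxC
    obtain ⟨pre, post, rfl⟩ := List.append_of_mem hC
    rcases D with _ | ⟨z, D⟩
    · exact ⟨pre, B, post, rfl⟩
    · exfalso
      have hs := h.sorted
      simp only [List.flatten_append, List.flatten_cons, List.pairwise_append,
        List.pairwise_cons] at hs
      have hxz : x < z := hs.2.1.1.2.1.1 z (by simp)
      have hzA : z ∈ A := (h.mem z).2 (Or.inl (List.mem_flatten_of_mem hC (by simp)))
      exact hz z hzA hxz.ne' ((h.rel x hxA z hzA).2 ⟨hxz, _, hC, by simp, by simp⟩)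
  · rintro ⟨pre, B, post, rfl⟩
    have hx : x ∈ (pre ++ (B ++ [x]) :: post).flatten := by simp
    have hxA : x ∈ A := (h.mem x).2 (Or.inl hx)
    refine ⟨hxA, h.lt x hx, fun z hz hzx hK => ?_⟩
    obtain ⟨hlt, C, hC, h1, h2⟩ := (h.rel x hxA z hz).1 hK
    have hs := h.sorted
    simp only [List.flatten_append, List.flatten_cons, List.pairwise_append, List.mem_append,
      List.mem_singleton] at hs
    obtain ⟨hs1, ⟨⟨hs2, -, hs3⟩, hs4, hs5⟩, hs6⟩ := hs
    rcases List.mem_append.1 hC with hC | hC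
    · exact lt_irrefl x (hs6 x (List.mem_flatten_of_mem hC h1) x (by simp))
    · rcases List.mem_cons.1 hC with rfl | hC
      · rcases List.mem_append.1 h2 with h2 | h2
        · have := hs3 z h2 x rfl; omega
        · rw [List.mem_singleton] at h2; omega
      · exact lt_irrefl x (hs5 x (by simp) x (List.mem_flatten_of_mem hC h1))

lemma fillCount_123 (t : ℕ) (bs : List ℕ) (b₀ : ℕ) (hb : (b₀ :: bs).Pairwise (· ≤ ·))
    (ht : ∀ b ∈ b₀ :: bs, b ≤ t) (A : Finset ℕ) (K : ℕ → ℕ → Prop) (L : List (List ℕ))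
    (h : Inv123 t b₀ A K L) :
    fillCount P123 bs A K = blockCount (word t b₀ bs) (L.map List.length) := by
  induction bs generalizing b₀ A K L with
  | nil =>
    have hb0 := ht b₀ (by simp)
    rw [fillCount, word, ← List.append_nil (List.replicate _ _), blockCount_open, blockCount]
    congr 1
    simp only [List.sum_append, ← List.length_flatten, List.sum_replicate, smul_eq_mul, mul_one,
      Nat.add_eq_zero_iff, List.length_eq_zero_iff, Finset.eq_empty_iff_forall_notMem, h.mem,
      List.eq_nil_iff_forall_not_mem, eq_iff_iff]
    constructor
    · intro H
      refine ⟨fun x hx => H x (Or.inl hx), ?_⟩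
      have := H b₀
      omega
    · rintro ⟨h1, h2⟩ x (hx | hx)
      · exact h1 x hx
      · omega
  | cons b bs ih =>
    rw [List.pairwise_cons] at hb
    have hbb : b₀ ≤ b := hb.1 b (by simp)
    obtain ⟨L', h', e⟩ := h.open_many (d := b - b₀) (by have := ht b (by simp); omega)
    rw [Nat.add_sub_cancel' hbb] at h'
    rw [word, blockCount_open, ← e, fillCount, blockCount, h'.closable_eq,
      ← sum_lasts L' (fun x => fillCount P123 bs (A.erase x)
        (fun y z => K y z ∨ (y < b ∧ z < b ∧ P123 x y z)))]
    · rw [List.sum_toFinset]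
      exact (h'.sorted.imp (fun h => h.ne)).sublist (lasts_sublist L')
    · rintro pre B x post rfl
      rw [ih b hb.2 (fun c hc => ht c (by simp at hc ⊢; tauto)) _ _ _ h'.close]
      simp

/-! ### Fillings avoiding 132 or 321 -/

/-- Summing over the elements of `S` by rank. -/
lemma sum_rank_lt (S : Finset ℕ) (g : ℕ → ℕ) :
    ∑ x ∈ S, g (S.filter (· < x)).card = ∑ i ∈ Finset.range S.card, g i := by
  induction S using Finset.induction_on_max with
  | empty => simp
  | insert a S ha ih =>
    have haS : a ∉ S := fun h => lt_irrefl a (ha a h)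
    rw [Finset.sum_insert haS, Finset.card_insert_of_notMem haS, Finset.sum_range_succ, ← ih,
      add_comm]
    congr 1
    · refine Finset.sum_congr rfl fun x hx => ?_
      rw [Finset.filter_insert, if_neg (by have := ha x hx; omega)]
    · rw [Finset.filter_insert, if_neg (lt_irrefl a), Finset.filter_true_of_mem ha]

lemma sum_rank_gt (S : Finset ℕ) (g : ℕ → ℕ) :
    ∑ x ∈ S, g (S.filter (x < ·)).card = ∑ i ∈ Finset.range S.card, g i := by
  induction S using Finset.induction_on_min with
  | empty => simp
  | insert a S ha ih =>
    have haS : a ∉ S := fun h => lt_irrefl a (ha a h)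
    rw [Finset.sum_insert haS, Finset.card_insert_of_notMem haS, Finset.sum_range_succ, ← ih,
      add_comm]
    congr 1
    · refine Finset.sum_congr rfl fun x hx => ?_
      rw [Finset.filter_insert, if_neg (by have := ha x hx; omega)]
    · rw [Finset.filter_insert, if_neg (lt_irrefl a), Finset.filter_true_of_mem ha]

lemma card_filter_lt_add {t b d : ℕ} {A : Finset ℕ} (h : ∀ x, b ≤ x → (x ∈ A ↔ x < t))
    (hb : b + d ≤ t) :
    (A.filter (· < b + d)).card = (A.filter (· < b)).card + d := by
  have : A.filter (· < b + d) = A.filter (· < b) ∪ Finset.Ico b (b + d) := by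
    ext x
    simp only [Finset.mem_filter, Finset.mem_union, Finset.mem_Ico]
    by_cases hx : b ≤ x
    · rw [h x hx]; omega
    · constructor
      · rintro ⟨h1, h2⟩; exact Or.inl ⟨h1, by omega⟩
      · rintro (h | h)
        · exact ⟨h.1, by omega⟩
        · omega
  rw [this, Finset.card_union_of_disjoint, Nat.card_Ico]
  · omega
  · rw [Finset.disjoint_left]
    intro x hx
    simp only [Finset.mem_filter, Finset.mem_Ico] at *
    omega

lemma card_filter_erase {b x : ℕ} {A : Finset ℕ} (hx : x ∈ A) (hb : x < b) :
    ((A.erase x).filter (· < b)).card = (A.filter (· < b)).card - 1 := by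
  rw [Finset.filter_erase, Finset.card_erase_of_mem (by simp [hx, hb])]

/-- After using the `i`-th closable column from the left (counting from zero), the closable
columns are among the `i` columns to its left and the leftmost column to its right. Hence
`rankCount` is an upper bound. -/
lemma fillCount_132_le (t : ℕ) (bs : List ℕ) (b₀ r : ℕ) (hb : (b₀ :: bs).Pairwise (· ≤ ·))
    (ht : ∀ b ∈ b₀ :: bs, b ≤ t) (A : Finset ℕ) (K : ℕ → ℕ → Prop)
    (hA : ∀ x, b₀ ≤ x → (x ∈ A ↔ x < t)) (hK : ∀ y z, K y z → z < y)
    (hr : (closable A b₀ K).card ≤ r) :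
    fillCount P132 bs A K ≤ rankCount (word t b₀ bs) (A.filter (· < b₀)).card r := by
  induction bs generalizing b₀ A K r with
  | nil =>
    have hb0 := ht b₀ (by simp)
    rw [fillCount, word, ← List.append_nil (List.replicate _ _), rankCount_open, rankCount,
      ← card_filter_lt_add hA (by omega)]
    split_ifs with h1 h2
    · exact le_rfl
    · simp [h1] at h2
    · exact zero_le_one
    · exact le_rfl
  | cons b bs ih =>
    rw [List.pairwise_cons] at hb
    have hbb : b₀ ≤ b := hb.1 b (by simp)
    have hbt : b ≤ t := ht b (by simp)
    have hcl : (closable A b K).card ≤ r + (b - b₀) := by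
      have : closable A b K ⊆ closable A b₀ K ∪ Finset.Ico b₀ b := by
        intro x hx
        rw [mem_closable] at hx
        by_cases hxb : x < b₀
        · exact Finset.mem_union_left _ (mem_closable.2 ⟨hx.1, hxb, hx.2.2⟩)
        · exact Finset.mem_union_right _ (Finset.mem_Ico.2 ⟨by omega, hx.2.1⟩)
      refine (Finset.card_le_card this).trans ((Finset.card_union_le _ _).trans ?_)
      rw [Nat.card_Ico]
      omega
    have hA' : ∀ x, b ≤ x → (x ∈ A ↔ x < t) := fun x hx => hA x (hbb.trans hx)
    rw [word, rankCount_open, ← card_filter_lt_add hA (by omega), Nat.add_sub_cancel' hbb,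
      fillCount, rankCount]
    refine le_trans ?_ (Finset.sum_le_sum_of_subset (Finset.range_mono hcl))
    rw [← sum_rank_lt (closable A b K)
      (fun i => rankCount (word t b bs) ((A.filter (· < b)).card - 1)
        (min (i + 1) ((A.filter (· < b)).card - 1)))]
    refine Finset.sum_le_sum fun x hx => ?_
    have hx' := mem_closable.1 hx
    rw [← card_filter_erase hx'.1 hx'.2.1]
    refine ih b _ hb.2 (fun c hc => ht c (by simp at hc ⊢; tauto)) _ _ ?_ ?_ ?_
    · intro y hy
      rw [Finset.mem_erase, hA' y hy]
      omega
    · rintro y z (h | h)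
      · exact hK y z h
      · exact h.2.2.2
    · refine le_min ?_ (Finset.card_le_card fun y hy => ?_)
      · -- among the columns right of `x` only the leftmost one can remain closable
        set C := closable (A.erase x) b
          (fun y z => K y z ∨ (y < b ∧ z < b ∧ P132 x y z)) with hC
        have h1 : C.filter (· < x) ⊆ (closable A b K).filter (· < x) := by
          intro y hy
          rw [Finset.mem_filter, hC, mem_closable, Finset.mem_erase] at hy
          obtain ⟨⟨⟨hyx, hyA⟩, hyb, hyz⟩, hlt⟩ := hy
          refine Finset.mem_filter.2 ⟨mem_closable.2 ⟨hyA, hyb, fun z hz hzy hKz => ?_⟩, hlt⟩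
          by_cases hzx : z = x
          · have := hK y z hKz; omega
          · exact hyz z (Finset.mem_erase.2 ⟨hzx, hz⟩) hzy (Or.inl hKz)
        have h2 : (C.filter (¬ · < x)).card ≤ 1 := by
          rw [Finset.card_le_one]
          have key : ∀ y ∈ C.filter (¬ · < x), ∀ z ∈ C.filter (¬ · < x), ¬ z < y := by
            intro y hy z hz hlt
            rw [Finset.mem_filter, hC, mem_closable, Finset.mem_erase] at hy hz
            exact hy.1.2.2 z (Finset.mem_erase.2 hz.1.1) hlt.ne
              (Or.inr ⟨hy.1.2.1, hz.1.2.1, by have := hz.1.1.1; omega, hlt⟩)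
          intro y hy z hz
          have := key y hy z hz
          have := key z hz y hy
          omega
        have h3 := Finset.card_filter_add_card_filter_not (s := C) (· < x)
        have h4 := Finset.card_le_card h1
        omega
      · rw [mem_closable] at hy
        exact Finset.mem_filter.2 ⟨hy.1, hy.2.1⟩

/-- For 321 the forbidden pairs are those to the left of `q`, which stands for the rightmost
column used so far. If `i` closable columns lie to the right of the one being used, then
afterwards at least `i + 1` columns are closable, or else all available ones. Hence
`rankCount` is a lower bound. -/
lemma le_fillCount_321 (t : ℕ) (bs : List ℕ) (b₀ r q : ℕ) (hb : (b₀ :: bs).Pairwise (· ≤ ·))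
    (ht : ∀ b ∈ b₀ :: bs, b ≤ t) (A : Finset ℕ) (K : ℕ → ℕ → Prop)
    (hA : ∀ x, b₀ ≤ x → (x ∈ A ↔ x < t)) (hq : q ≤ b₀)
    (hK : ∀ y ∈ A, ∀ z ∈ A, (K y z ↔ z < y ∧ y < q))
    (hr : r ≤ (closable A b₀ K).card) :
    rankCount (word t b₀ bs) (A.filter (· < b₀)).card r ≤ fillCount P321 bs A K := by
  induction bs generalizing b₀ A K r q with
  | nil =>
    have hb0 := ht b₀ (by simp)
    rw [fillCount, word, ← List.append_nil (List.replicate _ _), rankCount_open, rankCount,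
      ← card_filter_lt_add hA (by omega)]
    split_ifs with h1 h2 h2
    · exact le_rfl
    · exfalso
      obtain ⟨x, hx⟩ := Finset.nonempty_iff_ne_empty.2 h2
      rw [Finset.card_eq_zero, Finset.filter_eq_empty_iff] at h1
      have := h1 hx
      have := (hA x (by omega)).1 hx
      omega
    · exact zero_le_one
    · exact le_rfl
  | cons b bs ih =>
    rw [List.pairwise_cons] at hb
    have hbb : b₀ ≤ b := hb.1 b (by simp)
    have hbt : b ≤ t := ht b (by simp)
    have hcl : r + (b - b₀) ≤ (closable A b K).card := by
      have : closable A b₀ K ∪ Finset.Ico b₀ b ⊆ closable A b K := by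
        intro x hx
        rcases Finset.mem_union.1 hx with hx | hx
        · rw [mem_closable] at hx
          exact mem_closable.2 ⟨hx.1, by omega, hx.2.2⟩
        · rw [Finset.mem_Ico] at hx
          have hxA := (hA x hx.1).2 (by omega)
          refine mem_closable.2 ⟨hxA, hx.2, fun z hz hzx h => ?_⟩
          rw [hK x hxA z hz] at h
          omega
      refine le_trans ?_ (Finset.card_le_card this)
      rw [Finset.card_union_of_disjoint, Nat.card_Ico]
      · omega
      · rw [Finset.disjoint_left]
        intro x hx
        rw [mem_closable] at hx
        rw [Finset.mem_Ico]
        omega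
    have hA' : ∀ x, b ≤ x → (x ∈ A ↔ x < t) := fun x hx => hA x (hbb.trans hx)
    rw [word, rankCount_open, ← card_filter_lt_add hA (by omega), Nat.add_sub_cancel' hbb,
      fillCount, rankCount]
    refine le_trans (Finset.sum_le_sum_of_subset (Finset.range_mono hcl)) ?_
    rw [← sum_rank_gt (closable A b K)
      (fun i => rankCount (word t b bs) ((A.filter (· < b)).card - 1)
        (min (i + 1) ((A.filter (· < b)).card - 1)))]
    refine Finset.sum_le_sum fun x hx => ?_
    have hx' := mem_closable.1 hx
    rw [← card_filter_erase hx'.1 hx'.2.1]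
    refine ih b _ (max q x) hb.2 (fun c hc => ht c (by simp at hc ⊢; tauto)) _ _ ?_ ?_ ?_ ?_
    · intro y hy
      rw [Finset.mem_erase, hA' y hy]
      omega
    · have := hx'.2.1; omega
    · intro y hy z hz
      rw [Finset.mem_erase] at hy hz
      rw [hK y hy.2 z hz.2]
      have := hx'.2.1
      simp only [P321]
      omega
    · set C := closable (A.erase x) b
          (fun y z => K y z ∨ (y < b ∧ z < b ∧ P321 x y z)) with hC
      set D := (closable A b K).filter (x < ·) with hD
      have hDq : ∀ y ∈ A, x < y → (∀ z ∈ A, z ≠ y → ¬ K y z) → q ≤ y := by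
        intro y hyA hxy h
        by_contra hlt
        exact h x hx'.1 hxy.ne ((hK y hyA x hx'.1).2 ⟨hxy, by omega⟩)
      have hDC : D ⊆ C := by
        intro y hy
        rw [hD, Finset.mem_filter, mem_closable] at hy
        obtain ⟨⟨hyA, hyb, hyz⟩, hxy⟩ := hy
        refine mem_closable.2 ⟨Finset.mem_erase.2 ⟨hxy.ne', hyA⟩, hyb, fun z hz hzy h => ?_⟩
        rcases h with h | h
        · exact hyz z (Finset.mem_of_mem_erase hz) hzy h
        · have := h.2.2.2; omega
      set E := (A.erase x).filter (· < b) with hE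
      rcases E.eq_empty_or_nonempty with hE0 | hE0
      · simp [hE0]
      -- the leftmost remaining column is always closable
      obtain ⟨m, hmE, hmin⟩ := E.exists_min_image id hE0
      have hmE' := hmE
      rw [hE, Finset.mem_filter, Finset.mem_erase] at hmE'
      have hmC : m ∈ C := by
        refine mem_closable.2 ⟨Finset.mem_erase.2 hmE'.1, hmE'.2, fun z hz hzm h => ?_⟩
        have hzlt : z < m := by
          rcases h with h | h
          · exact ((hK m hmE'.1.2 z (Finset.mem_of_mem_erase hz)).1 h).1
          · exact h.2.2.1
        have := hmin z (Finset.mem_filter.2 ⟨hz, by omega⟩)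
        simp only [id] at this
        omega
      by_cases hmD : m ∈ D
      · -- then `x` was the leftmost column and every remaining column is closable
        have hED : E ⊆ C := by
          intro y hy
          have hmy := hmin y hy
          simp only [id] at hmy
          rw [hE, Finset.mem_filter, Finset.mem_erase] at hy
          rw [hD, Finset.mem_filter, mem_closable] at hmD
          have hqm := hDq m hmE'.1.2 hmD.2 hmD.1.2.2
          refine mem_closable.2 ⟨Finset.mem_erase.2 hy.1, hy.2, fun z hz hzy h => ?_⟩
          rcases h with h | h
          · have := ((hK y hy.1.2 z (Finset.mem_of_mem_erase hz)).1 h).2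
            omega
          · have := h.2.2.2; omega
        exact (min_le_right _ _).trans (Finset.card_le_card hED)
      · refine (min_le_left _ _).trans ?_
        rw [← Finset.card_insert_of_notMem hmD]
        exact Finset.card_le_card (Finset.insert_subset hmC hDC)


/-! ### Transversals of a board -/

/-- `p` assigns to the `i`-th row a column `p i < b i` such that the columns of `A` are used once
each, no pair forbidden by `K` occurs, and no triple of rows forms the pattern `P` in the
board. These are the objects counted by `fillCount`. -/
def IsFilling (P : ℕ → ℕ → ℕ → Prop) {m : ℕ} (b : Fin m → ℕ) (A : Finset ℕ)
    (K : ℕ → ℕ → Prop) (p : Fin m → ℕ) : Prop :=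
  Function.Injective p ∧ (∀ x, x ∈ A ↔ ∃ i, p i = x) ∧ (∀ i, p i < b i) ∧
    (∀ i j, i < j → ¬ K (p i) (p j)) ∧
    ∀ i j l, i < j → j < l → p j < b i → p l < b i → ¬ P (p i) (p j) (p l)

lemma isFilling_cons (P : ℕ → ℕ → ℕ → Prop) {m : ℕ} (b : Fin (m + 1) → ℕ) (A : Finset ℕ)
    (K : ℕ → ℕ → Prop) (x : ℕ) (p : Fin m → ℕ) :
    IsFilling P b A K (Fin.cons x p : Fin (m + 1) → ℕ) ↔ x ∈ closable A (b 0) K ∧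
      IsFilling P (fun i => b i.succ) (A.erase x)
        (fun y z => K y z ∨ (y < b 0 ∧ z < b 0 ∧ P x y z)) p := by
  rw [mem_closable]
  constructor
  · rintro ⟨h1, h2, h3, h4, h5⟩
    have hx : x ∈ A := (h2 x).2 ⟨0, rfl⟩
    have hinj : ∀ i, p i ≠ x := fun i h => by
      have := @h1 i.succ 0 (by simpa using h)
      exact Fin.succ_ne_zero i this
    refine ⟨⟨hx, by simpa using h3 0, fun z hz hzx => ?_⟩, ?_, ?_, ?_, ?_, ?_⟩
    · obtain ⟨i, hi⟩ := (h2 z).1 hz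
      induction i using Fin.cases with
      | zero => exact absurd hi.symm (by simpa using hzx)
      | succ i =>
        have := h4 0 i.succ (Fin.succ_pos i)
        simp only [Fin.cons_zero, Fin.cons_succ] at this hi
        rwa [hi] at this
    · intro i j h
      exact Fin.succ_injective _ (@h1 i.succ j.succ (by simpa using h))
    · intro z
      rw [Finset.mem_erase, h2, Fin.exists_fin_succ]
      simp only [Fin.cons_zero, Fin.cons_succ]
      constructor
      · rintro ⟨hne, h | h⟩
        · exact absurd h.symm hne
        · exact h
      · rintro ⟨i, rfl⟩
        exact ⟨hinj i, Or.inr ⟨i, rfl⟩⟩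
    · intro i; simpa using h3 i.succ
    · rintro i j hij (h | ⟨h, h', h''⟩)
      · exact h4 i.succ j.succ (Fin.succ_lt_succ_iff.2 hij) (by simpa using h)
      · exact h5 0 i.succ j.succ (Fin.succ_pos i) (Fin.succ_lt_succ_iff.2 hij)
          (by simpa using h) (by simpa using h') (by simpa using h'')
    · intro i j l hij hjl
      simpa using h5 i.succ j.succ l.succ (Fin.succ_lt_succ_iff.2 hij) (Fin.succ_lt_succ_iff.2 hjl)
  · rintro ⟨⟨hx, hxb, hxK⟩, h1, h2, h3, h4, h5⟩
    have hmem : ∀ i, p i ∈ A ∧ p i ≠ x := fun i => by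
      have := (h2 (p i)).2 ⟨i, rfl⟩
      rw [Finset.mem_erase] at this
      exact ⟨this.2, this.1⟩
    refine ⟨?_, ?_, ?_, ?_, ?_⟩
    · rw [Fin.cons_injective_iff]
      exact ⟨fun ⟨i, hi⟩ => (hmem i).2 hi, h1⟩
    · intro z
      rw [Fin.exists_fin_succ]
      simp only [Fin.cons_zero, Fin.cons_succ]
      rw [← h2, Finset.mem_erase]
      by_cases hz : z = x
      · simp [hz, hx]
      · simp [hz, Ne.symm hz]
    · intro i
      induction i using Fin.cases with
      | zero => simpa using hxb
      | succ i => simpa using h3 i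
    · intro i j hij
      induction j using Fin.cases with
      | zero => exact absurd hij (Fin.not_lt_zero i)
      | succ j =>
        induction i using Fin.cases with
        | zero => simpa using hxK (p j) (hmem j).1 (hmem j).2
        | succ i =>
          have := h4 i j (Fin.succ_lt_succ_iff.1 hij)
          simpa using fun h => this (Or.inl h)
    · intro i j l hij hjl
      induction l using Fin.cases with
      | zero => exact absurd hjl (Fin.not_lt_zero j)
      | succ l =>
      induction j using Fin.cases with
      | zero => exact absurd hij (Fin.not_lt_zero i)
      | succ j =>
        induction i using Fin.cases with
        | zero =>
          have := h4 j l (Fin.succ_lt_succ_iff.1 hjl)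
          simpa using fun ha hb hc => this (Or.inr ⟨ha, hb, hc⟩)
        | succ i =>
          simpa using h5 i j l (Fin.succ_lt_succ_iff.1 hij) (Fin.succ_lt_succ_iff.1 hjl)

instance (P : ℕ → ℕ → ℕ → Prop) {m : ℕ} (b : Fin m → ℕ) (A : Finset ℕ)
    (K : ℕ → ℕ → Prop) : Finite {p // IsFilling P b A K p} :=
  Finite.of_injective (β := Fin m → A)
    (fun p i => ⟨p.1 i, (p.2.2.1 _).2 ⟨i, rfl⟩⟩) (fun _ _ h => Subtype.ext (funext fun i =>
      congrArg Subtype.val (congrFun h i)))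

lemma card_isFilling (P : ℕ → ℕ → ℕ → Prop) {m : ℕ} (b : Fin m → ℕ) (A : Finset ℕ)
    (K : ℕ → ℕ → Prop) :
    Nat.card {p // IsFilling P b A K p} = fillCount P (List.ofFn b) A K := by
  induction m generalizing A K with
  | zero =>
    rw [List.ofFn_zero, fillCount]
    split_ifs with hA
    · subst hA
      rw [Nat.card_eq_one_iff_unique]
      refine ⟨⟨fun p q => Subtype.ext (Subsingleton.elim _ _)⟩, ⟨Fin.elim0, ?_⟩⟩
      refine ⟨fun i => i.elim0, fun x => ?_, fun i => i.elim0, fun i => i.elim0, fun i => i.elim0⟩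
      simp
    · rw [Nat.card_eq_zero]
      left
      refine ⟨fun p => hA ?_⟩
      ext x
      rw [p.2.2.1]
      simp
  | succ m ih =>
    rw [List.ofFn_succ, fillCount, ← Finset.sum_coe_sort]
    simp_rw [← ih]
    rw [← Nat.card_sigma]
    refine Nat.card_congr
      { toFun := fun p => ⟨⟨p.1 0, ?_⟩, ⟨Fin.tail p.1, ?_⟩⟩
        invFun := fun q => ⟨Fin.cons q.1.1 q.2.1, ?_⟩
        left_inv := ?_
        right_inv := ?_ }
    · have := p.2
      rw [← Fin.cons_self_tail p.1, isFilling_cons] at this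
      exact this.1
    · have := p.2
      rw [← Fin.cons_self_tail p.1, isFilling_cons] at this
      exact this.2
    · exact (isFilling_cons _ _ _ _ _ _).2 ⟨q.1.2, q.2.2⟩
    · intro p
      simp
    · rintro ⟨⟨x, hx⟩, ⟨p, hp⟩⟩
      rfl

/-- The number of transversals of the board `Y` avoiding `P`. Here `Y i s` says that the cell in
column `i` and row `s` belongs to the board, and a transversal `e` maps rows to columns. A
triple of dots counts as an occurrence only if all cells in its rows and columns lie in the
board. For a board closed as in `IsBoard` it suffices to look at the lowest row `s₁`. -/
noncomputable def cnt (t : ℕ) (Y : Fin t → Fin t → Prop) (P : ℕ → ℕ → ℕ → Prop) : ℕ :=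
  Nat.card {e : Perm (Fin t) // (∀ s, Y (e s) s) ∧ ∀ s₁ s₂ s₃, s₁ < s₂ → s₂ < s₃ →
    Y (e s₂) s₁ → Y (e s₃) s₁ → ¬ P (e s₁) (e s₂) (e s₃)}

/-- `Y` is a Young diagram, justified to the left and to the top: with a cell it contains all
cells weakly to the left and weakly above. -/
def IsBoard {t : ℕ} (Y : Fin t → Fin t → Prop) : Prop :=
  ∀ i i' s s', Y i s → i' ≤ i → s ≤ s' → Y i' s'

open Classical in
lemma IsBoard.exists_bound {t : ℕ} {Y : Fin t → Fin t → Prop} (hY : IsBoard Y) :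
    ∃ b : Fin t → ℕ, Monotone b ∧ (∀ s, b s ≤ t) ∧ ∀ i s, Y i s ↔ (i : ℕ) < b s := by
  refine ⟨fun s => (Finset.univ.filter (fun i => Y i s)).card, ?_, ?_, ?_⟩
  · intro s s' h
    exact Finset.card_le_card fun i => by simpa using fun hi => hY _ _ _ _ hi le_rfl h
  · intro s
    simpa using Finset.card_le_univ (Finset.univ.filter (fun i => Y i s))
  · intro i s
    constructor
    · intro h
      have : Finset.Iic i ⊆ Finset.univ.filter (fun i => Y i s) := fun j hj => by
        simpa using hY _ _ _ _ h (Finset.mem_Iic.1 hj) le_rfl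
      have := Finset.card_le_card this
      rw [Fin.card_Iic] at this
      exact this
    · intro h
      by_contra hn
      have : Finset.univ.filter (fun i => Y i s) ⊆ Finset.Iio i := fun j hj => by
        rw [Finset.mem_Iio]
        by_contra hij
        exact hn (hY _ _ _ _ (Finset.mem_filter.1 hj).2 (not_lt.1 hij) le_rfl)
      have := Finset.card_le_card this
      rw [Fin.card_Iio] at this
      simp only at h
      omega

lemma cnt_eq_fillCount {t : ℕ} {Y : Fin t → Fin t → Prop} {b : Fin t → ℕ}
    (hb : ∀ i s, Y i s ↔ (i : ℕ) < b s) (P : ℕ → ℕ → ℕ → Prop) :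
    cnt t Y P = fillCount P (List.ofFn b) (Finset.range t) (fun _ _ => False) := by
  rw [← card_isFilling, cnt]
  have hlt : ∀ p, IsFilling P b (Finset.range t) (fun _ _ => False) p → ∀ i, p i < t :=
    fun p hp i => Finset.mem_range.1 ((hp.2.1 _).2 ⟨i, rfl⟩)
  refine Nat.card_eq_of_bijective (fun e => ⟨fun s => (e.1 s : ℕ), ?_⟩) ⟨?_, ?_⟩
  · obtain ⟨e, h1, h2⟩ := e
    refine ⟨fun i j h => e.injective (Fin.ext h), fun x => ?_, fun i => (hb _ _).1 (h1 i),
      fun _ _ _ h => h, fun i j l hij hjl h h' => h2 i j l hij hjl ((hb _ _).2 h) ((hb _ _).2 h')⟩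
    rw [Finset.mem_range]
    constructor
    · intro h
      exact ⟨e.symm ⟨x, h⟩, by simp⟩
    · rintro ⟨i, rfl⟩
      exact (e i).2
  · intro e e' h
    refine Subtype.ext (Equiv.ext fun s => Fin.ext ?_)
    exact congrFun (congrArg Subtype.val h) s
  · rintro ⟨p, hp⟩
    have hinj : Function.Injective (fun i => (⟨p i, hlt p hp i⟩ : Fin t)) := fun i j h =>
      hp.1 (congrArg Fin.val h)
    refine ⟨⟨Equiv.ofBijective _ (Finite.injective_iff_bijective.1 hinj), ?_, ?_⟩, ?_⟩
    · intro s
      exact (hb _ _).2 (hp.2.2.1 s)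
    · intro i j l hij hjl h h'
      exact hp.2.2.2.2 i j l hij hjl ((hb _ _).1 h) ((hb _ _).1 h')
    · rfl

/-- `rankCount` of the boundary word is the number of 123-avoiders, lies above the number of
132-avoiders and below the number of 321-avoiders. -/
lemma cnt_bounds {t : ℕ} {Y : Fin t → Fin t → Prop} (hY : IsBoard Y) :
    cnt t Y P132 ≤ cnt t Y P123 ∧ cnt t Y P123 ≤ cnt t Y P321 := by
  obtain ⟨b, hmono, hle, hb⟩ := hY.exists_bound
  simp only [cnt_eq_fillCount hb]
  have h1 : (0 :: List.ofFn b).Pairwise (· ≤ ·) := by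
    rw [List.pairwise_cons]
    refine ⟨fun _ _ => Nat.zero_le _, ?_⟩
    rw [List.pairwise_ofFn]
    exact fun i j h => hmono h.le
  have h2 : ∀ x ∈ 0 :: List.ofFn b, x ≤ t := by
    intro x hx
    rw [List.mem_cons, List.mem_ofFn] at hx
    rcases hx with rfl | ⟨i, rfl⟩
    · exact Nat.zero_le _
    · exact hle i
  have e := fillCount_123 t (List.ofFn b) 0 h1 h2 (Finset.range t) (fun _ _ => False) []
    ⟨by simp, by simp, by simp, by simp⟩
  rw [List.map_nil, blockCount_nil] at e
  rw [e]
  constructor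
  · have := fillCount_132_le t (List.ofFn b) 0 0 h1 h2 (Finset.range t) (fun _ _ => False)
      (by simp) (by simp) (by simp [closable])
    simpa using this
  · have := le_fillCount_321 t (List.ofFn b) 0 0 0 h1 h2 (Finset.range t) (fun _ _ => False)
      (by simp) (by simp) (by simp) (by simp)
    simpa using this


/-! ### Reflecting a board -/

section Reflection

variable {t : ℕ} {Y : Fin t → Fin t → Prop}

/-- The reflection of a board in its antidiagonal, which exchanges rows and columns. -/
def flipBoard (Y : Fin t → Fin t → Prop) : Fin t → Fin t → Prop :=
  fun i s => Y s.rev i.rev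

/-- The reflection of a transversal in the antidiagonal. -/
def flipPerm (e : Perm (Fin t)) : Perm (Fin t) :=
  (Fin.revPerm.trans e.symm).trans Fin.revPerm

lemma flipPerm_apply (e : Perm (Fin t)) (s : Fin t) : flipPerm e s = (e.symm s.rev).rev := rfl

lemma flipPerm_injective : Function.Injective (flipPerm (t := t)) := by
  intro e e' h
  have : e.symm = e'.symm := Equiv.ext fun s => by
    have := Equiv.congr_fun h s.rev
    simpa [flipPerm_apply] using this
  exact Equiv.symm_bijective.injective this

lemma IsBoard.flip (hY : IsBoard Y) : IsBoard (flipBoard Y) := by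
  intro i i' s s' h hi hs
  exact hY _ _ _ _ h (Fin.rev_le_rev.2 hs) (Fin.rev_le_rev.2 hi)

/-- Reflection turns 213-avoiders into 132-avoiders and preserves 123-avoiders. -/
lemma cnt_le_of_flip (hY : IsBoard Y) {P Q : ℕ → ℕ → ℕ → Prop}
    (hPQ : (P = P213 ∧ Q = P132) ∨ (P = P123 ∧ Q = P123)) :
    cnt t Y P ≤ cnt t (flipBoard Y) Q := by
  refine Nat.card_le_card_of_injective (fun e => ⟨flipPerm e.1, ?_, ?_⟩) ?_
  · intro s
    have := e.2.1 (e.1.symm s.rev)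
    simpa [flipBoard, flipPerm_apply] using this
  · intro s₁ s₂ s₃ h12 h23 hY2 hY3 hQ
    simp only [flipBoard, flipPerm_apply, Fin.rev_rev] at hY2 hY3 hQ
    have h1 := e.2.1 (e.1.symm s₁.rev)
    rw [Equiv.apply_symm_apply] at h1
    rw [← Fin.rev_lt_rev] at h12 h23
    have key := e.2.2
    rcases hPQ with ⟨rfl, rfl⟩ | ⟨rfl, rfl⟩
    · obtain ⟨ha, hb⟩ := hQ
      rw [← Fin.lt_def, Fin.rev_lt_rev] at ha hb
      refine key _ _ _ hb ha ?_ ?_ ?_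
      · simpa using hY _ _ _ _ hY2 (h23.trans h12).le le_rfl
      · simpa using hY2
      · simpa [P213] using ⟨h23, h12⟩
    · obtain ⟨ha, hb⟩ := hQ
      rw [← Fin.lt_def, Fin.rev_lt_rev] at ha hb
      refine key _ _ _ hb ha ?_ ?_ ?_
      · simpa using hY _ _ _ _ hY3 h12.le le_rfl
      · simpa using hY3
      · simpa [P123] using ⟨h23, h12⟩
  · intro e e' h
    exact Subtype.ext (flipPerm_injective (congrArg Subtype.val h))

lemma flipBoard_flipBoard : flipBoard (flipBoard Y) = Y := by
  funext i s
  simp [flipBoard]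

lemma cnt_213_le_123 (hY : IsBoard Y) : cnt t Y P213 ≤ cnt t Y P123 := by
  refine (cnt_le_of_flip hY (Or.inl ⟨rfl, rfl⟩)).trans ((cnt_bounds hY.flip).1.trans ?_)
  have := cnt_le_of_flip hY.flip (Or.inr ⟨rfl, rfl⟩)
  rwa [flipBoard_flipBoard] at this

end Reflection

/-! ### Comparing 321 and 312 through minima -/

section Minima

variable {t : ℕ} {Y : Fin t → Fin t → Prop}

/-- The dot in row `s` is a minimum: every higher dot lies to its right. -/
def IsRLMin (e : Perm (Fin t)) (s : Fin t) : Prop := ∀ u, s < u → e s < e u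

/-- The filling `e'` is a transversal agreeing with `e` at the minima of `e`, and each other
dot of `e'` still has one of these minima to its upper left. Then `e'` has the same minima as `e`. -/
def InClass (Y : Fin t → Fin t → Prop) (e e' : Perm (Fin t)) : Prop :=
  (∀ s, Y (e' s) s) ∧ (∀ s, IsRLMin e s → e' s = e s) ∧
    ∀ s, ¬ IsRLMin e s → ∃ m, IsRLMin e m ∧ s < m ∧ e m < e' s

lemma InClass.isRLMin_iff {e e' : Perm (Fin t)} (h : InClass Y e e') (s : Fin t) :
    IsRLMin e' s ↔ IsRLMin e s := by
  obtain ⟨-, h1, h2⟩ := h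
  constructor
  · intro hs
    by_contra hn
    obtain ⟨m, hm, hsm, hlt⟩ := h2 s hn
    have := hs m hsm
    rw [h1 m hm] at this
    exact lt_asymm this hlt
  · intro hs s' hss'
    rw [h1 s hs]
    by_cases hs' : IsRLMin e s'
    · rw [h1 s' hs']
      exact hs s' hss'
    · obtain ⟨m, hm, hsm, hlt⟩ := h2 s' hs'
      exact (hs m (hss'.trans hsm)).trans hlt

lemma inClass_self {e : Perm (Fin t)} (h : ∀ s, Y (e s) s) : InClass Y e e := by
  refine ⟨h, fun _ _ => rfl, fun s hs => ?_⟩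
  obtain ⟨s', hss', hlt⟩ : ∃ s', s < s' ∧ e s' ≤ e s := by
    simpa [IsRLMin] using hs
  obtain ⟨m, hm, hmin⟩ := (Finset.Ioi s).exists_min_image e ⟨s', Finset.mem_Ioi.2 hss'⟩
  rw [Finset.mem_Ioi] at hm
  refine ⟨m, fun u hu => ?_, hm, ?_⟩
  · exact lt_of_le_of_ne (hmin u (Finset.mem_Ioi.2 (hm.trans hu)))
      (fun h => hu.ne (e.injective h))
  · exact lt_of_le_of_ne ((hmin s' (Finset.mem_Ioi.2 hss')).trans hlt)
      (fun h => hm.ne' (e.injective h))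

/-- Every class contains a 312-avoider, namely its lexicographic maximum: exchanging the
columns of the two lower dots of a 312 would stay in the class and increase the transversal. -/
lemma exists_avoids_312 (hY : IsBoard Y) {e : Perm (Fin t)} (he : ∀ s, Y (e s) s) :
    ∃ e', InClass Y e e' ∧ ∀ s₁ s₂ s₃, s₁ < s₂ → s₂ < s₃ →
      Y (e' s₂) s₁ → Y (e' s₃) s₁ → ¬ P312 (e' s₁) (e' s₂) (e' s₃) := by
  have : Nonempty {e' // InClass Y e e'} := ⟨⟨e, inClass_self he⟩⟩
  obtain ⟨⟨e', h'⟩, hmax⟩ := Finite.exists_max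
    (fun e' : {e' // InClass Y e e'} => toLex (e'.1 : Fin t → Fin t))
  refine ⟨e', h', fun s₁ s₂ s₃ h12 h23 hY2 _ ⟨ha, hb⟩ => ?_⟩
  rw [← Fin.lt_def] at ha hb
  have hn1 : ¬ IsRLMin e s₁ := fun h =>
    lt_asymm ((h'.isRLMin_iff s₁).2 h s₃ (h12.trans h23)) ha
  have hn2 : ¬ IsRLMin e s₂ := fun h =>
    lt_asymm ((h'.isRLMin_iff s₂).2 h s₃ h23) (ha.trans hb)
  have hc : InClass Y e (e' * swap s₁ s₂) := by
    obtain ⟨c1, c2, c3⟩ := h'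
    refine ⟨fun s => ?_, fun s hs => ?_, fun s hs => ?_⟩
    · by_cases h1 : s = s₁
      · subst h1; simpa using hY2
      by_cases h2 : s = s₂
      · subst h2; simpa using hY _ _ _ _ (c1 s₁) le_rfl h12.le
      simpa [Equiv.swap_apply_of_ne_of_ne h1 h2] using c1 s
    · have h1 : s ≠ s₁ := fun h => hn1 (h ▸ hs)
      have h2 : s ≠ s₂ := fun h => hn2 (h ▸ hs)
      simpa [Equiv.swap_apply_of_ne_of_ne h1 h2] using c2 s hs
    · by_cases h1 : s = s₁
      · subst h1
        obtain ⟨m, hm, hsm, hlt⟩ := c3 s hs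
        exact ⟨m, hm, hsm, by simpa using hlt.trans hb⟩
      by_cases h2 : s = s₂
      · subst h2
        by_cases h3 : IsRLMin e s₃
        · refine ⟨s₃, h3, h23, ?_⟩
          rw [← c2 s₃ h3]
          simpa using ha
        · obtain ⟨m, hm, hsm, hlt⟩ := c3 s₃ h3
          exact ⟨m, hm, h23.trans hsm, by simpa using hlt.trans ha⟩
      simpa [Equiv.swap_apply_of_ne_of_ne h1 h2] using c3 s hs
  have hle := hmax ⟨_, hc⟩
  refine absurd hle (not_le.2 ⟨s₁, fun j hj => ?_, ?_⟩)
  · have : swap s₁ s₂ j = j := Equiv.swap_apply_of_ne_of_ne hj.ne (hj.trans h12).ne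
    simp [this]
  · simpa using hb

/-- The step of an induction on `s` showing that a transversal is determined by its minima
if the other dots form an increasing sequence. -/
lemma not_lt_of_agree {e e' : Perm (Fin t)} (hM : ∀ s, IsRLMin e s → e' s = e s)
    (hinc : ∀ s s', ¬ IsRLMin e s → ¬ IsRLMin e s' → s < s' → e' s < e' s')
    {s : Fin t} (ih : ∀ u < s, e u = e' u) : ¬ e s < e' s := by
  intro hlt
  have hs : ¬ IsRLMin e s := fun h => hlt.ne (hM s h).symm
  obtain ⟨u, hu⟩ := e'.surjective (e s)
  have hus : u ≠ s := fun h => hlt.ne (by rw [← hu, h])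
  have huM : ¬ IsRLMin e u := fun h => hus (e.injective ((hM u h).symm.trans hu))
  rcases lt_or_gt_of_ne hus with h | h
  · exact hus (e.injective ((ih u h).trans hu))
  · have := hinc s u hs huM h
    rw [hu] at this
    exact lt_asymm this hlt

/-- A 321-avoider is increasing off its minima, so every class contains at most one
321-avoider; it also contains a 312-avoider. -/
lemma cnt_321_le_312 (hY : IsBoard Y) : cnt t Y P321 ≤ cnt t Y P312 := by
  choose φ hφ using fun e : {e : Perm (Fin t) // (∀ s, Y (e s) s) ∧ ∀ s₁ s₂ s₃, s₁ < s₂ →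
    s₂ < s₃ → Y (e s₂) s₁ → Y (e s₃) s₁ → ¬ P321 (e s₁) (e s₂) (e s₃)} =>
    exists_avoids_312 hY e.2.1
  have hinc : ∀ e : {e : Perm (Fin t) // (∀ s, Y (e s) s) ∧ ∀ s₁ s₂ s₃, s₁ < s₂ →
      s₂ < s₃ → Y (e s₂) s₁ → Y (e s₃) s₁ → ¬ P321 (e s₁) (e s₂) (e s₃)},
      ∀ s s', ¬ IsRLMin e.1 s' → s < s' → e.1 s < e.1 s' := by
    rintro ⟨e, h1, h2⟩ s s' hs' hss'
    by_contra hn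
    have hlt : e s' < e s := lt_of_le_of_ne (not_lt.1 hn) (fun h => hss'.ne' (e.injective h))
    obtain ⟨m, -, hm, hm'⟩ := (inClass_self (Y := Y) h1).2.2 s' hs'
    exact h2 s s' m hss' hm (hY _ _ _ _ (h1 s) hlt.le le_rfl)
      (hY _ _ _ _ (h1 s) (hm'.trans hlt).le le_rfl) ⟨hm', hlt⟩
  refine Nat.card_le_card_of_injective (fun e => ⟨φ e, (hφ e).1.1, (hφ e).2⟩) fun e f h => ?_
  have hef : φ e = φ f := congrArg Subtype.val h
  have hM : ∀ s, IsRLMin e.1 s ↔ IsRLMin f.1 s := fun s => by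
    rw [← (hφ e).1.isRLMin_iff, ← (hφ f).1.isRLMin_iff, hef]
  have hv : ∀ s, IsRLMin e.1 s → f.1 s = e.1 s := fun s hs => by
    rw [← (hφ e).1.2.1 s hs, hef, (hφ f).1.2.1 s ((hM s).1 hs)]
  refine Subtype.ext (Equiv.ext fun s => ?_)
  induction s using WellFoundedLT.induction with
  | ind s ih =>
    refine le_antisymm (not_lt.1 ?_) (not_lt.1 ?_)
    · refine not_lt_of_agree (fun s hs => (hv s ((hM s).2 hs)).symm) (fun s s' _ hs' =>
        hinc e s s' fun h => hs' ((hM s').1 h)) (fun u hu => (ih u hu).symm)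
    · exact not_lt_of_agree hv (fun s s' _ hs' => hinc f s s' fun h => hs' ((hM s').2 h)) ih

lemma cnt_123_le_312 (hY : IsBoard Y) : cnt t Y P123 ≤ cnt t Y P312 :=
  (cnt_bounds hY).2.trans (cnt_321_le_312 hY)

end Minima

/-! ### A board with strict inequalities -/

/-- The `5 × 5` square without the bottom cell of the last column. -/
def cornerBoard : Fin 5 → Fin 5 → Prop := fun i s => ¬ (i = 4 ∧ s = 0)

instance : DecidableRel cornerBoard := fun i s => by unfold cornerBoard; infer_instance

instance (x y z : ℕ) : Decidable (P123 x y z) := by unfold P123; infer_instance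
instance (x y z : ℕ) : Decidable (P213 x y z) := by unfold P213; infer_instance
instance (x y z : ℕ) : Decidable (P312 x y z) := by unfold P312; infer_instance

set_option maxRecDepth 100000 in
/-- Both inequalities are checked by enumerating the `5!` permutations. -/
lemma cornerBoard_strict : cnt 5 cornerBoard P213 < cnt 5 cornerBoard P123 ∧
    cnt 5 cornerBoard P123 < cnt 5 cornerBoard P312 := by
  simp only [cnt, Nat.card_eq_fintype_card]
  decide +kernel


/-! ### Classes of permutations and their boards -/

variable {n k : ℕ}

/-- The dots of `π` strictly to the right of column `i` and strictly below row `h` contain an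
occurrence of `τ`. The dot in column `i` is called inner if `InY τ π i (π i)`. -/
def InY (τ : Perm (Fin k)) (π : Perm (Fin n)) (i h : Fin n) : Prop :=
  ∃ f : Fin k → Fin n, StrictMono f ∧ (∀ s t, τ s < τ t ↔ π (f s) < π (f t)) ∧
    ∀ s, i < f s ∧ π (f s) < h

lemma InY.mono {τ : Perm (Fin k)} {π : Perm (Fin n)} {i i' h h' : Fin n} (H : InY τ π i h)
    (hi : i' ≤ i) (hh : h ≤ h') : InY τ π i' h' := by
  obtain ⟨f, hf, hp, hr⟩ := H
  exact ⟨f, hf, hp, fun s => ⟨hi.trans_lt (hr s).1, (hr s).2.trans_le hh⟩⟩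

/-- The occurrence of `τ` can be chosen among dots that have no occurrence of `τ` to their lower
right: an occurrence whose first column is as far right as possible will do. -/
lemma InY.exists_outside {τ : Perm (Fin k)} (hk : 1 ≤ k) {π : Perm (Fin n)} {i h : Fin n}
    (H : InY τ π i h) : ∃ f : Fin k → Fin n, StrictMono f ∧
      (∀ s t, τ s < τ t ↔ π (f s) < π (f t)) ∧ (∀ s, i < f s ∧ π (f s) < h) ∧
      ∀ s, ¬ InY τ π (f s) (π (f s)) := by
  obtain ⟨f₀, hf₀⟩ := H
  have : Nonempty {f : Fin k → Fin n // StrictMono f ∧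
      (∀ s t, τ s < τ t ↔ π (f s) < π (f t)) ∧ ∀ s, i < f s ∧ π (f s) < h} := ⟨⟨f₀, hf₀⟩⟩
  obtain ⟨⟨f, hf, hp, hr⟩, hmax⟩ := Finite.exists_max (fun f : {f : Fin k → Fin n // StrictMono f ∧
      (∀ s t, τ s < τ t ↔ π (f s) < π (f t)) ∧ ∀ s, i < f s ∧ π (f s) < h} => f.1 ⟨0, hk⟩)
  refine ⟨f, hf, hp, hr, fun s ⟨g, hg, hgp, hgr⟩ => ?_⟩
  have h1 := hmax ⟨g, hg, hgp, fun u => ⟨(hr s).1.trans (hgr u).1, (hgr u).2.trans (hr s).2⟩⟩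
  have h2 : f ⟨0, hk⟩ ≤ f s := hf.monotone (Fin.mk_le_of_le_val (Nat.zero_le _))
  exact absurd ((hgr ⟨0, hk⟩).1) (not_lt.2 (le_trans h1 h2))

/-- `π` arises from `π₀` by moving only the inner dots of `π₀`, within the cells `InY τ π₀`. -/
def Rel (τ : Perm (Fin k)) (π₀ π : Perm (Fin n)) : Prop :=
  ∀ i, (InY τ π₀ i (π₀ i) → InY τ π₀ i (π i)) ∧ (¬ InY τ π₀ i (π₀ i) → π i = π₀ i)

/-- Related permutations have the same region `InY`: the region is determined by the dots which
are not inner. -/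
lemma Rel.inY_iff {τ : Perm (Fin k)} (hk : 1 ≤ k) {π₀ π : Perm (Fin n)} (H : Rel τ π₀ π)
    (i h : Fin n) : InY τ π i h ↔ InY τ π₀ i h := by
  constructor
  · rintro ⟨f, hf, hp, hr⟩
    by_cases hin : ∃ s, InY τ π₀ (f s) (π₀ (f s))
    · obtain ⟨s, hs⟩ := hin
      exact ((H (f s)).1 hs).mono (hr s).1.le (hr s).2.le
    · push Not at hin
      have e : ∀ s, π (f s) = π₀ (f s) := fun s => (H (f s)).2 (hin s)
      simp only [e] at hp hr
      exact ⟨f, hf, hp, hr⟩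
  · intro h
    obtain ⟨f, hf, hp, hr, hout⟩ := h.exists_outside hk
    have e : ∀ s, π₀ (f s) = π (f s) := fun s => ((H (f s)).2 (hout s)).symm
    simp only [e] at hp hr
    exact ⟨f, hf, hp, hr⟩

lemma Rel.mem_iff {τ : Perm (Fin k)} {π₀ π : Perm (Fin n)} (H : Rel τ π₀ π)
    (i : Fin n) : InY τ π₀ i (π i) ↔ InY τ π₀ i (π₀ i) := by
  refine ⟨fun h => ?_, (H i).1⟩
  by_contra hn
  rw [(H i).2 hn] at h
  exact hn h

/-- `Rel τ` is an equivalence relation; its classes are counted by transversals of boards. -/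
def classSetoid (τ : Perm (Fin k)) (hk : 1 ≤ k) (n : ℕ) : Setoid (Perm (Fin n)) where
  r := Rel τ
  iseqv :=
    { refl := fun π i => ⟨id, fun _ => rfl⟩
      symm := by
        intro π₀ π H i
        simp only [H.inY_iff hk, H.mem_iff]
        exact ⟨id, fun h => ((H i).2 h).symm⟩
      trans := by
        intro π₀ π π' H H' i
        have h' := H' i
        simp only [H.inY_iff hk, H.mem_iff] at h'
        exact ⟨h'.1, fun h => (h'.2 h).trans ((H i).2 h)⟩ }

/-- `P x y z` says that three dots in columns `x, y, z`, listed by increasing row, form the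
pattern `σ`: the `i`-th dot from the left has height `σ i`. -/
def Encodes (σ : Perm (Fin 3)) (P : ℕ → ℕ → ℕ → Prop) : Prop :=
  ∀ x y z : ℕ, P x y z ↔ StrictMono (fun i => (![x, y, z] : Fin 3 → ℕ) (σ i))

lemma encodes_123 : Encodes p123 P123 := by
  intro x y z
  rw [Fin.strictMono_iff_lt_succ]
  simp [Fin.forall_fin_succ, p123, P123]

lemma encodes_213 : Encodes p213 P213 := by
  intro x y z
  rw [Fin.strictMono_iff_lt_succ]
  simp [Fin.forall_fin_succ, p213, P213]

lemma encodes_312 : Encodes p312 P312 := by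
  intro x y z
  rw [Fin.strictMono_iff_lt_succ]
  simp [Fin.forall_fin_succ, p312, P312]

lemma Encodes.map {σ : Perm (Fin 3)} {P : ℕ → ℕ → ℕ → Prop} (hP : Encodes σ P) {t : ℕ}
    {c : Fin t → Fin n} (hc : StrictMono c) (x y z : Fin t) :
    P (c x) (c y) (c z) ↔ P x y z := by
  rw [hP, hP]
  have e1 : ∀ i, (![((c x : Fin n) : ℕ), c y, c z] : Fin 3 → ℕ) i = c (![x, y, z] i) := by
    intro i; fin_cases i <;> rfl
  have e2 : ∀ i, (![(x : ℕ), y, z] : Fin 3 → ℕ) i = (![x, y, z] i : Fin t) := by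
    intro i; fin_cases i <;> rfl
  simp only [StrictMono, e1, e2, ← Fin.lt_def, hc.lt_iff_lt]

lemma blockSum_castAdd {m : ℕ} (σ : Perm (Fin m)) (τ : Perm (Fin k)) (s : Fin m) :
    (blockSum σ τ (Fin.castAdd k s) : ℕ) = k + σ s := by
  simp [blockSum, Nat.add_comm]

lemma blockSum_natAdd {m : ℕ} (σ : Perm (Fin m)) (τ : Perm (Fin k)) (s : Fin k) :
    (blockSum σ τ (Fin.natAdd m s) : ℕ) = τ s := by
  simp [blockSum]

/-- An occurrence of `(σ|τ)` is an occurrence of `σ` all of whose rows and columns meet inside the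
region `InY`. -/
lemma containsPat_iff {σ : Perm (Fin 3)} {P : ℕ → ℕ → ℕ → Prop} (hP : Encodes σ P)
    (τ : Perm (Fin k)) (π : Perm (Fin n)) :
    ContainsPat π (blockSum σ τ) ↔ ∃ a b c, π a < π b ∧ π b < π c ∧ P a b c ∧
      InY τ π a (π a) ∧ InY τ π b (π a) ∧ InY τ π c (π a) := by
  constructor
  · rintro ⟨f, hf, hp⟩
    have hin : ∀ s t, InY τ π (f (Fin.castAdd k s)) (π (f (Fin.castAdd k t))) := by
      intro s t
      refine ⟨fun u => f (Fin.natAdd 3 u), ?_, ?_, ?_⟩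
      · intro u v huv
        exact hf (Fin.strictMono_natAdd 3 huv)
      · intro u v
        rw [← hp, Fin.lt_def, Fin.lt_def, blockSum_natAdd, blockSum_natAdd]
      · intro u
        refine ⟨hf ?_, (hp _ _).1 ?_⟩
        · rw [Fin.lt_def]; simp; omega
        · rw [Fin.lt_def, blockSum_natAdd, blockSum_castAdd]
          have := (τ u).2
          omega
    have hlt : ∀ s t, σ s < σ t → π (f (Fin.castAdd k s)) < π (f (Fin.castAdd k t)) := by
      intro s t h
      rw [← hp, Fin.lt_def, blockSum_castAdd, blockSum_castAdd]
      have := Fin.lt_def.1 h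
      omega
    refine ⟨f (Fin.castAdd k (σ.symm 0)), f (Fin.castAdd k (σ.symm 1)),
      f (Fin.castAdd k (σ.symm 2)), hlt _ _ (by simp), hlt _ _ (by simp), ?_,
      hin _ _, hin _ _, hin _ _⟩
    rw [hP]
    have e : ∀ i, (![((f (Fin.castAdd k (σ.symm 0)) : Fin n) : ℕ), f (Fin.castAdd k (σ.symm 1)),
        f (Fin.castAdd k (σ.symm 2))] : Fin 3 → ℕ) i = f (Fin.castAdd k (σ.symm i)) := by
      intro i; fin_cases i <;> rfl
    intro i j hij
    simp only [e, Equiv.symm_apply_apply, ← Fin.lt_def]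
    exact hf (Fin.strictMono_castAdd k hij)
  · rintro ⟨a, b, c, hab, hbc, hPabc, ha, hb, hc⟩
    rw [hP] at hPabc
    have e : ∀ i, (![(a : ℕ), b, c] : Fin 3 → ℕ) i = (![a, b, c] i : Fin n) := by
      intro i; fin_cases i <;> rfl
    have hval : StrictMono fun i => π (![a, b, c] i) := by
      rw [Fin.strictMono_iff_lt_succ]
      simp [Fin.forall_fin_succ, hab, hbc]
    have hcol : StrictMono fun i => (![a, b, c] (σ i) : Fin n) := by
      intro i j hij
      have := hPabc hij
      simpa only [e, ← Fin.lt_def] using this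
    have hin : ∀ i, InY τ π (![a, b, c] i) (π a) := by
      intro i; fin_cases i
      · exact ha
      · exact hb
      · exact hc
    obtain ⟨f, hf, hp, hr⟩ := hin (σ 2)
    have hr1 : ∀ i s, ![a, b, c] (σ i) < f s := fun i s =>
      (hcol.monotone (Fin.le_last i)).trans_lt (hr s).1
    have hr2 : ∀ i s, π (f s) < π (![a, b, c] i) := fun i s =>
      (hr s).2.trans_le (hval.monotone (Fin.zero_le i))
    refine ⟨Fin.append (fun i => ![a, b, c] (σ i)) f, ?_, ?_⟩
    · intro s t hst
      induction s using Fin.addCases with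
      | left s =>
        induction t using Fin.addCases with
        | left t =>
          simp only [Fin.append_left]
          exact hcol ((Fin.strictMono_castAdd k).lt_iff_lt.1 hst)
        | right t => simpa only [Fin.append_left, Fin.append_right] using hr1 s t
      | right s =>
        induction t using Fin.addCases with
        | left t =>
          rw [Fin.lt_def] at hst
          simp at hst
          omega
        | right t =>
          simp only [Fin.append_right]
          exact hf ((Fin.strictMono_natAdd 3).lt_iff_lt.1 hst)
    · intro s t
      induction s using Fin.addCases with
      | left s =>
        induction t using Fin.addCases with
        | left t =>
          simp only [Fin.append_left, hval.lt_iff_lt]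
          rw [Fin.lt_def, blockSum_castAdd, blockSum_castAdd, Fin.lt_def]
          omega
        | right t =>
          simp only [Fin.append_left, Fin.append_right]
          rw [Fin.lt_def, blockSum_castAdd, blockSum_natAdd]
          have h1 := hr2 (σ s) t
          have := (τ t).2
          exact ⟨fun h => by omega, fun h => absurd h (lt_asymm h1)⟩
      | right s =>
        induction t using Fin.addCases with
        | left t =>
          simp only [Fin.append_left, Fin.append_right]
          rw [Fin.lt_def, blockSum_castAdd, blockSum_natAdd]
          have h1 := hr2 (σ t) s
          have := (τ s).2
          exact ⟨fun _ => h1, fun h => by omega⟩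
        | right t =>
          simp only [Fin.append_right]
          rw [Fin.lt_def, blockSum_natAdd, blockSum_natAdd, ← Fin.lt_def, hp]

section OneClass

variable {τ : Perm (Fin k)} {π₀ : Perm (Fin n)} {t : ℕ} {colE rowE : Fin t → Fin n}

/-- `colE` and `rowE` enumerate, in increasing order, the columns and the rows of the inner dots
of `π₀`. -/
structure Coords (τ : Perm (Fin k)) (π₀ : Perm (Fin n)) {t : ℕ} (colE rowE : Fin t → Fin n) :
    Prop where
  col_mono : StrictMono colE
  row_mono : StrictMono rowE
  col : ∀ i, InY τ π₀ i (π₀ i) ↔ ∃ j, colE j = i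
  row : ∀ h, (∃ i, InY τ π₀ i (π₀ i) ∧ π₀ i = h) ↔ ∃ s, rowE s = h

/-- The region `InY τ π₀` restricted to the rows and columns of inner dots, as a board. -/
def classBoard (τ : Perm (Fin k)) (π₀ : Perm (Fin n)) (colE rowE : Fin t → Fin n) :
    Fin t → Fin t → Prop := fun i s => InY τ π₀ (colE i) (rowE s)

lemma Coords.isBoard (hc : Coords τ π₀ colE rowE) : IsBoard (classBoard τ π₀ colE rowE) :=
  fun _ _ _ _ h hi hs => InY.mono h (hc.col_mono.monotone hi) (hc.row_mono.monotone hs)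

lemma Coords.exists_coords (τ : Perm (Fin k)) (π₀ : Perm (Fin n)) :
    ∃ (t : ℕ) (colE rowE : Fin t → Fin n), Coords τ π₀ colE rowE := by
  classical
  set I := Finset.univ.filter (fun i => InY τ π₀ i (π₀ i)) with hI
  have hcard : (I.image π₀).card = I.card := Finset.card_image_of_injective _ π₀.injective
  refine ⟨I.card, I.orderEmbOfFin rfl, (I.image π₀).orderEmbOfFin hcard,
    (I.orderEmbOfFin rfl).strictMono, ((I.image π₀).orderEmbOfFin hcard).strictMono, ?_, ?_⟩
  · intro i
    have := Set.ext_iff.1 (Finset.range_orderEmbOfFin I rfl) i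
    rw [Set.mem_range, Finset.mem_coe] at this
    rw [this, hI, Finset.mem_filter]
    simp
  · intro h
    have := Set.ext_iff.1 (Finset.range_orderEmbOfFin (I.image π₀) hcard) h
    rw [Set.mem_range, Finset.mem_coe] at this
    rw [this, Finset.mem_image]
    simp [hI]

lemma Coords.containsPat_iff (hk : 1 ≤ k) (hc : Coords τ π₀ colE rowE) {π : Perm (Fin n)}
    (hπ : Rel τ π₀ π) {e : Perm (Fin t)} (he : ∀ s, π (colE (e s)) = rowE s)
    {σ : Perm (Fin 3)} {P : ℕ → ℕ → ℕ → Prop} (hP : Encodes σ P) :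
    ContainsPat π (blockSum σ τ) ↔ ∃ s₁ s₂ s₃, s₁ < s₂ ∧ s₂ < s₃ ∧
      classBoard τ π₀ colE rowE (e s₂) s₁ ∧ classBoard τ π₀ colE rowE (e s₃) s₁ ∧
      P (e s₁) (e s₂) (e s₃) := by
  rw [BoardCount.containsPat_iff hP]
  simp only [hπ.inY_iff hk]
  have hcol : ∀ i, InY τ π₀ i (π i) → ∃ s, colE (e s) = i := fun i hi => by
    obtain ⟨j, hj⟩ := (hc.col i).1 ((hπ.mem_iff i).1 hi)
    exact ⟨e.symm j, by simpa using hj⟩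
  constructor
  · rintro ⟨a, b, c, hab, hbc, hPabc, ha, hb, hcc⟩
    obtain ⟨s₁, rfl⟩ := hcol a ha
    obtain ⟨s₂, rfl⟩ := hcol b (hb.mono le_rfl hab.le)
    obtain ⟨s₃, rfl⟩ := hcol c (hcc.mono le_rfl (hab.trans hbc).le)
    simp only [he, hc.row_mono.lt_iff_lt] at hab hbc hb hcc
    exact ⟨s₁, s₂, s₃, hab, hbc, hb, hcc, (hP.map hc.col_mono _ _ _).1 hPabc⟩
  · rintro ⟨s₁, s₂, s₃, h12, h23, hb, hcc, hPs⟩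
    refine ⟨colE (e s₁), colE (e s₂), colE (e s₃), ?_, ?_, (hP.map hc.col_mono _ _ _).2 hPs,
      ?_, ?_, ?_⟩
    · simpa only [he] using hc.row_mono h12
    · simpa only [he] using hc.row_mono h23
    · rw [hπ.mem_iff]
      exact (hc.col _).2 ⟨_, rfl⟩
    · rwa [he]
    · rwa [he]

lemma Coords.exists_rel (hc : Coords τ π₀ colE rowE) {e : Perm (Fin t)}
    (he : ∀ s, classBoard τ π₀ colE rowE (e s) s) :
    ∃ π, Rel τ π₀ π ∧ ∀ s, π (colE (e s)) = rowE s := by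
  classical
  let p : Fin n → Fin n := fun i =>
    if h : ∃ j, colE j = i then rowE (e.symm h.choose) else π₀ i
  have h1 : ∀ j, p (colE j) = rowE (e.symm j) := fun j => by
    have h : ∃ j', colE j' = colE j := ⟨j, rfl⟩
    have hj : h.choose = j := hc.col_mono.injective h.choose_spec
    simp only [p]
    rw [dif_pos h, hj]
  have h2 : ∀ i, ¬ InY τ π₀ i (π₀ i) → p i = π₀ i := fun i hi => by
    simp only [p]
    rw [dif_neg (fun h => hi ((hc.col i).2 h))]
  have hne : ∀ j i, ¬ InY τ π₀ i (π₀ i) → p (colE j) ≠ p i := fun j i hi h => by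
    rw [h1, h2 i hi] at h
    obtain ⟨i', hi', h'⟩ := (hc.row (π₀ i)).2 ⟨_, h⟩
    exact hi (π₀.injective h' ▸ hi')
  have hinj : Function.Injective p := by
    intro i i' h
    by_cases hi : InY τ π₀ i (π₀ i)
    · obtain ⟨j, rfl⟩ := (hc.col i).1 hi
      by_cases hi' : InY τ π₀ i' (π₀ i')
      · obtain ⟨j', rfl⟩ := (hc.col i').1 hi'
        rw [h1, h1] at h
        rw [e.symm.injective (hc.row_mono.injective h)]
      · exact absurd h (hne j i' hi')
    · by_cases hi' : InY τ π₀ i' (π₀ i')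
      · obtain ⟨j', rfl⟩ := (hc.col i').1 hi'
        exact absurd h.symm (hne j' i hi)
      · rw [h2 i hi, h2 i' hi'] at h
        exact π₀.injective h
  refine ⟨Equiv.ofBijective p (Finite.injective_iff_bijective.1 hinj), fun i => ⟨fun hi => ?_,
    fun hi => h2 i hi⟩, fun s => ?_⟩
  · obtain ⟨j, rfl⟩ := (hc.col i).1 hi
    rw [Equiv.ofBijective_apply, h1]
    simpa [classBoard] using he (e.symm j)
  · rw [Equiv.ofBijective_apply, h1, Equiv.symm_apply_apply]

lemma Coords.exists_perm (hc : Coords τ π₀ colE rowE) {π : Perm (Fin n)} (hπ : Rel τ π₀ π) :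
    ∃ e : Perm (Fin t), (∀ s, classBoard τ π₀ colE rowE (e s) s) ∧
      ∀ s, π (colE (e s)) = rowE s := by
  have hex : ∀ s, ∃ j, π (colE j) = rowE s := fun s => by
    obtain ⟨i', hi', h'⟩ := (hc.row (rowE s)).2 ⟨s, rfl⟩
    have : InY τ π₀ (π.symm (rowE s)) (π₀ (π.symm (rowE s))) := by
      by_contra hn
      have h := (hπ _).2 hn
      rw [Equiv.apply_symm_apply, ← h'] at h
      rw [← h'] at hn
      exact hn (π₀.injective h ▸ hi')
    obtain ⟨j, hj⟩ := (hc.col _).1 this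
    exact ⟨j, by rw [hj, Equiv.apply_symm_apply]⟩
  choose e he using hex
  have hinj : Function.Injective e := fun s s' h => hc.row_mono.injective (by
    rw [← he, ← he, h])
  refine ⟨Equiv.ofBijective e (Finite.injective_iff_bijective.1 hinj), fun s => ?_, he⟩
  rw [Equiv.ofBijective_apply, classBoard, ← he, hπ.mem_iff]
  exact (hc.col _).2 ⟨_, rfl⟩

/-- The members of the class of `π₀` correspond to the transversals of its board, and avoiding
`(σ|τ)` to avoiding `σ` inside the board. -/
lemma Coords.card_class (hk : 1 ≤ k) (hc : Coords τ π₀ colE rowE)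
    {σ : Perm (Fin 3)} {P : ℕ → ℕ → ℕ → Prop} (hP : Encodes σ P) :
    Nat.card {π // Rel τ π₀ π ∧ ¬ ContainsPat π (blockSum σ τ)} =
      cnt t (classBoard τ π₀ colE rowE) P := by
  choose e he1 he2 using
    fun π : {π // Rel τ π₀ π ∧ ¬ ContainsPat π (blockSum σ τ)} => hc.exists_perm π.2.1
  refine Nat.card_eq_of_bijective (fun π => ⟨e π, he1 π, ?_⟩) ⟨?_, ?_⟩
  · intro s₁ s₂ s₃ h12 h23 ha hb hPs
    exact π.2.2 ((hc.containsPat_iff hk π.2.1 (he2 π) hP).2 ⟨s₁, s₂, s₃, h12, h23, ha, hb, hPs⟩)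
  · intro π π' h
    have hee : e π = e π' := congrArg Subtype.val h
    refine Subtype.ext (Equiv.ext fun i => ?_)
    by_cases hi : InY τ π₀ i (π₀ i)
    · obtain ⟨j, rfl⟩ := (hc.col i).1 hi
      have h1 := he2 π ((e π).symm j)
      have h2 := he2 π' ((e π).symm j)
      rw [← hee] at h2
      rw [Equiv.apply_symm_apply] at h1 h2
      rw [h1, h2]
    · rw [(π.2.1 i).2 hi, (π'.2.1 i).2 hi]
  · rintro ⟨e', h1, h2⟩
    obtain ⟨π, hπ, hπe⟩ := hc.exists_rel h1
    refine ⟨⟨π, hπ, fun h => ?_⟩, Subtype.ext (Equiv.ext fun s => ?_)⟩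
    · obtain ⟨s₁, s₂, s₃, h12, h23, ha, hb, hPs⟩ := (hc.containsPat_iff hk hπ hπe hP).1 h
      exact h2 s₁ s₂ s₃ h12 h23 ha hb hPs
    · refine hc.col_mono.injective (π.injective ?_)
      rw [hπe]
      exact he2 ⟨π, _⟩ s

end OneClass

/-- A comparison valid on all boards, and strict on the board of one class, gives a strict
comparison for permutations by summing over the classes. -/
lemma SnCard_lt {τ : Perm (Fin k)} (hk : 1 ≤ k) {σ σ' : Perm (Fin 3)}
    {P P' : ℕ → ℕ → ℕ → Prop} (hP : Encodes σ P) (hP' : Encodes σ' P')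
    (hle : ∀ (t : ℕ) (Y : Fin t → Fin t → Prop), IsBoard Y → cnt t Y P ≤ cnt t Y P')
    {π₀ : Perm (Fin n)} {t : ℕ} {colE rowE : Fin t → Fin n} (hc : Coords τ π₀ colE rowE)
    (hlt : cnt t (classBoard τ π₀ colE rowE) P < cnt t (classBoard τ π₀ colE rowE) P') :
    SnCard n (blockSum σ τ) < SnCard n (blockSum σ' τ) := by
  classical
  let S := classSetoid τ hk n
  have key : ∀ ρ : Perm (Fin (3 + k)), SnCard n ρ =
      ∑ q : Quotient S, Nat.card {π // Rel τ q.out π ∧ ¬ ContainsPat π ρ} := by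
    intro ρ
    rw [SnCard, ← Nat.card_sigma]
    refine Nat.card_congr
      { toFun := fun π => ⟨Quotient.mk S π.1, ⟨π.1, Quotient.mk_out (s := S) π.1, π.2⟩⟩
        invFun := fun q => ⟨q.2.1, q.2.2.2⟩
        left_inv := fun π => rfl
        right_inv := ?_ }
    rintro ⟨q, π, hπ, hn⟩
    have : Quotient.mk S π = q := by
      rw [← Quotient.out_eq q]
      exact (Quotient.sound hπ).symm
    subst this
    rfl
  rw [key, key]
  refine Finset.sum_lt_sum (fun q _ => ?_) ⟨Quotient.mk S π₀, Finset.mem_univ _, ?_⟩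
  · obtain ⟨t, c, r, h⟩ := Coords.exists_coords τ q.out
    rw [h.card_class hk hP, h.card_class hk hP']
    exact hle _ _ h.isBoard
  · have hq : ∀ π, Rel τ (Quotient.mk S π₀).out π ↔ Rel τ π₀ π := fun π => by
      have h : Rel τ (Quotient.mk S π₀).out π₀ := Quotient.mk_out (s := S) π₀
      exact ⟨fun h' => S.trans (S.symm h) h', fun h' => S.trans h h'⟩
    simp only [hq]
    rw [hc.card_class hk hP, hc.card_class hk hP']
    exact hlt


/-! ### A permutation whose board is the corner board -/

section Witness

variable {k : ℕ} (τ : Perm (Fin k))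

/-- `τ` as a function on `ℕ`, with junk value `0` at arguments `≥ k`. -/
def natPerm (a : ℕ) : ℕ := if h : a < k then τ ⟨a, h⟩ else 0

lemma natPerm_val (s : Fin k) : natPerm τ s = τ s := by simp [natPerm]

lemma natPerm_lt {a : ℕ} (h : a < k) : natPerm τ a < k := by
  rw [natPerm, dif_pos h]; exact (τ _).2

lemma natPerm_inj {a b : ℕ} (ha : a < k) (hb : b < k) (h : natPerm τ a = natPerm τ b) :
    a = b := by
  rw [natPerm, natPerm, dif_pos ha, dif_pos hb] at h
  exact congrArg Fin.val (τ.injective (Fin.ext h))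

/-- In one-line notation, starting from zero: `k, 2k+1, 2k+2, 2k+3`, a copy of `τ` on the
values `0, …, k-1`, then `2k+4`, a copy of `τ` on the values `k+1, …, 2k`, and fixed points.
The second copy lies below all inner dots but the first, so the only cell of the board that is
missing is the one in the column of `2k+4` and the row of `k`. -/
def witnessVal (c : ℕ) : ℕ :=
  if c = 0 then k else if c ≤ 3 then 2 * k + c else if c < k + 4 then natPerm τ (c - 4)
  else if c = k + 4 then 2 * k + 4 else if c < 2 * k + 5 then k + 1 + natPerm τ (c - (k + 5))
  else c

lemma witnessVal_lt {n : ℕ} (hn : 2 * k + 5 ≤ n) {c : ℕ} (hc : c < n) : witnessVal τ c < n := by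
  have h1 := @natPerm_lt k τ (c - 4)
  have h2 := @natPerm_lt k τ (c - (k + 5))
  unfold witnessVal
  split_ifs <;> omega

lemma witnessVal_inj {c d : ℕ} (h : witnessVal τ c = witnessVal τ d) : c = d := by
  have h1 := @natPerm_lt k τ (c - 4)
  have h2 := @natPerm_lt k τ (c - (k + 5))
  have h3 := @natPerm_lt k τ (d - 4)
  have h4 := @natPerm_lt k τ (d - (k + 5))
  have h5 := @natPerm_inj k τ (c - 4) (d - 4)
  have h6 := @natPerm_inj k τ (c - (k + 5)) (d - (k + 5))
  unfold witnessVal at h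
  split_ifs at h <;> omega

/-- The permutation with values `witnessVal`. -/
noncomputable def witness {n : ℕ} (hn : 2 * k + 5 ≤ n) : Perm (Fin n) :=
  Equiv.ofBijective (fun c => ⟨witnessVal τ c, witnessVal_lt τ hn c.2⟩)
    (Finite.injective_iff_bijective.1 fun _ _ h =>
      Fin.ext (witnessVal_inj τ (congrArg Fin.val h)))

lemma witness_val {n : ℕ} (hn : 2 * k + 5 ≤ n) (c : Fin n) :
    (witness τ hn c : ℕ) = witnessVal τ c := rfl

lemma inY_of_left {n : ℕ} (hn : 2 * k + 5 ≤ n) {i h : Fin n} (hi : (i : ℕ) ≤ 3)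
    (hh : k ≤ (h : ℕ)) : InY τ (witness τ hn) i h := by
  have hv : ∀ s : Fin k, witnessVal τ (4 + s) = τ s := fun s => by
    have := s.2
    rw [← natPerm_val, witnessVal, if_neg (by omega), if_neg (by omega), if_pos (by omega)]
    congr 1
    omega
  refine ⟨fun s => ⟨4 + s, by omega⟩, fun s t h => ?_, fun s t => ?_, fun s => ⟨?_, ?_⟩⟩
  · rw [Fin.lt_def] at *; simpa using h
  · rw [Fin.lt_def, Fin.lt_def, witness_val, witness_val, hv, hv]
  · rw [Fin.lt_def]; simp only; omega
  · rw [Fin.lt_def, witness_val, hv]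
    have := (τ s).2
    omega

lemma inY_of_middle {n : ℕ} (hn : 2 * k + 5 ≤ n) {i h : Fin n} (hi : (i : ℕ) ≤ k + 4)
    (hh : 2 * k + 1 ≤ (h : ℕ)) : InY τ (witness τ hn) i h := by
  have hv : ∀ s : Fin k, witnessVal τ (k + 5 + s) = k + 1 + τ s := fun s => by
    have := s.2
    rw [← natPerm_val, witnessVal, if_neg (by omega), if_neg (by omega), if_neg (by omega),
      if_neg (by omega), if_pos (by omega)]
    congr 2
    omega
  refine ⟨fun s => ⟨k + 5 + s, by omega⟩, fun s t h => ?_, fun s t => ?_, fun s => ⟨?_, ?_⟩⟩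
  · rw [Fin.lt_def] at *; simpa using h
  · rw [Fin.lt_def, Fin.lt_def, witness_val, witness_val, hv, hv]; omega
  · rw [Fin.lt_def]; simp only; omega
  · rw [Fin.lt_def, witness_val, hv]
    have := (τ s).2
    omega

/-- An occurrence of `τ` to the right of column `i` uses a column `≥ i + k`. -/
lemma not_inY {n : ℕ} (hk : 1 ≤ k) (hn : 2 * k + 5 ≤ n) {i h : Fin n}
    (H : ∀ c, (i : ℕ) + k ≤ c → (h : ℕ) ≤ witnessVal τ c) : ¬ InY τ (witness τ hn) i h := by
  rintro ⟨f, hf, -, hr⟩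
  have key : ∀ (s : ℕ) (hs : s < k), (i : ℕ) + 1 + s ≤ f ⟨s, hs⟩ := by
    intro s
    induction s with
    | zero => intro hs; have := (hr ⟨0, hs⟩).1; rw [Fin.lt_def] at this; omega
    | succ s ih =>
      intro hs
      have h1 := ih (by omega)
      have h2 : f ⟨s, by omega⟩ < f ⟨s + 1, hs⟩ := hf (by simp [Fin.lt_def])
      rw [Fin.lt_def] at h2
      omega
  have h1 := key (k - 1) (by omega)
  have h2 := (hr ⟨k - 1, by omega⟩).2
  rw [Fin.lt_def, witness_val] at h2
  have h3 : (i : ℕ) + k ≤ f ⟨k - 1, Nat.sub_lt hk one_pos⟩ := by omega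
  have := H _ h3
  omega

/-- The columns of the inner dots of `witness`. -/
def witnessCol {n : ℕ} (hn : 2 * k + 5 ≤ n) : Fin 5 → Fin n :=
  ![⟨0, by omega⟩, ⟨1, by omega⟩, ⟨2, by omega⟩, ⟨3, by omega⟩, ⟨k + 4, by omega⟩]

/-- The rows of the inner dots of `witness`. -/
def witnessRow {n : ℕ} (hn : 2 * k + 5 ≤ n) : Fin 5 → Fin n :=
  ![⟨k, by omega⟩, ⟨2 * k + 1, by omega⟩, ⟨2 * k + 2, by omega⟩, ⟨2 * k + 3, by omega⟩,
    ⟨2 * k + 4, by omega⟩]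

lemma witness_witnessCol {n : ℕ} (hn : 2 * k + 5 ≤ n) (j : Fin 5) :
    witness τ hn (witnessCol hn j) = witnessRow hn j := by
  rw [Fin.ext_iff, witness_val]
  fin_cases j <;> simp [witnessCol, witnessRow, witnessVal]

lemma classBoard_witness {n : ℕ} (hk : 1 ≤ k) (hn : 2 * k + 5 ≤ n) :
    classBoard τ (witness τ hn) (witnessCol hn) (witnessRow hn) = cornerBoard := by
  have hcol : ∀ i : Fin 5, i ≠ 4 → (witnessCol hn i : ℕ) ≤ 3 := by
    intro i hi; fin_cases i <;> simp [witnessCol] at hi ⊢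
  have hrow : ∀ s : Fin 5, k ≤ (witnessRow hn s : ℕ) := by
    intro s; fin_cases s <;> simp [witnessRow] <;> omega
  have hrow' : ∀ s : Fin 5, s ≠ 0 → 2 * k + 1 ≤ (witnessRow hn s : ℕ) := by
    intro s hs; fin_cases s <;> simp [witnessRow] at hs ⊢
  funext i s
  rw [classBoard, cornerBoard, eq_iff_iff]
  by_cases hi : i = 4
  · by_cases hs : s = 0
    · subst hi hs
      refine iff_of_false (not_inY τ hk hn fun c hc => ?_) (by simp)
      change k + 4 + k ≤ c at hc
      change k ≤ _
      unfold witnessVal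
      split_ifs <;> omega
    · refine iff_of_true (inY_of_middle τ hn ?_ (hrow' s hs)) (by simp [hs])
      subst hi
      exact le_rfl
  · exact iff_of_true (inY_of_left τ hn (hcol i hi) (hrow s)) (by simp [hi])

lemma coords_witness {n : ℕ} (hk : 1 ≤ k) (hn : 2 * k + 5 ≤ n) :
    Coords τ (witness τ hn) (witnessCol hn) (witnessRow hn) := by
  have hcol : ∀ i, InY τ (witness τ hn) i (witness τ hn i) ↔ ∃ j, witnessCol hn j = i := by
    intro i
    constructor
    · intro h
      by_contra! hne
      have h0 := hne 0
      have h1 := hne 1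
      have h2 := hne 2
      have h3 := hne 3
      have h4 := hne 4
      simp only [witnessCol, Fin.ext_iff, ne_eq] at h0 h1 h2 h3 h4
      change ¬ 0 = (i : ℕ) at h0
      change ¬ 1 = (i : ℕ) at h1
      change ¬ 2 = (i : ℕ) at h2
      change ¬ 3 = (i : ℕ) at h3
      change ¬ k + 4 = (i : ℕ) at h4
      refine not_inY τ hk hn (fun c hc => ?_) h
      rw [witness_val]
      have e1 := @natPerm_lt k τ (i - 4)
      have e2 := @natPerm_lt k τ (i - (k + 5))
      unfold witnessVal
      split_ifs <;> omega
    · rintro ⟨j, rfl⟩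
      rw [witness_witnessCol]
      have := classBoard_witness τ hk hn
      change classBoard τ (witness τ hn) (witnessCol hn) (witnessRow hn) j j
      rw [this]
      rintro ⟨rfl, h⟩
      exact absurd h (by decide)
  refine ⟨?_, ?_, hcol, fun h => ?_⟩
  · rw [Fin.strictMono_iff_lt_succ]
    intro i
    fin_cases i <;> simp [witnessCol, Fin.lt_def]
  · rw [Fin.strictMono_iff_lt_succ]
    intro i
    fin_cases i <;> simp [witnessRow, Fin.lt_def] <;> omega
  · simp only [hcol]
    constructor
    · rintro ⟨i, ⟨j, rfl⟩, rfl⟩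
      exact ⟨j, (witness_witnessCol τ hn j).symm⟩
    · rintro ⟨j, rfl⟩
      exact ⟨_, ⟨j, rfl⟩, witness_witnessCol τ hn j⟩

end Witness

end BoardCount

open BoardCount

theorem stmt4 (k : ℕ) (hk : 1 ≤ k) (τ : Equiv.Perm (Fin k)) (n : ℕ) (hn : 2 * k + 5 ≤ n) :
    SnCard n (blockSum p213 τ) < SnCard n (blockSum p123 τ) ∧
    SnCard n (blockSum p123 τ) < SnCard n (blockSum p312 τ) := by
  have hc := coords_witness τ hk hn
  constructor
  · refine SnCard_lt hk encodes_213 encodes_123 (fun _ _ => cnt_213_le_123) hc ?_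
    rw [classBoard_witness τ hk hn]
    exact cornerBoard_strict.1
  · refine SnCard_lt hk encodes_123 encodes_312 (fun _ _ => cnt_123_le_312) hc ?_
    rw [classBoard_witness τ hk hn]
    exact cornerBoard_strict.2
end

section
/- For all n ≥ 7, the strict inequalities |S_n(3241)| < |S_n(2341)| < |S_n(4231)| hold. -/
/-!
The chain proved is `|S_n(3241)| < |S_n(4321)| = |S_n(2341)|` and `|S_n(4321)| < |S_n(4231)|`.

For the first part pass to complements: the patterns become `2314`, `1234`, `3214`, that is, one of
`231`, `123`, `321` followed by a new maximum. Build a permutation by inserting its letters in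
increasing order. Inserting a new maximum is legal precisely when the letters to its left avoid the
pattern of length three, so the permutations are counted by `growths`. Following only the prefix up
to the rightmost slot still to be used turns this count into `runs` (`growths_eq`), a process in
which the word avoids the short pattern and either receives a new maximum or is cut to a prefix.

* For `123` the process depends only on the length of the word and of its longest decreasing prefix;
  this gives the numerical recursion `EB` (`runs123_eq`).
* For `231` the number of legal slots obeys the same rules, except that a cut may lose more slots, so
  `EB` is an upper bound (`runs231_le`), strict from `n = 7` on (`runs231_lt`).
* For `321` the process depends only on the ascents of the word, which are encoded by a lattice path
  (`runs321_eq`). Summed over all ballot words of a given shape, the path process agrees with `EB`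
  (`TT_EP`), and at the empty word this gives equality with `123`.

For the comparison of `4321` with `4231`, sort permutations by their left-to-right maxima and
right-to-left minima with their positions (`Same`). A class contains at most one `4321`-avoider, since
the remaining entries of such a permutation increase (`Same.eq`), and at least one `4231`-avoider,
since undoing occurrences of `4231` by exchanging their inner entries stays in the class and terminates
(`exists_same_avoiding`). For `n ≥ 7` some class contains two `4231`-avoiders (`SnCard_p4321_lt`).
-/

open Equiv

def p3241 : Equiv.Perm (Fin 4) :=
  ⟨![2, 1, 3, 0], ![3, 1, 0, 2], by intro x; fin_cases x <;> rfl, by intro x; fin_cases x <;> rfl⟩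
def p2341 : Equiv.Perm (Fin 4) :=
  ⟨![1, 2, 3, 0], ![3, 0, 1, 2], by intro x; fin_cases x <;> rfl, by intro x; fin_cases x <;> rfl⟩
def p4231 : Equiv.Perm (Fin 4) :=
  ⟨![3, 1, 2, 0], ![3, 1, 2, 0], by intro x; fin_cases x <;> rfl, by intro x; fin_cases x <;> rfl⟩

namespace PatternOrder

/-! ### Growing words by insertion of maxima -/

/-- Insert the letter `N` into the word `w` at position `c`. -/
def ins (c N : ℕ) (w : List ℕ) : List ℕ := w.take c ++ N :: w.drop c

/-- Number of runs of length `m` of the following process on words, ending at the empty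
word. At time `N` the current word `w` either receives the new maximal letter `N` in a slot `c`
allowed by `al`, or is replaced by one of its prefixes. The word records the prefix of a partial
permutation up to the rightmost slot that is still to be used. -/
def runs (al : ℕ → List ℕ → Prop) [∀ c w, Decidable (al c w)] : ℕ → ℕ → List ℕ → ℕ
  | 0, _, w => if w = [] then 1 else 0
  | m + 1, N, w =>
    (∑ c ∈ Finset.range (w.length + 1), if al c w then runs al m (N + 1) (ins c N w) else 0) +
      ∑ b ∈ Finset.range (w.length + 1), runs al m (N + 1) (w.take b)

open Classical in
/-- Number of ways to insert `m` further letters `N, N + 1, …` one at a time into the word `u`, where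
each letter may be inserted only in a slot whose left part satisfies `ok`. -/
noncomputable def growths (ok : List ℕ → Prop) : ℕ → ℕ → List ℕ → ℕ
  | 0, _, _ => 1
  | m + 1, N, u =>
    ∑ c ∈ Finset.range (u.length + 1),
      if ok (u.take c) then growths ok m (N + 1) (ins c N u) else 0

lemma length_ins (c N : ℕ) (w : List ℕ) : (ins c N w).length = w.length + 1 := by
  simp only [ins, List.length_append, List.length_cons, List.length_take, List.length_drop]
  omega

lemma mem_ins {c N x : ℕ} {w : List ℕ} : x ∈ ins c N w ↔ x = N ∨ x ∈ w := by
  have h : x ∈ w ↔ x ∈ w.take c ∨ x ∈ w.drop c := by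
    rw [← List.mem_append, List.take_append_drop]
  simp only [ins, List.mem_append, List.mem_cons, h]
  tauto

lemma ins_lt {c N : ℕ} {w : List ℕ} (h : ∀ x ∈ w, x < N) : ∀ x ∈ ins c N w, x < N + 1 := by
  intro x hx
  rcases mem_ins.1 hx with rfl | hx
  · omega
  · have := h x hx; omega

lemma take_lt {b N : ℕ} {w : List ℕ} (h : ∀ x ∈ w, x < N) : ∀ x ∈ w.take b, x < N :=
  fun x hx => h x (List.mem_of_mem_take hx)

lemma take_ins_of_le {b c N : ℕ} {u : List ℕ} (hb : b ≤ c) (hc : c ≤ u.length) :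
    (ins c N u).take b = u.take b := by
  rw [ins, List.take_append_of_le_length (by simp; omega), List.take_take, min_eq_left hb]

lemma take_ins_of_ge {b c N : ℕ} {u : List ℕ} (hb : c ≤ b) (hc : c ≤ u.length) :
    (ins c N u).take (b + 1) = ins c N (u.take b) := by
  have h1 : (u.take c).length = c := by simp [hc]
  rw [ins, ins, List.take_append, List.take_of_length_le (by omega), h1,
    show b + 1 - c = (b - c) + 1 by omega, List.take_succ_cons, List.take_take, min_eq_left hb,
    List.drop_take]

lemma sum_range_split (n c : ℕ) (hc : c ≤ n) (g : ℕ → ℕ) :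
    ∑ b ∈ Finset.range (n + 2), g b =
      ∑ b ∈ Finset.range (n + 1), ((if b ≤ c then g b else 0) + if c ≤ b then g (b + 1) else 0) := by
  induction n, hc using Nat.le_induction with
  | base =>
    rw [Finset.sum_range_succ, Finset.sum_range_succ, Finset.sum_range_succ]
    have h : ∑ b ∈ Finset.range c, ((if b ≤ c then g b else 0) + if c ≤ b then g (b + 1) else 0) =
        ∑ b ∈ Finset.range c, g b := by
      refine Finset.sum_congr rfl fun x hx => ?_
      have := Finset.mem_range.1 hx
      rw [if_pos (by omega), if_neg (by omega), add_zero]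
    rw [h]
    simp
    omega
  | succ n hn ih =>
    rw [Finset.sum_range_succ, ih, Finset.sum_range_succ _ (n + 1), if_neg (by omega),
      if_pos (by omega), zero_add]

lemma sum_range_cut (n b : ℕ) (hb : b ≤ n) (g : ℕ → ℕ) :
    ∑ c ∈ Finset.range (b + 1), g c = ∑ c ∈ Finset.range (n + 1), if c ≤ b then g c else 0 := by
  rw [← Finset.sum_filter]
  congr 1
  ext x
  simp
  omega

open Classical in
/-- Decompose a growth of `u` according to the rightmost slot `b` that will still be used: only
the prefix `u.take b` matters for the future, and `runs` follows this prefix. The hypotheses say that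
`ok` is inherited by prefixes and that `al` is the local condition for keeping `ok`. -/
theorem growths_eq (ok : List ℕ → Prop) (al : ℕ → List ℕ → Prop) [∀ c w, Decidable (al c w)]
    (hnil : ok []) (htake : ∀ b w, ok w → ok (w.take b))
    (hins : ∀ c N w, (∀ x ∈ w, x < N) → c ≤ w.length → (ok (ins c N w) ↔ ok w ∧ al c w))
    (m N : ℕ) (u : List ℕ) (hu : ∀ x ∈ u, x < N) :
    growths ok m N u =
      ∑ b ∈ Finset.range (u.length + 1), if ok (u.take b) then runs al m N (u.take b) else 0 := by
  induction m generalizing N u with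
  | zero =>
    simp only [growths, runs]
    rw [Finset.sum_eq_single 0]
    · simp [hnil]
    · intro b hb hb0
      have : u ≠ [] := by
        rintro rfl
        simp at hb
        exact hb0 hb
      simp [List.take_eq_nil_iff, hb0, this]
    · simp
  | succ m ih =>
    have hmono : ∀ {b c}, b ≤ c → ok (u.take c) → ok (u.take b) := by
      intro b c hbc h
      have := htake b _ h
      rwa [List.take_take, min_eq_left hbc] at this
    have hL : growths ok (m + 1) N u =
        ∑ c ∈ Finset.range (u.length + 1), ∑ b ∈ Finset.range (u.length + 1),
          ((if b ≤ c ∧ ok (u.take c) then runs al m (N + 1) (u.take b) else 0) +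
          if c ≤ b ∧ ok (u.take b) ∧ al c (u.take b)
            then runs al m (N + 1) (ins c N (u.take b)) else 0) := by
      rw [growths]
      refine Finset.sum_congr rfl fun c hc => ?_
      have hc : c ≤ u.length := by have := Finset.mem_range.1 hc; omega
      by_cases hok : ok (u.take c)
      · rw [if_pos hok, ih _ _ (ins_lt hu), length_ins, sum_range_split _ c hc]
        refine Finset.sum_congr rfl fun b hb => ?_
        have hb : b ≤ u.length := by have := Finset.mem_range.1 hb; omega
        congr 1
        · by_cases h : b ≤ c
          · simp [h, hok, take_ins_of_le h hc, hmono h hok]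
          · simp [h]
        · by_cases h : c ≤ b
          · have h2 := hins c N (u.take b) (take_lt hu) (by simp; omega)
            simp [h, take_ins_of_ge h hc, h2]
          · simp [h]
      · rw [if_neg hok]
        symm
        refine Finset.sum_eq_zero fun b hb => ?_
        rw [if_neg (fun h => hok h.2), if_neg (fun h => hok (hmono h.1 h.2.1)), add_zero]
    rw [hL, Finset.sum_congr rfl fun c _ => Finset.sum_add_distrib, Finset.sum_add_distrib, add_comm]
    rw [Finset.sum_comm, ← Finset.sum_add_distrib]
    refine Finset.sum_congr rfl fun b hb => ?_
    have hb : b ≤ u.length := by have := Finset.mem_range.1 hb; omega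
    by_cases hok : ok (u.take b)
    · rw [if_pos hok, runs]
      have hl : (u.take b).length = b := by simp [hb]
      rw [hl, sum_range_cut _ _ hb, sum_range_cut _ _ hb]
      congr 1
      · refine Finset.sum_congr rfl fun c hc => ?_
        by_cases h : c ≤ b <;> simp [h, hok]
      · refine Finset.sum_congr rfl fun c hc => ?_
        by_cases h : c ≤ b
        · simp [h, hok, List.take_take]
        · simp [h]
    · rw [if_neg hok]
      simp [hok]

/-! ### The processes for 123 and 231 -/

/-- The numerical process to which the words avoiding `123` reduce: `n` is the length of the word
and `j + 1` the number of slots in which the next maximal letter may be inserted. -/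
def EB : ℕ → ℕ → ℕ → ℕ
  | 0, n, _ => if n = 0 then 1 else 0
  | m + 1, n, j =>
    (∑ i ∈ Finset.range (j + 1), EB m (n + 1) (i + 1)) +
      ∑ b ∈ Finset.range (n + 1), EB m b (min j b)

lemma EB_mono (m n : ℕ) {j j' : ℕ} (h : j ≤ j') : EB m n j ≤ EB m n j' := by
  induction m generalizing n j j' with
  | zero => rfl
  | succ m ih =>
    rw [EB, EB]
    refine add_le_add ?_ (Finset.sum_le_sum fun b _ => ih _ (min_le_min_right _ h))
    exact Finset.sum_le_sum_of_subset (Finset.range_mono (by omega))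

/-- `a, b, c` is an occurrence of `123`. -/
def P123 (a b c : ℕ) : Prop := a < b ∧ b < c
/-- `a, b, c` is an occurrence of `321`. -/
def P321 (a b c : ℕ) : Prop := c < b ∧ b < a
/-- `a, b, c` is an occurrence of `231`. The second inequality is weak; for words without repeated
letters this makes no difference, and it spares a distinctness hypothesis below. -/
def P231 (a b c : ℕ) : Prop := c < a ∧ a ≤ b

/-- No subsequence `a, b, c` of `w` satisfies `P`. -/
def Avoids (P : ℕ → ℕ → ℕ → Prop) (w : List ℕ) : Prop := w.Triplewise fun a b c => ¬ P a b c

lemma Avoids.take {P : ℕ → ℕ → ℕ → Prop} (b : ℕ) (w : List ℕ) (h : Avoids P w) :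
    Avoids P (w.take b) := by
  rw [Avoids, ← List.take_append_drop b w, List.triplewise_append] at h
  exact h.1

lemma avoids_nil {P : ℕ → ℕ → ℕ → Prop} : Avoids P [] := List.Triplewise.nil

lemma avoids_ins {P : ℕ → ℕ → ℕ → Prop} {c N : ℕ} {w : List ℕ} :
    Avoids P (ins c N w) ↔ Avoids P w ∧ ((w.take c).Pairwise fun x y => ¬ P x y N) ∧
      ((w.drop c).Pairwise fun x y => ¬ P N x y) ∧
      ∀ a ∈ w.take c, ∀ b ∈ w.drop c, ¬ P a N b := by
  have h : Avoids P w ↔ Avoids P (w.take c ++ w.drop c) := by rw [List.take_append_drop]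
  rw [h, ins, Avoids, Avoids, List.triplewise_append, List.triplewise_append]
  simp only [List.triplewise_cons, List.pairwise_cons, List.mem_cons, forall_eq_or_imp]
  constructor
  · rintro ⟨h1, ⟨h2, h3⟩, h4, h5, h6⟩
    exact ⟨⟨h1, h3, fun a ha => (h4 a ha).2, h6⟩, h5, h2, fun a ha => (h4 a ha).1⟩
  · rintro ⟨⟨h1, h3, h4, h6⟩, h5, h2, h7⟩
    exact ⟨h1, ⟨h2, h3⟩, fun a ha => ⟨h7 a ha, h4 a ha⟩, h5, h6⟩

/-- Inserting a new maximum in slot `c` of `w` creates no `123`. -/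
abbrev al123 (c : ℕ) (w : List ℕ) : Prop := (w.take c).Pairwise fun x y => y ≤ x
/-- Inserting a new maximum in slot `c` of `w` creates no `321`. -/
abbrev al321 (c : ℕ) (w : List ℕ) : Prop := (w.drop c).Pairwise fun x y => x ≤ y
/-- Inserting a new maximum in slot `c` of `w` creates no `231`. -/
abbrev al231 (c : ℕ) (w : List ℕ) : Prop := ∀ x ∈ w.take c, ∀ y ∈ w.drop c, x ≤ y

lemma pairwise_iff_of_mem {R S : ℕ → ℕ → Prop} {l : List ℕ}
    (h : ∀ x ∈ l, ∀ y ∈ l, (R x y ↔ S x y)) : l.Pairwise R ↔ l.Pairwise S :=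
  List.Pairwise.iff_of_mem fun {_ _} hx hy => h _ hx _ hy

lemma avoids123_ins (c N : ℕ) (w : List ℕ) (hw : ∀ x ∈ w, x < N) (_ : c ≤ w.length) :
    Avoids P123 (ins c N w) ↔ Avoids P123 w ∧ al123 c w := by
  have ht := take_lt (b := c) hw
  have hd : ∀ x ∈ w.drop c, x < N := fun x hx => hw x (List.mem_of_mem_drop hx)
  rw [avoids_ins]
  refine and_congr_right fun _ => ?_
  rw [pairwise_iff_of_mem (S := fun x y => y ≤ x)]
  · refine and_iff_left ⟨?_, ?_⟩
    · refine List.pairwise_of_forall_mem_list fun x hx y hy => ?_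
      have := hd x hx
      simp [P123]; omega
    · intro a ha b hb
      have := hd b hb
      simp [P123]; omega
  · intro x hx y hy
    have := ht y hy
    simp only [P123]; omega

lemma avoids321_ins (c N : ℕ) (w : List ℕ) (hw : ∀ x ∈ w, x < N) (_ : c ≤ w.length) :
    Avoids P321 (ins c N w) ↔ Avoids P321 w ∧ al321 c w := by
  have ht := take_lt (b := c) hw
  have hd : ∀ x ∈ w.drop c, x < N := fun x hx => hw x (List.mem_of_mem_drop hx)
  rw [avoids_ins]
  refine and_congr_right fun _ => ?_
  rw [pairwise_iff_of_mem (l := w.drop c) (S := fun x y => x ≤ y)]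
  · constructor
    · exact fun h => h.2.1
    · refine fun h => ⟨?_, h, ?_⟩
      · refine List.pairwise_of_forall_mem_list fun x hx y hy => ?_
        have := ht y hy
        simp [P321]; omega
      · intro a ha b hb
        have := ht a ha
        simp [P321]; omega
  · intro x hx y hy
    have := hd x hx
    simp only [P321]; omega

lemma avoids231_ins (c N : ℕ) (w : List ℕ) (hw : ∀ x ∈ w, x < N) (_ : c ≤ w.length) :
    Avoids P231 (ins c N w) ↔ Avoids P231 w ∧ al231 c w := by
  have ht := take_lt (b := c) hw
  have hd : ∀ x ∈ w.drop c, x < N := fun x hx => hw x (List.mem_of_mem_drop hx)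
  rw [avoids_ins]
  refine and_congr_right fun _ => ?_
  constructor
  · intro h a ha b hb
    have := h.2.2 a ha b hb
    have := ht a ha
    simp only [P231] at *; omega
  · refine fun h => ⟨?_, ?_, ?_⟩
    · refine List.pairwise_of_forall_mem_list fun x hx y hy => ?_
      have := ht x hx
      simp [P231]; omega
    · refine List.pairwise_of_forall_mem_list fun x hx y hy => ?_
      have := hd x hx
      simp [P231]; omega
    · intro a ha b hb
      have := h a ha b hb
      simp [P231]; omega

/-- For `123`, the allowed slots of `w` are exactly `0, …, j`, where `j` is the length of the longest
decreasing prefix. Inserting in slot `c > 0` makes this length `c`, inserting in slot `0` makes it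
`j + 1`, and cutting to the first `b` letters makes it `min j b`. -/
theorem runs123_eq (m N j : ℕ) (w : List ℕ) (hw : ∀ x ∈ w, x < N) (hj : j ≤ w.length)
    (hal : ∀ c ≤ w.length, al123 c w ↔ c ≤ j) : runs al123 m N w = EB m w.length j := by
  induction m generalizing N j w with
  | zero => simp [runs, EB]
  | succ m ih =>
    rw [runs, EB]
    congr 1
    · have h1 : ∀ c ∈ Finset.range (w.length + 1),
          (if al123 c w then runs al123 m (N + 1) (ins c N w) else 0) =
            if c ≤ j then runs al123 m (N + 1) (ins c N w) else 0 := by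
        intro c hc
        have hc : c ≤ w.length := by have := Finset.mem_range.1 hc; omega
        simp only [hal c hc]
      rw [Finset.sum_congr rfl h1, ← sum_range_cut _ _ hj, Finset.sum_range_succ',
        Finset.sum_range_succ]
      congr 1
      · refine Finset.sum_congr rfl fun c hc => ?_
        have hc : c + 1 ≤ j := by have := Finset.mem_range.1 hc; omega
        rw [ih (N + 1) (c + 1) _ (ins_lt hw) (by rw [length_ins]; omega), length_ins]
        intro d hd
        rw [length_ins] at hd
        by_cases hdc : d ≤ c + 1
        · rw [al123, take_ins_of_le hdc (by omega)]
          exact iff_of_true ((hal d (by omega)).2 (by omega)) hdc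
        · refine iff_of_false ?_ hdc
          obtain ⟨d, rfl⟩ : ∃ e, d = e + 1 := ⟨d - 1, by omega⟩
          rw [al123, take_ins_of_ge (by omega) (by omega), ins, List.pairwise_append]
          rintro ⟨-, -, h⟩
          obtain ⟨x, t, rfl⟩ : ∃ x t, w = x :: t := by
            cases w with
            | nil => simp at hj; omega
            | cons x t => exact ⟨x, t, rfl⟩
          have h2 := hw x (by simp)
          obtain ⟨d, rfl⟩ : ∃ e, d = e + 1 := ⟨d - 1, by omega⟩
          have := h x (by simp) N (by simp)
          omega
      · rw [ih (N + 1) (j + 1) _ (ins_lt hw) (by rw [length_ins]; omega), length_ins]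
        intro d hd
        rw [length_ins] at hd
        cases d with
        | zero => simp [al123]
        | succ d =>
          have : al123 (d + 1) (ins 0 N w) ↔ al123 d w := by
            simp only [ins, al123, List.take_zero, List.drop_zero, List.nil_append,
              List.take_succ_cons, List.pairwise_cons]
            exact and_iff_right fun y hy => (take_lt hw y hy).le
          rw [this, hal d (by omega)]
          omega
    · refine Finset.sum_congr rfl fun b hb => ?_
      have hb : b ≤ w.length := by have := Finset.mem_range.1 hb; omega
      have hl : (w.take b).length = b := by simp [hb]
      rw [ih (N + 1) (min j b) _ (fun x hx => (take_lt hw x hx).trans (Nat.lt_succ_self _))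
        (by rw [hl]; omega), hl]
      intro c hc
      rw [hl] at hc
      have h2 : al123 c (w.take b) ↔ al123 c w := by
        rw [al123, List.take_take, min_eq_left hc]
      rw [h2, hal c (by omega)]
      omega

/-- Summing over the solutions of `p` below `n`, numbered consecutively from `1`. -/
lemma sum_count (p : ℕ → Prop) [DecidablePred p] (g : ℕ → ℕ) (n : ℕ) :
    (∑ c ∈ Finset.range n, if p c then g (Nat.count p (c + 1)) else 0) =
      ∑ i ∈ Finset.range (Nat.count p n), g (i + 1) := by
  induction n with
  | zero => simp
  | succ n ih =>
    rw [Finset.sum_range_succ, ih, Nat.count_succ]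
    by_cases h : p n
    · simp [h, Finset.sum_range_succ]
    · simp [h]

lemma count_congr_lt {p q : ℕ → Prop} [DecidablePred p] [DecidablePred q] {n : ℕ}
    (h : ∀ k < n, (p k ↔ q k)) : Nat.count p n = Nat.count q n := by
  rw [Nat.count_eq_card_filter_range, Nat.count_eq_card_filter_range]
  congr 1
  refine Finset.filter_congr fun x hx => h x (Finset.mem_range.1 hx)

/-- The number of slots of `w` in which a new maximum creates no `231`, i.e. the number of ways to
write `w` as a concatenation of two words with all letters of the first at most those of the second. -/
def cuts (w : List ℕ) : ℕ := Nat.count (fun c => al231 c w) (w.length + 1)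

lemma al231_length (w : List ℕ) : al231 w.length w := by simp [al231]

/-- A new maximum in slot `c` destroys the cuts of `w` beyond `c`, keeps the others and adds the cut
at the very end. -/
lemma cuts_ins {c N : ℕ} {w : List ℕ} (hw : ∀ x ∈ w, x < N) (hc : c ≤ w.length) :
    cuts (ins c N w) = Nat.count (fun c => al231 c w) (c + 1) + 1 := by
  have h1 : ∀ d < c + 1, (al231 d (ins c N w) ↔ al231 d w) := by
    intro d hd
    have hd' : (ins c N w).drop d = (w.take c).drop d ++ N :: w.drop c := by
      rw [ins, List.drop_append_of_le_length (by simp; omega)]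
    have hd'' : w.drop d = (w.take c).drop d ++ w.drop c := by
      rw [← List.drop_append_of_le_length (by simp; omega), List.take_append_drop]
    rw [al231, al231, take_ins_of_le (by omega) hc, hd', hd'']
    simp only [List.mem_append, List.mem_cons]
    constructor
    · intro h x hx y hy
      exact h x hx y (by tauto)
    · intro h x hx y hy
      rcases hy with hy | rfl | hy
      · exact h x hx y (Or.inl hy)
      · exact (take_lt hw x hx).le
      · exact h x hx y (Or.inr hy)
  have h2 : ∀ e, c + e ≤ w.length → Nat.count (fun d => al231 d (ins c N w)) (c + 1 + e) =
      Nat.count (fun c => al231 c w) (c + 1) := by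
    intro e
    induction e with
    | zero => intro _; exact count_congr_lt h1
    | succ e ih =>
      intro he
      rw [← add_assoc, Nat.count_succ, ih (by omega), if_neg, add_zero]
      intro h
      obtain ⟨y, hy⟩ : ∃ y, y ∈ w.drop (c + e) := by
        apply List.exists_mem_of_ne_nil
        simp; omega
      have h3 : N ∈ (ins c N w).take (c + 1 + e) := by
        rw [show c + 1 + e = (c + e) + 1 by omega, take_ins_of_ge (by omega) hc]
        exact mem_ins.2 (Or.inl rfl)
      have h4 : y ∈ (ins c N w).drop (c + 1 + e) := by
        have : (ins c N w).drop (c + 1 + e) = w.drop (c + e) := by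
          have h1 : (w.take c).length = c := by simp [hc]
          rw [ins, List.drop_append, List.drop_eq_nil_of_le (by omega), h1,
            show c + 1 + e - c = e + 1 by omega]
          simp
        rwa [this]
      have := h N h3 y h4
      have := hw y (List.mem_of_mem_drop hy)
      omega
  rw [cuts, Nat.count_succ, length_ins, if_pos (by rw [← length_ins c N w]; exact al231_length _)]
  have := h2 (w.length - c) (by omega)
  rw [show c + 1 + (w.length - c) = w.length + 1 by omega] at this
  rw [this]

lemma cuts_take {b : ℕ} {w : List ℕ} (hw : Avoids P231 w) (hb : b ≤ w.length) :
    cuts (w.take b) ≤ cuts w := by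
  have hl : (w.take b).length = b := by simp [hb]
  have h1 : ∀ t < b, al231 t (w.take b) → al231 t w := by
    intro t ht h x hx y hy
    have e : w = (w.take t) ++ ((w.take b).drop t ++ w.drop b) := by
      rw [← List.append_assoc]
      conv_rhs => rw [show w.take t = (w.take b).take t by rw [List.take_take, min_eq_left ht.le]]
      rw [List.take_append_drop, List.take_append_drop]
    have e2 : w.drop t = (w.take b).drop t ++ w.drop b := by
      rw [← List.drop_append_of_le_length (by simp; omega), List.take_append_drop]
    have hx' : x ∈ (w.take b).take t := by rwa [List.take_take, min_eq_left ht.le]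
    rw [e2, List.mem_append] at hy
    rcases hy with hy | hy
    · exact h x hx' y hy
    · obtain ⟨z, hz⟩ : ∃ z, z ∈ (w.take b).drop t := by
        apply List.exists_mem_of_ne_nil
        simp; omega
      have hxz := h x hx' z hz
      rw [Avoids, e, List.triplewise_append] at hw
      have h3 := List.pairwise_append.1 (hw.2.2.1 x hx)
      have h4 := h3.2.2 z hz y hy
      by_contra hlt
      exact h4 ⟨by omega, hxz⟩
  have h2 : Nat.count (fun c => al231 c (w.take b)) b ≤ Nat.count (fun c => al231 c w) b := by
    rw [Nat.count_eq_card_filter_range, Nat.count_eq_card_filter_range]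
    refine Finset.card_le_card fun x hx => ?_
    simp only [Finset.mem_filter, Finset.mem_range] at hx ⊢
    exact ⟨hx.1, h1 x hx.1 hx.2⟩
  have h3 : Nat.count (fun c => al231 c w) b ≤ Nat.count (fun c => al231 c w) w.length :=
    Nat.count_monotone _ hb
  rw [cuts, cuts, hl, Nat.count_succ, Nat.count_succ, if_pos (al231_length w)]
  split_ifs <;> omega

/-- Words avoiding `231` obey the rules of `EB` with `k + 1 = cuts w`, except that cutting to a
prefix of length `b` may leave fewer than `min k b + 1` cuts. Monotonicity of `EB` gives the
inequality. -/
theorem runs231_le (m N k : ℕ) (w : List ℕ) (hw : ∀ x ∈ w, x < N) (hav : Avoids P231 w)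
    (hk : cuts w = k + 1) : runs al231 m N w ≤ EB m w.length k := by
  induction m generalizing N k w with
  | zero => simp [runs, EB]
  | succ m ih =>
    rw [runs, EB]
    refine add_le_add ?_ ?_
    · rw [← hk, cuts, ← sum_count (fun c => al231 c w) (fun i => EB m (w.length + 1) i)]
      refine Finset.sum_le_sum fun c hc => ?_
      have hc : c ≤ w.length := by have := Finset.mem_range.1 hc; omega
      by_cases h : al231 c w
      · rw [if_pos h, if_pos h, ← length_ins c N w]
        exact ih _ _ _ (ins_lt hw) ((avoids231_ins c N w hw hc).2 ⟨hav, h⟩) (cuts_ins hw hc)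
      · rw [if_neg h, if_neg h]
    · refine Finset.sum_le_sum fun b hb => ?_
      have hb : b ≤ w.length := by have := Finset.mem_range.1 hb; omega
      have hl : (w.take b).length = b := by simp [hb]
      have h1 := cuts_take hav hb
      have h2 : cuts (w.take b) ≤ b + 1 := by
        rw [cuts, hl]; exact Nat.count_le _
      have h3 : 1 ≤ cuts (w.take b) := by
        rw [cuts, Nat.count_succ, if_pos (al231_length _)]; omega
      obtain ⟨k', hk'⟩ : ∃ k', cuts (w.take b) = k' + 1 := ⟨cuts (w.take b) - 1, by omega⟩
      have h4 := ih (N + 1) k' (w.take b)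
        (fun x hx => (take_lt hw x hx).trans (Nat.lt_succ_self _)) (hav.take b w) hk'
      rw [hl] at h4
      exact h4.trans (EB_mono _ _ (by omega))

lemma al231_map (c : ℕ) (w : List ℕ) : al231 c (w.map (· + 1)) ↔ al231 c w := by
  simp [al231, ← List.map_take, ← List.map_drop]

/-- Only the relative order of the letters matters. -/
lemma runs231_shift (m N : ℕ) (w : List ℕ) :
    runs al231 m (N + 1) (w.map (· + 1)) = runs al231 m N w := by
  induction m generalizing N w with
  | zero => simp [runs]
  | succ m ih =>
    rw [runs, runs, List.length_map]
    congr 1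
    · refine Finset.sum_congr rfl fun c _ => ?_
      have : ins c (N + 1) (w.map (· + 1)) = (ins c N w).map (· + 1) := by simp [ins]
      simp only [al231_map, this, ih]
    · refine Finset.sum_congr rfl fun b _ => ?_
      rw [← List.map_take, ih]

/-- The inequality `runs231_le` is strict for the empty word from `n = 7` on: it is checked by
evaluation for `n = 7`, and it propagates because a run may stay at the empty word for one step. -/
theorem runs231_lt (n : ℕ) (hn : 7 ≤ n) : runs al231 n 0 [] < EB n 0 0 := by
  induction n, hn using Nat.le_induction with
  | base => decide +kernel
  | succ m hm ih =>
    have h1 := runs231_shift m 0 []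
    have h2 := runs231_le m 1 1 [0] (by simp) (by simp [Avoids]) (by decide)
    rw [runs, EB]
    have h3 : al231 0 [] := by simp [al231]
    simp only [List.map_nil, List.length_nil, List.length_cons, zero_add, Finset.sum_range_one,
      List.take_nil, ins, List.drop_nil, List.nil_append, min_self, if_pos h3] at *
    omega

/-! ### The process on ballot words -/

/-- Sum of `F` over the words obtained from `q` by inserting a letter `true` after zero or more of
its leading letters `false`. Here and below a word over `Bool` is read as a lattice path, `true` and
`false` being up- and down-steps. -/
def R0 : List Bool → (List Bool → ℕ) → ℕ
  | [], F => F [true]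
  | true :: q, F => F (true :: true :: q)
  | false :: q, F => F (true :: false :: q) + R0 q fun z => F (false :: z)

/-- Sum of `F` over the words obtained from `q` by turning one of its leading letters `true` into
`false` and inserting a letter `true` into what follows as in `R0`. -/
def R1 : List Bool → (List Bool → ℕ) → ℕ
  | [], _ => 0
  | false :: _, _ => 0
  | true :: q, F => (R1 q fun z => F (true :: z)) + R0 q fun z => F (false :: z)

/-- The process on lattice paths to which the words avoiding `321` reduce. -/
def EP : ℕ → List Bool → ℕ
  | 0, q => if q = [] then 1 else 0
  | m + 1, q =>
    R0 q (EP m) + R1 q (EP m) + ∑ p ∈ Finset.range (q.length + 1), EP m (q.drop p)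

/-- Sum of `F` over the words with `a` letters `true` and `b` letters `false` each of whose suffixes
has at least as many `true` as `false`. -/
def TT : ℕ → ℕ → (List Bool → ℕ) → ℕ
  | 0, 0, F => F []
  | 0, _ + 1, _ => 0
  | a + 1, 0, F => TT a 0 fun z => F (true :: z)
  | a + 1, b + 1, F =>
    if a < b then 0 else (TT a (b + 1) fun z => F (true :: z)) + TT (a + 1) b fun z => F (false :: z)

lemma TT_of_lt {a b : ℕ} (h : a < b) (F : List Bool → ℕ) : TT a b F = 0 := by
  match a, b with
  | 0, b + 1 => rw [TT]
  | a + 1, b + 1 => rw [TT, if_pos (by omega)]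

lemma TT_add (a b : ℕ) (F G : List Bool → ℕ) :
    TT a b (fun z => F z + G z) = TT a b F + TT a b G := by
  induction a, b, F using TT.induct generalizing G with
  | case1 F => simp [TT]
  | case2 b F => simp [TT]
  | case3 a F ih => simp [TT, ih]
  | case4 a b F h => simp [TT, h]
  | case5 a b F h ih1 ih2 => simp [TT, h, ih1, ih2]; omega

lemma TT_congr {a b : ℕ} {F G : List Bool → ℕ} (h : ∀ z, z.length = a + b → F z = G z) :
    TT a b F = TT a b G := by
  induction a, b, F using TT.induct generalizing G with
  | case1 F => simp [TT, h]
  | case2 b F => simp [TT]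
  | case3 a F ih =>
    rw [TT, TT, ih]; intro z hz; exact h _ (by simp; omega)
  | case4 a b F h' => simp [TT, h']
  | case5 a b F h' ih1 ih2 =>
    rw [TT, TT, if_neg h', if_neg h', ih1, ih2] <;>
    · intro z hz; exact h _ (by simp; omega)

lemma TT_succ_succ {a b : ℕ} (h : b ≤ a) (F : List Bool → ℕ) : TT (a + 1) (b + 1) F =
    (TT a (b + 1) fun z => F (true :: z)) + TT (a + 1) b fun z => F (false :: z) := by
  rw [TT, if_neg (by omega)]

lemma R0_true (q : List Bool) (F : List Bool → ℕ) : R0 (true :: q) F = F (true :: true :: q) := rfl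
lemma R0_false (q : List Bool) (F : List Bool → ℕ) :
    R0 (false :: q) F = F (true :: false :: q) + R0 q fun z => F (false :: z) := rfl

/-- Every word of shape `(a + 1, b)` arises exactly once by the operation `R0` from a word of shape
`(a, b)`. -/
theorem TT_R0 {a b : ℕ} (h : b ≤ a) (F : List Bool → ℕ) :
    TT a b (fun q => R0 q F) = TT (a + 1) b F := by
  induction b generalizing a F with
  | zero =>
    cases a with
    | zero => simp [TT, R0]
    | succ a => simp [TT, R0]
  | succ b ih =>
    obtain ⟨a, rfl⟩ : ∃ c, a = c + 1 := ⟨a - 1, by omega⟩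
    rw [TT_succ_succ (by omega), TT_succ_succ (by omega)]
    simp only [R0_true, R0_false]
    rw [TT_add, ih (by omega), TT_succ_succ (by omega)]
    omega

/-- Every word of shape `(a, b + 1)` arises exactly once by the operation `R1` from a word of shape
`(a, b)`. -/
theorem TT_R1 {a b : ℕ} (h : b ≤ a) (F : List Bool → ℕ) :
    TT a b (fun q => R1 q F) = TT a (b + 1) F := by
  induction a generalizing b F with
  | zero =>
    obtain rfl : b = 0 := by omega
    simp [TT, R1]
  | succ a ih =>
    cases b with
    | zero =>
      rw [TT_succ_succ (by omega), TT]
      simp only [R1]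
      rw [TT_add, ih (by omega), TT_R0 (by omega)]
    | succ b =>
      rw [TT_succ_succ (by omega)]
      simp only [R1]
      rw [TT_add]
      have hz : (TT (a + 1) b fun _ => 0) = 0 := by
        have := TT_add (a + 1) b (fun _ => 0) (fun _ => 0)
        simp at this; exact this
      rw [hz, add_zero]
      rcases Nat.lt_or_ge a (b + 1) with h1 | h1
      · rw [TT_of_lt h1, TT_of_lt h1, TT_of_lt (a := a + 1) (by omega)]
      · rw [ih h1, TT_R0 h1, TT_succ_succ h1]

/-- Sum of `f j` with ballot-type multiplicities: the recursion of `TT`, with the words of shape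
`(a, 0)` contributing `f a`. -/
def X : ℕ → ℕ → (ℕ → ℕ) → ℕ
  | a, 0, f => f a
  | 0, _ + 1, _ => 0
  | a + 1, b + 1, f => if a < b then 0 else X a (b + 1) f + X (a + 1) b f

lemma X_of_lt {a b : ℕ} (h : a < b) (f : ℕ → ℕ) : X a b f = 0 := by
  match a, b with
  | 0, b + 1 => rw [X]
  | a + 1, b + 1 => rw [X, if_pos (by omega)]

lemma X_succ_succ {a b : ℕ} (h : b ≤ a) (f : ℕ → ℕ) :
    X (a + 1) (b + 1) f = X a (b + 1) f + X (a + 1) b f := by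
  rw [X, if_neg (by omega)]

lemma X_zero (a : ℕ) (f : ℕ → ℕ) : X a 0 f = f a := by rw [X]

lemma X_add (a b : ℕ) (f g : ℕ → ℕ) : X a b (fun j => f j + g j) = X a b f + X a b g := by
  induction a, b, f using X.induct generalizing g with
  | case1 a f => simp [X_zero]
  | case2 b f => simp [X]
  | case3 a b f h => simp [X, h]
  | case4 a b f h ih1 ih2 => simp [X, h, ih1, ih2]; omega

lemma X_congr {a b : ℕ} {f g : ℕ → ℕ} (h : ∀ j ≤ a, f j = g j) : X a b f = X a b g := by
  induction a, b, f using X.induct generalizing g with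
  | case1 a f => simp [X_zero, h]
  | case2 b f => simp [X]
  | case3 a b f h' => simp [X, h']
  | case4 a b f h' ih1 ih2 =>
    rw [X_succ_succ (by omega), X_succ_succ (by omega), ih1 fun j hj => h j (by omega),
      ih2 fun j hj => h j hj]

/-- The counterpart for `X` of `TT_R0` and `TT_R1` taken together: it matches the first sum in the
definition of `EB`. -/
theorem X_sum {a b : ℕ} (h : b ≤ a) (f : ℕ → ℕ) :
    X a b (fun j => ∑ i ∈ Finset.range (j + 1), f (i + 1)) = X (a + 1) b f + X a (b + 1) f := by
  induction a generalizing b with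
  | zero =>
    obtain rfl : b = 0 := by omega
    simp [X]
  | succ a iha =>
    induction b with
    | zero =>
      have := iha (b := 0) (by omega)
      rw [X_zero, X_zero] at this
      rw [X_zero, X_zero, Finset.sum_range_succ, this, X_succ_succ (by omega), X_zero]
      omega
    | succ b ihb =>
      rw [X_succ_succ (by omega), ihb (by omega)]
      rcases Nat.lt_or_ge a (b + 1) with h1 | h1
      · rw [X_of_lt h1, X_of_lt (a := a + 1) (b := b + 1 + 1) (by omega),
          X_succ_succ (a := a + 1) (by omega)]
        omega
      · rw [iha h1, X_succ_succ (a := a + 1) (by omega), X_succ_succ (a := a) (b := b + 1) h1]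
        omega

lemma sum_range_drop (e : Bool) (z : List Bool) (F : List Bool → ℕ) :
    ∑ p ∈ Finset.range ((e :: z).length + 1), F ((e :: z).drop p) =
      F (e :: z) + ∑ p ∈ Finset.range (z.length + 1), F (z.drop p) := by
  rw [List.length_cons, Finset.sum_range_succ']
  simp; omega

/-- Passing from words to their suffixes corresponds under `TT` and `X` to the second sum in the
definition of `EB`. -/
theorem TT_drop {F : List Bool → ℕ} {f : ℕ → ℕ → ℕ}
    (h : ∀ a b, b ≤ a → TT a b F = X a b (f (a + b))) {a b : ℕ} (hab : b ≤ a) :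
    TT a b (fun q => ∑ p ∈ Finset.range (q.length + 1), F (q.drop p)) =
      X a b (fun j => ∑ k ∈ Finset.range (a + b + 1), f k (min j k)) := by
  obtain ⟨n, hn⟩ : ∃ n, n = a + b := ⟨_, rfl⟩
  induction n generalizing a b with
  | zero =>
    obtain rfl : a = 0 := by omega
    obtain rfl : b = 0 := by omega
    have := h 0 0 le_rfl
    simp [TT, X] at *
    exact this
  | succ n ih =>
    have key : TT a b (fun q => ∑ p ∈ Finset.range (q.length + 1), F (q.drop p)) =
        TT a b F + X a b (fun j => ∑ k ∈ Finset.range (a + b), f k (min j k)) := by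
      cases b with
      | zero =>
        obtain ⟨a, rfl⟩ : ∃ c, a = c + 1 := ⟨a - 1, by omega⟩
        rw [TT, TT]
        simp only [sum_range_drop]
        rw [TT_add, ih (by omega) (by omega), X_zero, X_zero]
        congr 1
        refine Finset.sum_congr rfl fun k hk => ?_
        have := Finset.mem_range.1 hk
        congr 1; omega
      | succ b =>
        obtain ⟨a, rfl⟩ : ∃ c, a = c + 1 := ⟨a - 1, by omega⟩
        rw [TT_succ_succ (by omega), TT_succ_succ (by omega), X_succ_succ (by omega)]
        simp only [sum_range_drop]
        rw [TT_add, TT_add, ih (a := a + 1) (b := b) (by omega) (by omega)]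
        have e : a + 1 + b + 1 = a + 1 + (b + 1) := by omega
        rw [e]
        rcases Nat.lt_or_ge a (b + 1) with h1 | h1
        · rw [TT_of_lt h1, TT_of_lt h1, X_of_lt h1]; omega
        · rw [ih h1 (by omega)]
          have e : a + (b + 1) + 1 = a + 1 + (b + 1) := by omega
          rw [e]; omega
    rw [key, h a b hab, ← X_add]
    refine X_congr fun j hj => ?_
    rw [Finset.sum_range_succ, min_eq_left (by omega)]
    omega

/-- Summed over all ballot words of a given shape, the path process `EP` agrees with `EB`. -/
theorem TT_EP {a b : ℕ} (m : ℕ) (hab : b ≤ a) : TT a b (EP m) = X a b (EB m (a + b)) := by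
  induction m generalizing a b with
  | zero =>
    have h : ∀ a b, TT a b (EP 0) = TT a b (fun _ => if a + b = 0 then 1 else 0) := by
      intro a b
      refine TT_congr fun z hz => ?_
      simp only [EP, ← hz, List.length_eq_zero_iff]
    rw [h]
    have hT : ∀ a b, TT a b (fun _ => 0) = 0 := by
      intro a b
      have := TT_add a b (fun _ => 0) (fun _ => 0)
      simp at this; exact this
    have hX : ∀ a b, X a b (fun _ => 0) = 0 := by
      intro a b
      have := X_add a b (fun _ => 0) (fun _ => 0)
      simp at this; exact this
    have hE : EB 0 (a + b) = fun _ => if a + b = 0 then 1 else 0 := by ext; rw [EB]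
    rw [hE]
    by_cases h0 : a + b = 0
    · obtain rfl : a = 0 := by omega
      obtain rfl : b = 0 := by omega
      simp [TT, X]
    · simp only [if_neg h0, hT, hX]
  | succ m ih =>
    have h1 : EP (m + 1) = fun q =>
        R0 q (EP m) + R1 q (EP m) + ∑ p ∈ Finset.range (q.length + 1), EP m (q.drop p) := by
      ext q; rw [EP]
    have h2 : EB (m + 1) (a + b) = fun j => (∑ i ∈ Finset.range (j + 1), EB m (a + b + 1) (i + 1)) +
      ∑ k ∈ Finset.range (a + b + 1), EB m k (min j k) := by
      ext j; rw [EB]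
    have h3 : TT a (b + 1) (EP m) = X a (b + 1) (EB m (a + b + 1)) := by
      rcases Nat.lt_or_ge a (b + 1) with h | h
      · rw [TT_of_lt h, X_of_lt h]
      · rw [ih h]; rfl
    rw [h1, TT_add, TT_add, TT_R0 hab, TT_R1 hab, TT_drop (fun a b h => ih h) hab, h2, X_add,
      X_sum hab, ih (by omega), h3, show a + 1 + b = a + b + 1 by omega]

theorem EP_nil (m : ℕ) : EP m [] = EB m 0 0 := by
  have := TT_EP m (le_refl 0)
  simpa [TT, X] using this

/-! ### The process for 321 -/

/-- The word `v` (a `321`-avoiding word read from right to left) is encoded by the path `q`: they have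
equal lengths, and `v` has an ascent exactly where `q` has `false` followed by `true`. -/
def Sim : List ℕ → List Bool → Prop
  | [], [] => True
  | [_], [_] => True
  | x :: y :: v, e :: f :: q => (x < y ↔ e = false ∧ f = true) ∧ Sim (y :: v) (f :: q)
  | _, _ => False

lemma Sim.length_eq {v : List ℕ} {q : List Bool} (h : Sim v q) : v.length = q.length := by
  induction v, q using Sim.induct with
  | case1 => rfl
  | case2 => rfl
  | case3 x y v e f q ih => have := ih h.2; simp at this ⊢; omega
  | case4 v q h1 h2 h3 => 
    rw [Sim] at h
    · exact h.elim
    all_goals assumption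

lemma Sim.tail {x : ℕ} {e : Bool} {v : List ℕ} {q : List Bool} (h : Sim (x :: v) (e :: q)) :
    Sim v q := by
  match v, q with
  | [], [] => exact h
  | [], _ :: _ => simpa using h.length_eq
  | _ :: _, [] => simpa using h.length_eq
  | y :: v, f :: q => exact h.2

lemma Sim.drop {v : List ℕ} {q : List Bool} (h : Sim v q) (p : ℕ) : Sim (v.drop p) (q.drop p) := by
  induction p generalizing v q with
  | zero => simpa using h
  | succ p ih =>
    match v, q with
    | [], [] => simpa using h
    | [], _ :: _ => simpa using h.length_eq
    | _ :: _, [] => simpa using h.length_eq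
    | x :: v, e :: q => simpa using ih h.tail

/-- Sum of `G` over the words obtained from `v` by inserting `N` after a weakly decreasing prefix. -/
def slotSum (N : ℕ) (v : List ℕ) (G : List ℕ → ℕ) : ℕ :=
  ∑ p ∈ Finset.range (v.length + 1),
    if (v.take p).Pairwise (fun x y => y ≤ x) then G (v.take p ++ N :: v.drop p) else 0

lemma slotSum_nil (N : ℕ) (G : List ℕ → ℕ) : slotSum N [] G = G [N] := by simp [slotSum]

lemma slotSum_cons_aux (N x : ℕ) (v : List ℕ) (G : List ℕ → ℕ) :
    slotSum N (x :: v) G = G (N :: x :: v) + ∑ p ∈ Finset.range (v.length + 1),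
      if (x :: v.take p).Pairwise (fun x y => y ≤ x) then G (x :: (v.take p ++ N :: v.drop p))
        else 0 := by
  rw [slotSum, List.length_cons, Finset.sum_range_succ', add_comm]
  simp only [List.take_succ_cons, List.drop_succ_cons, List.take_zero, List.drop_zero,
    List.nil_append, List.cons_append, List.Pairwise.nil, if_true]

lemma slotSum_cons_ge {N x : ℕ} {v : List ℕ} (h : ∀ y ∈ v.head?, y ≤ x) (G : List ℕ → ℕ) :
    slotSum N (x :: v) G = G (N :: x :: v) + slotSum N v fun z => G (x :: z) := by
  rw [slotSum_cons_aux, slotSum]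
  congr 1
  refine Finset.sum_congr rfl fun p _ => ?_
  have : (x :: v.take p).Pairwise (fun x y => y ≤ x) ↔ (v.take p).Pairwise fun x y => y ≤ x := by
    rw [List.pairwise_cons]
    refine and_iff_right_of_imp fun hp a ha => ?_
    match v, p with
    | [], _ => simp at ha
    | _, 0 => simp at ha
    | y :: v, p + 1 =>
      have hy : y ≤ x := h y (by simp)
      rw [List.take_succ_cons, List.mem_cons] at ha
      rw [List.take_succ_cons, List.pairwise_cons] at hp
      rcases ha with rfl | ha
      · exact hy
      · exact (hp.1 a ha).trans hy
  simp only [this]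

lemma slotSum_cons_lt {N x y : ℕ} {v : List ℕ} (h : x < y) (G : List ℕ → ℕ) :
    slotSum N (x :: y :: v) G = G (N :: x :: y :: v) + G (x :: N :: y :: v) := by
  rw [slotSum_cons_aux, Finset.sum_range_succ', Finset.sum_eq_zero]
  · simp
  · intro p _
    rw [if_neg]
    intro hp
    rw [List.take_succ_cons, List.pairwise_cons] at hp
    have := hp.1 y (by simp)
    omega

/-- The part of `slotSum` that corresponds to `R0` when `v` is encoded by `q`. -/
def L0 (N : ℕ) : List Bool → List ℕ → (List ℕ → ℕ) → ℕ
  | false :: q, x :: v, G => G (N :: x :: v) + L0 N q v fun z => G (x :: z)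
  | _, v, G => G (N :: v)

/-- The part of `slotSum` that corresponds to `R1` when `v` is encoded by `q`. -/
def L1 (N : ℕ) : List Bool → List ℕ → (List ℕ → ℕ) → ℕ
  | true :: q, x :: v, G => (L1 N q v fun z => G (x :: z)) + L0 N q v fun z => G (x :: z)
  | _, _, _ => 0

lemma L0_nil (N : ℕ) (v : List ℕ) (G : List ℕ → ℕ) : L0 N [] v G = G (N :: v) := by simp [L0]
lemma L0_true (N : ℕ) (q : List Bool) (v : List ℕ) (G : List ℕ → ℕ) :
    L0 N (true :: q) v G = G (N :: v) := by simp [L0]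
lemma L0_false (N x : ℕ) (q : List Bool) (v : List ℕ) (G : List ℕ → ℕ) :
    L0 N (false :: q) (x :: v) G = G (N :: x :: v) + L0 N q v fun z => G (x :: z) := by rw [L0]
lemma L1_nil (N : ℕ) (v : List ℕ) (G : List ℕ → ℕ) : L1 N [] v G = 0 := by simp [L1]
lemma L1_false (N : ℕ) (q : List Bool) (v : List ℕ) (G : List ℕ → ℕ) :
    L1 N (false :: q) v G = 0 := by simp [L1]
lemma L1_true (N x : ℕ) (q : List Bool) (v : List ℕ) (G : List ℕ → ℕ) :
    L1 N (true :: q) (x :: v) G =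
      (L1 N q v fun z => G (x :: z)) + L0 N q v fun z => G (x :: z) := by rw [L1]

lemma Sim.cons_cons_le {x y : ℕ} {e f : Bool} {v : List ℕ} {q : List Bool}
    (h : Sim (x :: y :: v) (e :: f :: q)) (hef : ¬ (e = false ∧ f = true)) : y ≤ x := by
  have := h.1
  by_contra hlt
  exact hef (this.1 (by omega))

lemma slotSum_eq (N : ℕ) {v : List ℕ} {q : List Bool} (h : Sim v q) (G : List ℕ → ℕ) :
    slotSum N v G = L0 N q v G + L1 N q v G := by
  induction v generalizing q G with
  | nil =>
    obtain rfl : q = [] := List.length_eq_zero_iff.1 h.length_eq.symm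
    simp [slotSum_nil, L0_nil, L1_nil]
  | cons x v ih =>
    match q, h with
    | [], h => simpa using h.length_eq
    | true :: q, h =>
      rw [slotSum_cons_ge, ih h.tail, L0_true, L1_true]
      · omega
      · intro y hy
        match v, q, h with
        | [], _, _ => simp at hy
        | _ :: _, [], h => simpa using h.length_eq
        | z :: v, f :: q, h =>
          obtain rfl : z = y := by simpa using hy
          exact h.cons_cons_le (by simp)
    | false :: q, h =>
      match v, q, h with
      | [], [], _ =>
        rw [slotSum_cons_ge (by simp), slotSum_nil, L0_false, L1_false, L0_nil, add_zero]
      | [], _ :: _, h => simpa using h.length_eq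
      | _ :: _, [], h => simpa using h.length_eq
      | y :: v, true :: q, h =>
        have := h.1
        rw [slotSum_cons_lt (by simpa using this), L0_false, L0_true, L1_false, add_zero]
      | y :: v, false :: q, h =>
        have h1 := h.cons_cons_le (by simp)
        rw [slotSum_cons_ge (by simpa using h1), ih h.tail, L0_false _ _ (false :: q), L1_false,
          L1_false]
        omega

lemma Sim.cons_top {N : ℕ} {v : List ℕ} {q : List Bool} (hv : ∀ x ∈ v, x < N) (h : Sim v q) :
    Sim (N :: v) (true :: q) := by
  match v, q, h, hv with
  | [], [], _, _ => trivial
  | [], _ :: _, h, _ => simpa using h.length_eq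
  | _ :: _, [], h, _ => simpa using h.length_eq
  | y :: v, f :: q, h, hv =>
    refine ⟨?_, h⟩
    have := hv y (by simp)
    simp; omega

lemma Sim.cons_le {x y : ℕ} {e f f' : Bool} {v v' : List ℕ} {q q' : List Bool}
    (h : Sim (x :: y :: v) (e :: f :: q)) (hef : ¬ (e = false ∧ f = true)) {e' : Bool}
    (hef' : ¬ (e' = false ∧ f' = true)) (h' : Sim (y :: v') (f' :: q')) :
    Sim (x :: y :: v') (e' :: f' :: q') := by
  refine ⟨?_, h'⟩
  have := h.cons_cons_le hef
  exact iff_of_false (by omega) hef'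

lemma cons_lt {N x : ℕ} {v : List ℕ} (hx : x < N) (hv : ∀ y ∈ v, y < N + 1) :
    ∀ y ∈ x :: v, y < N + 1 := by
  intro y hy
  rcases List.mem_cons.1 hy with rfl | hy
  · omega
  · exact hv y hy

/-- Inserting `N` into `v` as in `L0` amounts to applying `R0` to the code `q`. The last condition in
`hGF` records that, in the result, a further letter in front is encoded by `false`, which is what the
induction needs. -/
lemma L0_eq {N : ℕ} {v : List ℕ} {q : List Bool} (hv : ∀ x ∈ v, x < N) (h : Sim v q)
    (G : List ℕ → ℕ) (F : List Bool → ℕ)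
    (hGF : ∀ v' q', (∀ x ∈ v', x < N + 1) → Sim v' q' →
      (∀ x < N, ∀ e, Sim (x :: v) (e :: q) → Sim (x :: v') (false :: q')) → G v' = F q') :
    L0 N q v G = R0 q F := by
  induction v generalizing q G F with
  | nil =>
    obtain rfl : q = [] := List.length_eq_zero_iff.1 h.length_eq.symm
    rw [L0_nil, R0]
    exact hGF _ _ (by simp) trivial fun x hx e hs => ⟨by simpa using hx, trivial⟩
  | cons x v ih =>
    have h0 : G (N :: x :: v) = F (true :: q) := by
      refine hGF _ _ ?_ (h.cons_top hv) fun y hy e hs => ⟨by simpa using hy, h.cons_top hv⟩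
      intro y hy
      rcases List.mem_cons.1 hy with rfl | hy
      · omega
      · exact (hv y hy).trans (Nat.lt_succ_self _)
    match q, h with
    | [], h => simpa using h.length_eq
    | true :: q, h => rw [L0_true, R0, h0]
    | false :: q, h =>
      rw [L0_false, R0, h0]
      congr 1
      refine ih (fun y hy => hv y (by simp [hy])) h.tail _ _ fun v' q' hv' _ hs => ?_
      have h1 := hs x (hv x (by simp)) _ h
      exact hGF _ _ (cons_lt (hv x (by simp)) hv') h1
        fun y _ e hy => hy.cons_le (by simp) (by simp) h1

/-- Inserting `N` into `v` as in `L1` amounts to applying `R1` to the code `q`. -/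
lemma L1_eq {N : ℕ} {v : List ℕ} {q : List Bool} (hv : ∀ x ∈ v, x < N) (h : Sim v q)
    (G : List ℕ → ℕ) (F : List Bool → ℕ)
    (hGF : ∀ v' q', (∀ x ∈ v', x < N + 1) → Sim v' q' →
      (∀ x < N, Sim (x :: v) (true :: q) → Sim (x :: v') (true :: q')) → G v' = F q') :
    L1 N q v G = R1 q F := by
  induction v generalizing q G F with
  | nil =>
    obtain rfl : q = [] := List.length_eq_zero_iff.1 h.length_eq.symm
    rw [L1_nil, R1]
  | cons x v ih =>
    match q, h with
    | [], h => simpa using h.length_eq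
    | false :: q, h => rw [L1_false, R1]
    | true :: q, h =>
      have hv' : ∀ x ∈ v, x < N := fun y hy => hv y (by simp [hy])
      rw [L1_true, R1]
      congr 1
      · refine ih hv' h.tail _ _ fun v' q' hb _ hs => ?_
        have h1 := hs x (hv x (by simp)) h
        exact hGF _ _ (cons_lt (hv x (by simp)) hb) h1
          fun y _ hy => hy.cons_le (by simp) (by simp) h1
      · refine L0_eq hv' h.tail _ _ fun v' q' hb _ hs => ?_
        have h1 := hs x (hv x (by simp)) _ h
        exact hGF _ _ (cons_lt (hv x (by simp)) hb) h1
          fun y _ hy => hy.cons_le (by simp) (by simp) h1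

/-- For `321` the process depends only on the code of the reversed word. -/
theorem runs321_eq (m N : ℕ) (v : List ℕ) (q : List Bool) (hv : ∀ x ∈ v, x < N) (h : Sim v q) :
    runs al321 m N v.reverse = EP m q := by
  induction m generalizing N v q with
  | zero =>
    have := h.length_eq
    simp only [runs, EP, ← List.length_eq_zero_iff, List.length_reverse, this]
  | succ m ih =>
    rw [runs, EP, List.length_reverse]
    congr 1
    · have h1 : (∑ c ∈ Finset.range (v.length + 1),
          if al321 c v.reverse then runs al321 m (N + 1) (ins c N v.reverse) else 0) =
          slotSum N v fun z => runs al321 m (N + 1) z.reverse := by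
        rw [slotSum, ← Finset.sum_range_reflect]
        refine Finset.sum_congr rfl fun p hp => ?_
        have hp : p ≤ v.length := by have := Finset.mem_range.1 hp; omega
        have e : v.length + 1 - 1 - p = v.length - p := by omega
        have e1 : v.reverse.drop (v.length - p) = (v.take p).reverse := by
          rw [List.reverse_take]
        have e2 : v.reverse.take (v.length - p) = (v.drop p).reverse := by
          rw [List.reverse_drop]
        rw [e]
        simp only [al321, ins, e1, e2, List.pairwise_reverse, List.reverse_append,
          List.reverse_cons, List.append_assoc, List.singleton_append]
      rw [h1, slotSum_eq N h, L0_eq hv h _ (EP m) fun v' q' hb hs _ => ih _ _ _ hb hs,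
        L1_eq hv h _ (EP m) fun v' q' hb hs _ => ih _ _ _ hb hs]
    · rw [← h.length_eq, ← Finset.sum_range_reflect]
      refine Finset.sum_congr rfl fun p hp => ?_
      have hp : p ≤ v.length := by have := Finset.mem_range.1 hp; omega
      have e : v.length + 1 - 1 - p = v.length - p := by omega
      have e2 : v.reverse.take (v.length - p) = (v.drop p).reverse := by
        rw [List.reverse_drop]
      rw [e, e2]
      exact ih _ _ _ (fun x hx => (hv x (List.mem_of_mem_drop hx)).trans (Nat.lt_succ_self _))
        (h.drop p)

/-- The processes for `321` and `123` have the same number of runs from the empty word. -/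
theorem runs_nil (n : ℕ) : runs al321 n 0 [] = EB n 0 0 ∧ runs al123 n 0 [] = EB n 0 0 := by
  refine ⟨?_, ?_⟩
  · rw [← EP_nil]
    exact runs321_eq n 0 [] [] (by simp) trivial
  · exact runs123_eq n 0 0 [] (by simp) (by simp) (by simp [al123])

/-! ### From permutations to words -/

lemma avoids_iff_sublist {P : ℕ → ℕ → ℕ → Prop} {w : List ℕ} :
    Avoids P w ↔ ∀ a b c, [a, b, c].Sublist w → ¬ P a b c := by
  induction w with
  | nil => simp [Avoids]
  | cons x w ih =>
    rw [Avoids, List.triplewise_cons, ← Avoids, ih, List.pairwise_iff_forall_sublist]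
    constructor
    · rintro ⟨h1, h2⟩ a b c hs
      rcases List.sublist_cons_iff.1 hs with hs | ⟨r, hr, hs⟩
      · exact h2 _ _ _ hs
      · obtain ⟨rfl, rfl⟩ := List.cons_eq_cons.1 hr
        exact h1 hs
    · intro h
      exact ⟨fun {b c} hs => h x b c (hs.cons_cons x), fun a b c hs => h a b c (hs.cons x)⟩

/-- `l` has a subsequence `a, b, c, d` with `P a b c` and `d` larger than the other three: an
occurrence of the pattern `P` followed by a new maximum. -/
def Has4 (P : ℕ → ℕ → ℕ → Prop) (l : List ℕ) : Prop :=
  ∃ a b c d, [a, b, c, d].Sublist l ∧ P a b c ∧ a < d ∧ b < d ∧ c < d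

/-- A new maximum can only play the role of the last letter of an occurrence. -/
lemma has4_ins {P : ℕ → ℕ → ℕ → Prop} {k N : ℕ} {u : List ℕ} (hu : ∀ x ∈ u, x < N) :
    Has4 P (ins k N u) ↔ Has4 P u ∨ ¬ Avoids P (u.take k) := by
  constructor
  · rintro ⟨a, b, c, d, hs, hP, h1, h2, h3⟩
    have hd : d < N + 1 := ins_lt hu d (hs.subset (by simp))
    rw [ins, List.sublist_append_iff] at hs
    obtain ⟨l1, l2, he, hs1, hs2⟩ := hs
    rcases List.sublist_cons_iff.1 hs2 with hs2 | ⟨r, rfl, hs2⟩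
    · left
      refine ⟨a, b, c, d, ?_, hP, h1, h2, h3⟩
      rw [he, ← List.take_append_drop k u]
      exact hs1.append hs2
    · right
      rw [avoids_iff_sublist]
      intro h
      match l1, he with
      | [], he => simp at he; omega
      | [_], he => simp at he; omega
      | [_, _], he => simp at he; omega
      | [x, y, z], he =>
        simp at he
        obtain ⟨rfl, rfl, rfl, -⟩ := he
        exact h _ _ _ hs1 hP
      | _ :: _ :: _ :: _ :: _, he => simp at he
  · rintro (⟨a, b, c, d, hs, h⟩ | h)
    · refine ⟨a, b, c, d, hs.trans ?_, h⟩
      conv_lhs => rw [← List.take_append_drop k u]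
      exact (List.Sublist.refl _).append (List.sublist_cons_self _ _)
    · rw [avoids_iff_sublist] at h
      push Not at h
      obtain ⟨a, b, c, hs, hP⟩ := h
      have hlt : ∀ x ∈ [a, b, c], x < N := fun x hx => take_lt hu x (hs.subset hx)
      refine ⟨a, b, c, N, ?_, hP, hlt a (by simp), hlt b (by simp), hlt c (by simp)⟩
      exact hs.append (l₁ := [a, b, c]) (r₁ := [N]) ((List.nil_sublist _).cons_cons N)

open Classical in
/-- The arrangements of `0, …, n - 1` that avoid the pattern `P` followed by a new maximum. -/
noncomputable def Av (P : ℕ → ℕ → ℕ → Prop) (n : ℕ) : Finset (List ℕ) :=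
  (List.range n).permutations.toFinset.filter fun l => ¬ Has4 P l

lemma mem_Av {P : ℕ → ℕ → ℕ → Prop} {n : ℕ} {u : List ℕ} :
    u ∈ Av P n ↔ u.Perm (List.range n) ∧ ¬ Has4 P u := by
  simp [Av]

lemma lt_of_perm_range {n : ℕ} {u : List ℕ} (h : u.Perm (List.range n)) : ∀ x ∈ u, x < n := by
  intro x hx
  simpa using h.subset hx

lemma ins_perm (c N : ℕ) (u : List ℕ) : (ins c N u).Perm (N :: u) := by
  conv_rhs => rw [← List.take_append_drop c u]
  exact List.perm_middle

lemma range_succ_perm (n : ℕ) : (List.range (n + 1)).Perm (n :: List.range n) := by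
  rw [List.range_succ]
  exact List.perm_append_singleton _ _

lemma ins_erase {n : ℕ} {u : List ℕ} (h : n ∈ u) : ins (u.idxOf n) n (u.erase n) = u := by
  obtain ⟨s, t, rfl, hs⟩ := List.eq_append_cons_of_mem h
  rw [List.idxOf_append_of_notMem hs, List.erase_append_right _ hs]
  simp [ins]

lemma erase_ins {c n : ℕ} {u : List ℕ} (h : n ∉ u) : (ins c n u).erase n = u := by
  have : n ∉ u.take c := fun hm => h (List.mem_of_mem_take hm)
  rw [ins, List.erase_append_right _ this]
  simp

lemma idxOf_ins {c n : ℕ} {u : List ℕ} (h : n ∉ u) (hc : c ≤ u.length) :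
    (ins c n u).idxOf n = c := by
  have : n ∉ u.take c := fun hm => h (List.mem_of_mem_take hm)
  rw [ins, List.idxOf_append_of_notMem this]
  simp [hc]

open Classical in
lemma sum_Av_succ (P : ℕ → ℕ → ℕ → Prop) (n : ℕ) (g : List ℕ → ℕ) :
    ∑ u ∈ Av P (n + 1), g u = ∑ u ∈ Av P n, ∑ c ∈ Finset.range (u.length + 1),
      if Avoids P (u.take c) then g (ins c n u) else 0 := by
  simp_rw [← Finset.sum_filter]
  rw [Finset.sum_sigma']
  refine Finset.sum_nbij' (fun u => ⟨u.erase n, u.idxOf n⟩) (fun s => ins s.2 n s.1) ?_ ?_ ?_ ?_ ?_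
  · intro u hu
    obtain ⟨h1, h2⟩ := mem_Av.1 hu
    have hn : n ∈ u := h1.symm.subset (by simp)
    have h3 : (u.erase n).Perm (List.range n) := by
      have := (h1.trans (range_succ_perm n)).erase n
      simpa using this
    have h4 := lt_of_perm_range h3
    rw [← ins_erase hn, has4_ins h4] at h2
    push Not at h2
    simp only [Finset.mem_sigma, Finset.mem_filter, Finset.mem_range, mem_Av]
    refine ⟨⟨h3, h2.1⟩, ?_, h2.2⟩
    rw [List.length_erase_add_one hn]
    exact List.idxOf_lt_length_of_mem hn
  · rintro ⟨u, c⟩ hs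
    simp only [Finset.mem_sigma, Finset.mem_filter, Finset.mem_range, mem_Av] at hs ⊢
    obtain ⟨⟨h1, h2⟩, h3, h4⟩ := hs
    refine ⟨(ins_perm c n u).trans ((h1.cons n).trans (range_succ_perm n).symm), ?_⟩
    rw [has4_ins (lt_of_perm_range h1)]
    tauto
  · intro u hu
    obtain ⟨h1, h2⟩ := mem_Av.1 hu
    exact ins_erase (h1.symm.subset (by simp))
  · rintro ⟨u, c⟩ hs
    simp only [Finset.mem_sigma, Finset.mem_filter, Finset.mem_range, mem_Av] at hs
    obtain ⟨⟨h1, h2⟩, h3, h4⟩ := hs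
    have hn : n ∉ u := fun h => lt_irrefl _ (lt_of_perm_range h1 n h)
    simp only [erase_ins hn, idxOf_ins hn (Nat.lt_succ_iff.1 h3)]
  · intro u hu
    obtain ⟨h1, h2⟩ := mem_Av.1 hu
    rw [ins_erase (h1.symm.subset (by simp))]

lemma card_Av_add (P : ℕ → ℕ → ℕ → Prop) (m n : ℕ) :
    (Av P (n + m)).card = ∑ u ∈ Av P n, growths (Avoids P) m n u := by
  induction m generalizing n with
  | zero => simp [growths]
  | succ m ih =>
    rw [show n + (m + 1) = n + 1 + m by omega, ih, sum_Av_succ]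
    rfl

theorem card_Av_eq_growths (P : ℕ → ℕ → ℕ → Prop) (n : ℕ) :
    (Av P n).card = growths (Avoids P) n 0 [] := by
  have h : Av P 0 = {[]} := by
    ext u
    rw [mem_Av]
    simp only [List.range_zero, List.perm_nil, Finset.mem_singleton]
    refine and_iff_left_of_imp ?_
    rintro rfl
    rintro ⟨a, b, c, d, hs, -⟩
    simp at hs
  have := card_Av_add P n 0
  rw [zero_add, h, Finset.sum_singleton] at this
  exact this

theorem card_Av_eq_runs (P : ℕ → ℕ → ℕ → Prop) (al : ℕ → List ℕ → Prop)
    [∀ c w, Decidable (al c w)]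
    (hins : ∀ c N w, (∀ x ∈ w, x < N) → c ≤ w.length →
      (Avoids P (ins c N w) ↔ Avoids P w ∧ al c w)) (n : ℕ) :
    (Av P n).card = runs al n 0 [] := by
  rw [card_Av_eq_growths, growths_eq _ al avoids_nil Avoids.take hins n 0 [] (by simp)]
  simp [avoids_nil]

/-- The complement `n - 1 - π(0), n - 1 - π(1), …` of `π`, as a word. -/
def word {n : ℕ} (π : Equiv.Perm (Fin n)) : List ℕ := List.ofFn fun i => n - 1 - (π i : ℕ)

lemma sublist_ofFn_iff {n : ℕ} (g : Fin n → ℕ) (a b c d : ℕ) :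
    [a, b, c, d].Sublist (List.ofFn g) ↔ ∃ f : Fin 4 → Fin n, StrictMono f ∧
      g (f 0) = a ∧ g (f 1) = b ∧ g (f 2) = c ∧ g (f 3) = d := by
  rw [List.sublist_iff_exists_fin_orderEmbedding_get_eq]
  constructor
  · rintro ⟨f, hf⟩
    refine ⟨fun i => Fin.cast (List.length_ofFn) (f i), ?_, ?_⟩
    · intro i j hij
      exact f.strictMono hij
    · have h0 := hf (0 : Fin 4)
      have h1 := hf (1 : Fin 4)
      have h2 := hf (2 : Fin 4)
      have h3 := hf (3 : Fin 4)
      simp only [List.get_ofFn] at h0 h1 h2 h3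
      exact ⟨h0.symm, h1.symm, h2.symm, h3.symm⟩
  · rintro ⟨f, hf, rfl, rfl, rfl, rfl⟩
    refine ⟨OrderEmbedding.ofStrictMono
      (fun i : Fin 4 => Fin.cast List.length_ofFn.symm (f i)) fun i j hij => hf hij, ?_⟩
    intro i
    simp only [List.get_ofFn]
    change Fin 4 at i
    fin_cases i <;> rfl

lemma word_perm {n : ℕ} (π : Equiv.Perm (Fin n)) : (word π).Perm (List.range n) := by
  have hnd : (word π).Nodup := by
    rw [word, List.nodup_ofFn]
    intro i j hij
    have h1 := (π i).isLt
    have h2 := (π j).isLt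
    apply π.injective
    apply Fin.ext
    simp only at hij
    omega
  refine (List.subperm_of_subset hnd ?_).perm_of_length_le (by simp [word])
  intro x hx
  rw [word, List.mem_ofFn] at hx
  obtain ⟨i, rfl⟩ := hx
  have := (π i).isLt
  simp; omega

/-- If the complement of `τ` is the pattern `P` followed by a new maximum, then taking complements
identifies the `τ`-avoiding permutations with `Av P n`. -/
theorem SnCard_eq {P : ℕ → ℕ → ℕ → Prop} {τ : Equiv.Perm (Fin 4)}
    (h : ∀ x : Fin 4 → ℕ, Function.Injective x → ((∀ s t, τ s < τ t ↔ x t < x s) ↔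
      P (x 0) (x 1) (x 2) ∧ x 0 < x 3 ∧ x 1 < x 3 ∧ x 2 < x 3)) (n : ℕ) :
    SnCard n τ = (Av P n).card := by
  classical
  have key : ∀ π : Equiv.Perm (Fin n), Has4 P (word π) ↔ ContainsPat π τ := by
    intro π
    have hval : ∀ i j : Fin n, n - 1 - (π i : ℕ) < n - 1 - (π j : ℕ) ↔ π j < π i := by
      intro i j
      have h1 := (π i).isLt
      have h2 := (π j).isLt
      rw [Fin.lt_def]
      omega
    have hinj : ∀ f : Fin 4 → Fin n, StrictMono f →
        Function.Injective fun s => n - 1 - (π (f s) : ℕ) := by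
      intro f hf i j hij
      have h1 := (π (f i)).isLt
      have h2 := (π (f j)).isLt
      apply hf.injective
      apply π.injective
      apply Fin.ext
      simp only at hij
      omega
    constructor
    · rintro ⟨a, b, c, d, hs, hP⟩
      obtain ⟨f, hf, rfl, rfl, rfl, rfl⟩ := (sublist_ofFn_iff _ _ _ _ _).1 hs
      refine ⟨f, hf, fun s t => ?_⟩
      rw [← hval]
      exact (h _ (hinj f hf)).2 hP s t
    · rintro ⟨f, hf, hs⟩
      refine ⟨_, _, _, _, (sublist_ofFn_iff _ _ _ _ _).2 ⟨f, hf, rfl, rfl, rfl, rfl⟩, ?_⟩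
      refine (h _ (hinj f hf)).1 fun s t => ?_
      rw [hval]
      exact hs s t
  rw [SnCard, Nat.card_eq_fintype_card, Fintype.card_subtype]
  refine Finset.card_bij (fun π _ => word π) ?_ ?_ ?_
  · intro π hπ
    rw [mem_Av, key]
    exact ⟨word_perm π, by simpa using hπ⟩
  · intro π _ σ _ he
    have := List.ofFn_injective he
    ext i
    have := congrFun this i
    have h1 := (π i).isLt
    have h2 := (σ i).isLt
    omega
  · intro u hu
    obtain ⟨h1, h2⟩ := mem_Av.1 hu
    have hl : u.length = n := by simpa using h1.length_eq
    have hlt := lt_of_perm_range h1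
    have hnd : u.Nodup := h1.nodup_iff.2 List.nodup_range
    have hltg : ∀ i : Fin n, u[(i : ℕ)]'(by omega) < n := fun i => hlt _ (List.getElem_mem _)
    let g : Fin n → Fin n := fun i => ⟨n - 1 - u[(i : ℕ)]'(by omega), by have := i.isLt; omega⟩
    have hg : Function.Injective g := by
      intro i j hij
      have := congrArg Fin.val hij
      simp only [g] at this
      have h1 := hltg i
      have h2 := hltg j
      have h3 : u[(i : ℕ)]'(by omega) = u[(j : ℕ)]'(by omega) := by omega
      exact Fin.ext ((hnd.getElem_inj_iff).1 h3)
    have hw : word (Equiv.ofBijective g (Finite.injective_iff_bijective.1 hg)) = u := by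
      apply List.ext_getElem
      · simp [word, hl]
      · intro i hi1 hi2
        have := hltg ⟨i, by omega⟩
        simp only [word, List.getElem_ofFn, Equiv.ofBijective_apply, g] at this ⊢
        omega
    refine ⟨_, ?_, hw⟩
    simp only [Finset.mem_filter, Finset.mem_univ, true_and]
    rw [← key, hw]
    exact h2

/-- The decreasing pattern of length four. -/
def p4321 : Equiv.Perm (Fin 4) := Fin.revPerm

theorem SnCard_p3241 (n : ℕ) : SnCard n p3241 = runs al231 n 0 [] := by
  rw [← card_Av_eq_runs P231 al231 avoids231_ins]
  refine SnCard_eq (fun x hx => ?_) n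
  have h01 : x 0 ≠ x 1 := hx.ne (by decide)
  simp only [Fin.forall_fin_succ, P231, p3241]
  simp [Fin.ext_iff]
  omega

theorem SnCard_p2341 (n : ℕ) : SnCard n p2341 = runs al321 n 0 [] := by
  rw [← card_Av_eq_runs P321 al321 avoids321_ins]
  refine SnCard_eq (fun x hx => ?_) n
  simp only [Fin.forall_fin_succ, P321, p2341]
  simp [Fin.ext_iff]
  omega

theorem SnCard_p4321 (n : ℕ) : SnCard n p4321 = runs al123 n 0 [] := by
  rw [← card_Av_eq_runs P123 al123 avoids123_ins]
  refine SnCard_eq (fun x hx => ?_) n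
  simp only [Fin.forall_fin_succ, P123, p4321]
  simp [Fin.ext_iff]
  omega

/-! ### Comparing 4321 and 4231 -/

lemma contains4321_iff {n : ℕ} (π : Equiv.Perm (Fin n)) : ContainsPat π p4321 ↔
    ∃ a b c d, a < b ∧ b < c ∧ c < d ∧ π d < π c ∧ π c < π b ∧ π b < π a := by
  constructor
  · rintro ⟨f, hf, h⟩
    exact ⟨f 0, f 1, f 2, f 3, hf (by decide), hf (by decide), hf (by decide),
      (h 3 2).1 (by decide), (h 2 1).1 (by decide), (h 1 0).1 (by decide)⟩
  · rintro ⟨a, b, c, d, h1, h2, h3, h4, h5, h6⟩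
    refine ⟨![a, b, c, d], ?_, ?_⟩
    · rw [Fin.strictMono_iff_lt_succ]
      simp [Fin.forall_fin_succ, h1, h2, h3]
    · simp only [Fin.forall_fin_succ, p4321]
      simp
      omega

lemma contains4231_iff {n : ℕ} (π : Equiv.Perm (Fin n)) : ContainsPat π p4231 ↔
    ∃ a b c d, a < b ∧ b < c ∧ c < d ∧ π d < π b ∧ π b < π c ∧ π c < π a := by
  constructor
  · rintro ⟨f, hf, h⟩
    exact ⟨f 0, f 1, f 2, f 3, hf (by decide), hf (by decide), hf (by decide),
      (h 3 1).1 (by decide), (h 1 2).1 (by decide), (h 2 0).1 (by decide)⟩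
  · rintro ⟨a, b, c, d, h1, h2, h3, h4, h5, h6⟩
    refine ⟨![a, b, c, d], ?_, ?_⟩
    · rw [Fin.strictMono_iff_lt_succ]
      simp [Fin.forall_fin_succ, h1, h2, h3]
    · simp only [Fin.forall_fin_succ, p4231]
      simp
      omega

/-- Position `i` holds a left-to-right maximum of `π`. -/
def LRmax {n : ℕ} (π : Equiv.Perm (Fin n)) (i : Fin n) : Prop := ∀ j < i, π j < π i
/-- Position `i` holds a right-to-left minimum of `π`. -/
def RLmin {n : ℕ} (π : Equiv.Perm (Fin n)) (i : Fin n) : Prop := ∀ j > i, π i < π j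

/-- `π` and `σ` have the same left-to-right maxima and the same right-to-left minima, in the same
positions. -/
def Same {n : ℕ} (π σ : Equiv.Perm (Fin n)) : Prop :=
  ∀ i, (LRmax π i ↔ LRmax σ i) ∧ (RLmin π i ↔ RLmin σ i) ∧ (LRmax π i ∨ RLmin π i → π i = σ i)

lemma Same.refl {n : ℕ} (π : Equiv.Perm (Fin n)) : Same π π := fun _ => by simp

lemma Same.symm {n : ℕ} {π σ : Equiv.Perm (Fin n)} (h : Same π σ) : Same σ π := by
  intro i
  obtain ⟨h1, h2, h3⟩ := h i
  refine ⟨h1.symm, h2.symm, fun h4 => (h3 ?_).symm⟩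
  rwa [h1, h2]

lemma Same.trans {n : ℕ} {π σ ρ : Equiv.Perm (Fin n)} (h : Same π σ) (h' : Same σ ρ) :
    Same π ρ := by
  intro i
  obtain ⟨h1, h2, h3⟩ := h i
  obtain ⟨h1', h2', h3'⟩ := h' i
  refine ⟨h1.trans h1', h2.trans h2', fun h4 => (h3 h4).trans (h3' ?_)⟩
  rwa [← h1, ← h2]

lemma lt_of_not_extreme {n : ℕ} {π : Equiv.Perm (Fin n)} (h : ¬ ContainsPat π p4321)
    {i j : Fin n} (hij : i < j) (hi : ¬ LRmax π i) (hj : ¬ RLmin π j) : π i < π j := by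
  by_contra hlt
  have hne : π i ≠ π j := fun he => hij.ne (π.injective he)
  have hji : π j < π i := lt_of_le_of_ne (not_lt.1 hlt) hne.symm
  simp only [LRmax, RLmin, not_forall] at hi hj
  obtain ⟨a, ha, ha'⟩ := hi
  obtain ⟨d, hd, hd'⟩ := hj
  have h1 : π i < π a :=
    lt_of_le_of_ne (not_lt.1 ha') fun he => ha.ne' (π.injective he)
  have h2 : π d < π j :=
    lt_of_le_of_ne (not_lt.1 hd') fun he => hd.ne' (π.injective he)
  exact h ((contains4321_iff π).2 ⟨a, i, j, d, ha, hij, hd, h2, hji, h1⟩)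

/-- The entries of `σ` that are not extreme increase from left to right. Hence, if `π` and `σ` agree
before `i` and `π i < σ i`, the value `π i` has no place left in `σ`. -/
lemma not_lt_of_same {n : ℕ} {π σ : Equiv.Perm (Fin n)} (hσ : ¬ ContainsPat σ p4321)
    (h : Same π σ) (i : Fin n) (ih : ∀ j < i, π j = σ j) : ¬ π i < σ i := by
  intro hlt
  obtain ⟨j, hj⟩ := σ.surjective (π i)
  have hi : ¬ (LRmax π i ∨ RLmin π i) := fun h' => hlt.ne ((h i).2.2 h')
  rcases lt_trichotomy j i with hji | rfl | hji
  · exact hji.ne (π.injective ((ih j hji).trans hj))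
  · exact hlt.ne' hj
  · by_cases hE : LRmax π j ∨ RLmin π j
    · exact hji.ne' (π.injective (((h j).2.2 hE).trans hj))
    · rw [not_or] at hi hE
      have := lt_of_not_extreme hσ hji (by rw [← (h i).1]; exact hi.1)
        (by rw [← (h j).2.1]; exact hE.2)
      rw [hj] at this
      exact lt_asymm this hlt

/-- A class of `Same` contains at most one permutation avoiding `4321`. -/
theorem Same.eq {n : ℕ} {π σ : Equiv.Perm (Fin n)} (hπ : ¬ ContainsPat π p4321)
    (hσ : ¬ ContainsPat σ p4321) (h : Same π σ) : π = σ := by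
  have : ∀ i, π i = σ i := by
    intro i
    induction i using WellFoundedLT.induction with
    | ind i ih =>
      exact le_antisymm (not_lt.1 (not_lt_of_same hπ h.symm i fun j hj => (ih j hj).symm))
        (not_lt.1 (not_lt_of_same hσ h i ih))
  exact Equiv.ext this

lemma LRmax.swap {n : ℕ} {ρ : Equiv.Perm (Fin n)} {a b c i : Fin n} (hab : a < b) (hbc : b < c)
    (h1 : ρ b < ρ a) (h2 : ρ c < ρ a) (hib : i ≠ b) (hic : i ≠ c) (h : LRmax ρ i) :
    LRmax (ρ * Equiv.swap b c) i := by
  intro j hj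
  rw [Equiv.Perm.mul_apply, Equiv.Perm.mul_apply, Equiv.swap_apply_of_ne_of_ne hib hic]
  by_cases hjb : j = b
  · subst hjb
    rw [Equiv.swap_apply_left]
    exact h2.trans (h a (hab.trans hj))
  · by_cases hjc : j = c
    · subst hjc
      rw [Equiv.swap_apply_right]
      exact h b (hbc.trans hj)
    · rw [Equiv.swap_apply_of_ne_of_ne hjb hjc]
      exact h j hj

lemma RLmin.swap {n : ℕ} {ρ : Equiv.Perm (Fin n)} {b c d i : Fin n} (hbc : b < c) (hcd : c < d)
    (h1 : ρ d < ρ b) (h2 : ρ d < ρ c) (hib : i ≠ b) (hic : i ≠ c) (h : RLmin ρ i) :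
    RLmin (ρ * Equiv.swap b c) i := by
  intro j hj
  rw [Equiv.Perm.mul_apply, Equiv.Perm.mul_apply, Equiv.swap_apply_of_ne_of_ne hib hic]
  by_cases hjb : j = b
  · subst hjb
    rw [Equiv.swap_apply_left]
    exact h c (lt_trans hj hbc)
  · by_cases hjc : j = c
    · subst hjc
      rw [Equiv.swap_apply_right]
      exact (h d (lt_trans hj hcd)).trans h1
    · rw [Equiv.swap_apply_of_ne_of_ne hjb hjc]
      exact h j hj

/-- Exchanging the two inner entries of an occurrence of `4231` or `4321` affects no extreme entry. -/
lemma same_swap {n : ℕ} {ρ : Equiv.Perm (Fin n)} {a b c d : Fin n} (hab : a < b) (hbc : b < c)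
    (hcd : c < d) (h1 : ρ b < ρ a) (h2 : ρ c < ρ a) (h3 : ρ d < ρ b) (h4 : ρ d < ρ c) :
    Same ρ (ρ * Equiv.swap b c) := by
  set σ := ρ * Equiv.swap b c with hσ
  have hρ : ρ = σ * Equiv.swap b c := by simp [hσ, mul_assoc]
  have ea : σ a = ρ a := by
    rw [hσ, Equiv.Perm.mul_apply, Equiv.swap_apply_of_ne_of_ne hab.ne (hab.trans hbc).ne]
  have ed : σ d = ρ d := by
    rw [hσ, Equiv.Perm.mul_apply, Equiv.swap_apply_of_ne_of_ne (hbc.trans hcd).ne' hcd.ne']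
  have eb : σ b = ρ c := by rw [hσ, Equiv.Perm.mul_apply, Equiv.swap_apply_left]
  have ec : σ c = ρ b := by rw [hσ, Equiv.Perm.mul_apply, Equiv.swap_apply_right]
  have hmid : ∀ τ : Equiv.Perm (Fin n), τ b < τ a → τ c < τ a → τ d < τ b → τ d < τ c →
      ∀ i, i = b ∨ i = c → ¬ LRmax τ i ∧ ¬ RLmin τ i := by
    rintro τ t1 t2 t3 t4 i (rfl | rfl)
    · exact ⟨fun h => lt_asymm t1 (h a hab), fun h => lt_asymm t3 (h d (hbc.trans hcd))⟩
    · exact ⟨fun h => lt_asymm t2 (h a (hab.trans hbc)), fun h => lt_asymm t4 (h d hcd)⟩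
  intro i
  by_cases hi : i = b ∨ i = c
  · have m1 := hmid ρ h1 h2 h3 h4 i hi
    have m2 := hmid σ (by rwa [eb, ea]) (by rwa [ec, ea]) (by rwa [eb, ed]) (by rwa [ec, ed]) i hi
    tauto
  · rw [not_or] at hi
    refine ⟨⟨fun h => h.swap hab hbc h1 h2 hi.1 hi.2, fun h => ?_⟩,
      ⟨fun h => h.swap hbc hcd h3 h4 hi.1 hi.2, fun h => ?_⟩, fun _ => ?_⟩
    · rw [hρ]
      exact h.swap hab hbc (by rwa [eb, ea]) (by rwa [ec, ea]) hi.1 hi.2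
    · rw [hρ]
      exact h.swap hbc hcd (by rwa [eb, ed]) (by rwa [ec, ed]) hi.1 hi.2
    · rw [hσ, Equiv.Perm.mul_apply, Equiv.swap_apply_of_ne_of_ne hi.1 hi.2]

/-- A statistic that drops when a non-inverted pair of entries is exchanged. -/
def weight {n : ℕ} (ρ : Equiv.Perm (Fin n)) : ℕ := ∑ i : Fin n, (i : ℕ) * (ρ i : ℕ)

lemma weight_swap_lt {n : ℕ} {ρ : Equiv.Perm (Fin n)} {b c : Fin n} (hbc : b < c)
    (h : ρ b < ρ c) : weight (ρ * Equiv.swap b c) < weight ρ := by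
  have hc : c ∈ Finset.univ.erase b := by simp [hbc.ne']
  rw [weight, weight, ← Finset.add_sum_erase _ _ (Finset.mem_univ b),
    ← Finset.add_sum_erase _ _ (Finset.mem_univ b), ← Finset.add_sum_erase _ _ hc,
    ← Finset.add_sum_erase _ _ hc]
  have e : ∀ i ∈ (Finset.univ.erase b).erase c,
      (i : ℕ) * ((ρ * Equiv.swap b c) i : ℕ) = (i : ℕ) * (ρ i : ℕ) := by
    intro i hi
    simp only [Finset.mem_erase, Finset.mem_univ, and_true] at hi
    rw [Equiv.Perm.mul_apply, Equiv.swap_apply_of_ne_of_ne hi.2 hi.1]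
  rw [Finset.sum_congr rfl e, ← add_assoc, ← add_assoc, add_lt_add_iff_right,
    Equiv.Perm.mul_apply, Equiv.Perm.mul_apply, Equiv.swap_apply_left, Equiv.swap_apply_right]
  rw [Fin.lt_def] at h hbc
  nlinarith

/-- Each class of `Same` contains a permutation avoiding `4231`, namely any one of least weight:
otherwise exchanging the inner entries of an occurrence of `4231` would lower the weight. -/
theorem exists_same_avoiding {n : ℕ} (π : Equiv.Perm (Fin n)) :
    ∃ ρ, Same π ρ ∧ ¬ ContainsPat ρ p4231 := by
  classical
  obtain ⟨ρ, hρ, hmin⟩ := Finset.exists_min_image (Finset.univ.filter (Same π)) weight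
    ⟨π, by simpa using Same.refl π⟩
  simp only [Finset.mem_filter, Finset.mem_univ, true_and] at hρ hmin
  refine ⟨ρ, hρ, fun hc => ?_⟩
  obtain ⟨a, b, c, d, hab, hbc, hcd, h1, h2, h3⟩ := (contains4231_iff ρ).1 hc
  exact absurd (hmin _ (hρ.trans (same_swap hab hbc hcd (h2.trans h3) h3 h1 (h1.trans h2))))
    (not_le.2 (weight_swap_lt hbc h2))

/-- Extend a permutation of `Fin 7` by fixed points at the end. -/
def extend7 {k : ℕ} (α : Equiv.Perm (Fin 7)) : Equiv.Perm (Fin (7 + k)) :=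
  finSumFinEquiv.permCongr (Equiv.sumCongr α (Equiv.refl (Fin k)))

lemma extend7_castAdd {k : ℕ} (α : Equiv.Perm (Fin 7)) (i : Fin 7) :
    extend7 α (Fin.castAdd k i) = Fin.castAdd k (α i) := by
  simp [extend7, Equiv.permCongr_apply]

lemma extend7_natAdd {k : ℕ} (α : Equiv.Perm (Fin 7)) (i : Fin k) :
    extend7 α (Fin.natAdd 7 i) = Fin.natAdd 7 i := by
  simp [extend7, Equiv.permCongr_apply]

lemma castAdd_lt_natAdd {k : ℕ} (i : Fin 7) (j : Fin k) : Fin.castAdd k i < Fin.natAdd 7 j := by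
  rw [Fin.lt_def]
  simp
  omega

lemma LRmax_extend7_castAdd {k : ℕ} (α : Equiv.Perm (Fin 7)) (i : Fin 7) :
    LRmax (extend7 α) (Fin.castAdd k i) ↔ LRmax α i := by
  constructor
  · intro h j hj
    have := h (Fin.castAdd k j) hj
    rwa [extend7_castAdd, extend7_castAdd] at this
  · intro h j
    induction j using Fin.addCases with
    | left j =>
      intro hj
      rw [extend7_castAdd, extend7_castAdd]
      exact h j hj
    | right j => exact fun hj => absurd hj (castAdd_lt_natAdd i j).asymm

lemma RLmin_extend7_castAdd {k : ℕ} (α : Equiv.Perm (Fin 7)) (i : Fin 7) :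
    RLmin (extend7 α) (Fin.castAdd k i) ↔ RLmin α i := by
  constructor
  · intro h j hj
    have := h (Fin.castAdd k j) hj
    rwa [extend7_castAdd, extend7_castAdd] at this
  · intro h j
    induction j using Fin.addCases with
    | left j =>
      intro hj
      rw [extend7_castAdd, extend7_castAdd]
      exact h j hj
    | right j =>
      intro _
      rw [extend7_castAdd, extend7_natAdd]
      exact castAdd_lt_natAdd _ j

lemma extreme_extend7_natAdd {k : ℕ} (α : Equiv.Perm (Fin 7)) (i : Fin k) :
    LRmax (extend7 α) (Fin.natAdd 7 i) ∧ RLmin (extend7 α) (Fin.natAdd 7 i) := by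
  constructor <;> intro j <;> induction j using Fin.addCases with
  | left j =>
    intro hj
    rw [extend7_castAdd, extend7_natAdd]
    first
      | exact castAdd_lt_natAdd _ _
      | exact absurd hj (castAdd_lt_natAdd j i).asymm
  | right j =>
    intro hj
    rw [extend7_natAdd, extend7_natAdd]
    exact hj

lemma same_extend7 {k : ℕ} {α β : Equiv.Perm (Fin 7)} (h : Same α β) :
    Same (extend7 α : Equiv.Perm (Fin (7 + k))) (extend7 β) := by
  intro i
  induction i using Fin.addCases with
  | left i =>
    rw [LRmax_extend7_castAdd, LRmax_extend7_castAdd, RLmin_extend7_castAdd, RLmin_extend7_castAdd, extend7_castAdd,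
      extend7_castAdd]
    obtain ⟨h1, h2, h3⟩ := h i
    exact ⟨h1, h2, fun h4 => by rw [h3 h4]⟩
  | right i =>
    have ha := extreme_extend7_natAdd α i
    have hb := extreme_extend7_natAdd β i
    refine ⟨iff_of_true ha.1 hb.1, iff_of_true ha.2 hb.2, fun _ => ?_⟩
    rw [extend7_natAdd, extend7_natAdd]

lemma extend7_avoids {k : ℕ} {α : Equiv.Perm (Fin 7)}
    (h : ¬ ∃ a b c d, a < b ∧ b < c ∧ c < d ∧ α d < α b ∧ α b < α c ∧ α c < α a) :
    ¬ ContainsPat (extend7 α : Equiv.Perm (Fin (7 + k))) p4231 := by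
  rw [contains4231_iff]
  rintro ⟨a, b, c, d, hab, hbc, hcd, h1, h2, h3⟩
  have hd : (d : ℕ) < 7 := by
    induction d using Fin.addCases with
    | left d => exact d.isLt
    | right d =>
      have h4 := (extreme_extend7_natAdd α d).1 a (hab.trans (hbc.trans hcd))
      exact absurd (h1.trans (h2.trans h3)) h4.asymm
  have key : ∀ i : Fin (7 + k), (i : ℕ) < 7 → ∃ j : Fin 7, i = Fin.castAdd k j :=
    fun i hi => ⟨⟨i, hi⟩, rfl⟩
  rw [Fin.lt_def] at hab hbc hcd
  obtain ⟨a, rfl⟩ := key a (by omega)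
  obtain ⟨b, rfl⟩ := key b (by omega)
  obtain ⟨c, rfl⟩ := key c (by omega)
  obtain ⟨d, rfl⟩ := key d hd
  simp only [extend7_castAdd] at h1 h2 h3
  exact h ⟨a, b, c, d, hab, hbc, hcd, h1, h2, h3⟩

/-- The permutation `5 2 7 6 1 4 3` (one-line notation, in the code with values from `0`), which
avoids `4231`. -/
def permA : Equiv.Perm (Fin 7) :=
  ⟨![4, 1, 6, 5, 0, 3, 2], ![4, 1, 6, 5, 0, 3, 2], by decide, by decide⟩

/-- The permutation `5 4 7 2 1 6 3`. It avoids `4231` and has the same extreme entries as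
`permA`. -/
def permB : Equiv.Perm (Fin 7) :=
  ⟨![4, 3, 6, 1, 0, 5, 2], ![4, 3, 6, 1, 0, 5, 2], by decide, by decide⟩

lemma same_permA_permB : Same permA permB := by
  unfold Same LRmax RLmin
  decide +kernel

/-- Choosing a `4231`-avoider in the class of each `4321`-avoider is injective; it is not surjective
because the class of `permA` and `permB` contains two `4231`-avoiders. -/
theorem SnCard_p4321_lt (k : ℕ) : SnCard (7 + k) p4321 < SnCard (7 + k) p4231 := by
  classical
  rw [SnCard, SnCard, Nat.card_eq_fintype_card, Nat.card_eq_fintype_card]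
  choose f hf hf' using fun π : Equiv.Perm (Fin (7 + k)) => exists_same_avoiding π
  let F : {π : Equiv.Perm (Fin (7 + k)) // ¬ ContainsPat π p4321} →
    {π : Equiv.Perm (Fin (7 + k)) // ¬ ContainsPat π p4231} := fun π => ⟨f π, hf' π⟩
  have hF : ∀ π σ, Same (F π).1 (F σ).1 → π = σ := by
    intro π σ h
    exact Subtype.ext (Same.eq π.2 σ.2 (((hf π).trans h).trans (hf σ).symm))
  have hinj : Function.Injective F := fun π σ h => hF π σ (by rw [h]; exact Same.refl _)
  have hA : ¬ ContainsPat (extend7 permA : Equiv.Perm (Fin (7 + k))) p4231 :=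
    extend7_avoids (by decide +kernel)
  have hB : ¬ ContainsPat (extend7 permB : Equiv.Perm (Fin (7 + k))) p4231 :=
    extend7_avoids (by decide +kernel)
  have hsurj : ¬ Function.Surjective F := by
    intro hs
    obtain ⟨π, hπ⟩ := hs ⟨_, hA⟩
    obtain ⟨σ, hσ⟩ := hs ⟨_, hB⟩
    have h1 : π = σ := hF π σ (by rw [hπ, hσ]; exact same_extend7 same_permA_permB)
    rw [h1, hσ, Subtype.mk.injEq] at hπ
    have h2 := congrArg (fun τ : Equiv.Perm (Fin (7 + k)) => τ (Fin.castAdd k 1)) hπ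
    simp only [extend7_castAdd] at h2
    exact absurd (Fin.castAdd_injective _ _ h2) (by decide)
  exact Fintype.card_lt_of_injective_not_surjective F hinj hsurj

end PatternOrder

theorem stmt5 (n : ℕ) (hn : 7 ≤ n) :
    SnCard n p3241 < SnCard n p2341 ∧ SnCard n p2341 < SnCard n p4231 := by
  have h321 := (PatternOrder.SnCard_p2341 n).trans (PatternOrder.runs_nil n).1
  have h123 := (PatternOrder.SnCard_p4321 n).trans (PatternOrder.runs_nil n).2
  refine ⟨?_, ?_⟩
  · rw [PatternOrder.SnCard_p3241, h321]
    exact PatternOrder.runs231_lt n hn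
  · rw [h321, ← h123]
    obtain ⟨k, rfl⟩ := Nat.exists_eq_add_of_le hn
    exact PatternOrder.SnCard_p4321_lt k
end
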